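/- arXiv:1511.02558 — 2 statements merged into one kernel-verified Lean document; each statement's English description precedes it below -/
import Mathlib

section
/- For every integer n ≥ 5000, -(log p(n) + log p(n-2) - 2·log p(n-1)) < 24π/(24n)^{3/2} - (24π/(24n)^{3/2})². -/
open Real

/-- The partition function, as a real number. -/
noncomputable def p (n : ℕ) : ℝ := (Fintype.card (Nat.Partition n) : ℝ)

/-- The number of partitions of `n` into parts of size at most `K`. -/
def boundedPartitionCount (K n : ℕ) : ℕ := (Nat.Partition.restricted n (· ≤ K)).card

section FormalSeries

open PowerSeries PowerSeries.WithPiTopology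

lemma coeff_tsum_X_pow_mul (d n : ℕ) (hd : d ≠ 0) :
    letI : TopologicalSpace ℂ := ⊥
    coeff n (∑' j : ℕ, (X : PowerSeries ℂ) ^ (d * j)) = if d ∣ n then 1 else 0 := by
  let _ : TopologicalSpace ℂ := ⊥
  have : DiscreteTopology ℂ := ⟨rfl⟩
  have hs : Summable fun j : ℕ ↦ (X : PowerSeries ℂ) ^ (d * j) := by
    simp_rw [pow_mul]
    exact summable_pow_of_constantCoeff_eq_zero (by simp [hd])
  have h1 := hs.hasSum.map (coeff n (R := ℂ)) (continuous_coeff ℂ n)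
  have h2 : HasSum ((coeff n (R := ℂ)) ∘ fun j : ℕ ↦ (X : PowerSeries ℂ) ^ (d * j))
      (if d ∣ n then 1 else 0) := by
    have : ((coeff n (R := ℂ)) ∘ fun j : ℕ ↦ (X : PowerSeries ℂ) ^ (d * j)) =
        fun j ↦ if n = d * j then 1 else 0 := by
      ext j; simp [coeff_X_pow]
    rw [this]
    split_ifs with h
    · obtain ⟨k, rfl⟩ := h
      convert hasSum_ite_eq k (1 : ℂ) using 2 with j
      simp [hd, eq_comm]
    · convert hasSum_zero using 2 with j
      rw [if_neg]
      rintro rfl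
      exact h ⟨j, rfl⟩
  exact h1.unique h2

lemma mk_boundedPartitionCount_eq_prod (K : ℕ) :
    PowerSeries.mk (fun n ↦ (boundedPartitionCount K n : ℂ)) =
      ∏ i ∈ Finset.range K, PowerSeries.mk (fun n ↦ if (i + 1) ∣ n then (1 : ℂ) else 0) := by
  let _ : TopologicalSpace ℂ := ⊥
  have : DiscreteTopology ℂ := ⟨rfl⟩
  have h1 := Nat.Partition.hasProd_powerSeriesMk_card_restricted ℂ (· ≤ K)
  have h2 := hasProd_prod_of_ne_finset_one (s := Finset.range K)
    (f := fun i ↦ if i + 1 ≤ K then ∑' j : ℕ, (X : PowerSeries ℂ) ^ ((i + 1) * j) else 1)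
    (fun b hb ↦ by rw [if_neg]; simpa using hb) (L := .unconditional ℕ)
  refine (h1.unique h2).trans (Finset.prod_congr rfl fun i hi ↦ ?_)
  rw [if_pos (by simpa using hi)]
  ext n
  rw [coeff_tsum_X_pow_mul _ _ (by simp)]
  simp

lemma boundedPartitionCount_succ (K n : ℕ) :
    (boundedPartitionCount (K + 1) n : ℂ) = ∑ x ∈ Finset.HasAntidiagonal.antidiagonal n,
      (boundedPartitionCount K x.1 : ℂ) * if (K + 1) ∣ x.2 then (1 : ℂ) else 0 := by
  have h := congrArg (coeff n) (mk_boundedPartitionCount_eq_prod (K + 1))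
  rw [Finset.prod_range_succ, ← mk_boundedPartitionCount_eq_prod, coeff_mul] at h
  simpa using h

lemma boundedPartitionCount_zero (n : ℕ) :
    (boundedPartitionCount 0 n : ℂ) = if n = 0 then 1 else 0 := by
  have h := congrArg (coeff n) (mk_boundedPartitionCount_eq_prod 0)
  simpa [coeff_one] using h

end FormalSeries

lemma boundedPartitionCount_le_card (K n : ℕ) :
    boundedPartitionCount K n ≤ Fintype.card (Nat.Partition n) :=
  Finset.card_le_univ _

lemma boundedPartitionCount_eq_card {K n : ℕ} (h : n ≤ K) :
    boundedPartitionCount K n = Fintype.card (Nat.Partition n) := by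
  rw [boundedPartitionCount, Nat.Partition.restricted, Finset.filter_true_of_mem,
    Finset.card_univ]
  exact fun x _ i hi ↦ (Nat.Partition.le_of_mem_parts hi).trans h

lemma hasSum_ite_dvd_mul_pow {d : ℕ} (hd : d ≠ 0) {q : ℂ} (hq : ‖q‖ < 1) :
    HasSum (fun n ↦ (if d ∣ n then (1 : ℂ) else 0) * q ^ n) (1 - q ^ d)⁻¹ := by
  have hqd : ‖q ^ d‖ < 1 := by
    rw [norm_pow]; exact pow_lt_one₀ (norm_nonneg _) hq hd
  have h := hasSum_geometric_of_norm_lt_one hqd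
  have hinj : Function.Injective fun j : ℕ ↦ d * j := fun a b hab ↦
    Nat.eq_of_mul_eq_mul_left (Nat.pos_of_ne_zero hd) hab
  rw [← hinj.hasSum_iff]
  · refine h.congr_fun fun j ↦ ?_
    simp [pow_mul]
  · intro x hx
    rw [if_neg, zero_mul]
    rintro ⟨k, rfl⟩
    exact hx ⟨k, rfl⟩

lemma hasSum_boundedPartitionCount_mul_pow (K : ℕ) {q : ℂ} (hq : ‖q‖ < 1) :
    Summable (fun n ↦ ‖(boundedPartitionCount K n : ℂ) * q ^ n‖) ∧
    HasSum (fun n ↦ (boundedPartitionCount K n : ℂ) * q ^ n)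
      (∏ i ∈ Finset.range K, (1 - q ^ (i + 1)))⁻¹ := by
  induction K with
  | zero =>
    have h : (fun n ↦ (boundedPartitionCount 0 n : ℂ) * q ^ n) = fun n ↦ if n = 0 then 1 else 0 := by
      ext n
      rw [boundedPartitionCount_zero]
      split_ifs with h <;> simp [h]
    simp_rw [funext_iff] at h
    simp_rw [h]
    refine ⟨summable_of_ne_finset_zero (s := {0}) (fun b hb ↦ ?_), ?_⟩
    · rw [if_neg (by simpa using hb), norm_zero]
    · simpa using hasSum_ite_eq 0 (1 : ℂ)
  | succ K ih =>
    have hg := hasSum_ite_dvd_mul_pow (Nat.succ_ne_zero K) hq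
    have hgn : Summable fun n ↦ ‖(if (K + 1) ∣ n then (1 : ℂ) else 0) * q ^ n‖ := by
      refine Summable.of_nonneg_of_le (fun _ ↦ norm_nonneg _) (fun n ↦ ?_)
        (summable_geometric_of_lt_one (norm_nonneg q) hq)
      split_ifs <;> simp
    have key : ∀ n, (boundedPartitionCount (K + 1) n : ℂ) * q ^ n =
        ∑ x ∈ Finset.HasAntidiagonal.antidiagonal n, ((boundedPartitionCount K x.1 : ℂ) * q ^ x.1) *
          ((if (K + 1) ∣ x.2 then (1 : ℂ) else 0) * q ^ x.2) := by
      intro n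
      rw [boundedPartitionCount_succ, Finset.sum_mul]
      refine Finset.sum_congr rfl fun x hx ↦ ?_
      rw [← Finset.HasAntidiagonal.mem_antidiagonal.1 hx, pow_add]
      ring
    simp_rw [key]
    have hs := summable_norm_sum_mul_antidiagonal_of_summable_norm ih.1 hgn
    refine ⟨hs, ?_⟩
    have ht := tsum_mul_tsum_eq_tsum_sum_antidiagonal_of_summable_norm ih.1 hgn
    rw [ih.2.tsum_eq, hg.tsum_eq] at ht
    rw [Finset.prod_range_succ, mul_inv, ht]
    exact hs.of_norm.hasSum

/-- Euler's product `∏ (1 - q ^ m)` over `m ≥ 1`. -/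
noncomputable def eulerProd (q : ℂ) : ℂ := ∏' n : ℕ, (1 - q ^ (n + 1))

lemma one_sub_pow_succ_ne_zero {q : ℂ} (hq : ‖q‖ < 1) (i : ℕ) : 1 - q ^ (i + 1) ≠ 0 := by
  intro h
  have h1 : ‖q ^ (i + 1)‖ < 1 := by
    rw [norm_pow]; exact pow_lt_one₀ (norm_nonneg _) hq (by simp)
  rw [← sub_eq_zero.1 h] at h1
  simp at h1

lemma eulerProd_ne_zero {q : ℂ} (hq : ‖q‖ < 1) : eulerProd q ≠ 0 := by
  refine tprod_one_add_ne_zero_of_summable (f := fun n ↦ -q ^ (n + 1)) ?_ ?_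
  · exact fun i ↦ by simpa [sub_eq_add_neg] using one_sub_pow_succ_ne_zero hq i
  · simpa using (summable_nat_add_iff 1).mpr (summable_geometric_of_lt_one (norm_nonneg _) hq)

lemma tendsto_prod_inv_eulerProd {q : ℂ} (hq : ‖q‖ < 1) :
    Filter.Tendsto (fun K ↦ (∏ i ∈ Finset.range K, (1 - q ^ (i + 1)))⁻¹) Filter.atTop
      (nhds (eulerProd q)⁻¹) :=
  (ModularForm.multipliable_one_sub_pow hq).hasProd.tendsto_prod_nat.inv₀ (eulerProd_ne_zero hq)

lemma summable_p_mul_pow {ρ : ℝ} (h0 : 0 ≤ ρ) (h1 : ρ < 1) : Summable fun n ↦ p n * ρ ^ n := by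
  have hq : ‖(ρ : ℂ)‖ < 1 := by simpa [abs_of_nonneg h0] using h1
  obtain ⟨C, hC⟩ := (tendsto_prod_inv_eulerProd hq).norm.bddAbove_range
  refine summable_of_sum_range_le (c := C) (fun n ↦ by unfold p; positivity) fun K ↦ ?_
  obtain ⟨hs, hh⟩ := hasSum_boundedPartitionCount_mul_pow K hq
  have hr : HasSum (fun n ↦ (boundedPartitionCount K n : ℝ) * ρ ^ n)
      (∏ i ∈ Finset.range K, (1 - ρ ^ (i + 1)))⁻¹ := by
    rw [← Complex.hasSum_ofReal]
    push_cast
    exact hh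
  calc ∑ n ∈ Finset.range K, p n * ρ ^ n
      = ∑ n ∈ Finset.range K, (boundedPartitionCount K n : ℝ) * ρ ^ n := by
        refine Finset.sum_congr rfl fun n hn ↦ ?_
        rw [boundedPartitionCount_eq_card (Finset.mem_range.1 hn).le, p]
    _ ≤ (∏ i ∈ Finset.range K, (1 - ρ ^ (i + 1)))⁻¹ :=
        sum_le_hasSum _ (fun n _ ↦ by positivity) hr
    _ ≤ ‖(∏ i ∈ Finset.range K, (1 - (ρ : ℂ) ^ (i + 1)))⁻¹‖ := by
        have : (∏ i ∈ Finset.range K, (1 - (ρ : ℂ) ^ (i + 1)))⁻¹ =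
          (((∏ i ∈ Finset.range K, (1 - ρ ^ (i + 1)))⁻¹ : ℝ) : ℂ) := by push_cast; rfl
        rw [this, Complex.norm_real]
        exact le_abs_self _
    _ ≤ C := hC ⟨K, rfl⟩

/-- The generating function of the partition numbers. -/
lemma hasSum_p_mul_pow {q : ℂ} (hq : ‖q‖ < 1) :
    HasSum (fun n ↦ (p n : ℂ) * q ^ n) (eulerProd q)⁻¹ := by
  have hs := summable_p_mul_pow (norm_nonneg q) hq
  have hsc : Summable fun n ↦ (p n : ℂ) * q ^ n := by
    refine Summable.of_norm_bounded hs fun n ↦ ?_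
    simp [p]
  have h := tendsto_tsum_of_dominated_convergence (𝓕 := Filter.atTop)
    (f := fun K n ↦ (boundedPartitionCount K n : ℂ) * q ^ n) (g := fun n ↦ (p n : ℂ) * q ^ n) hs
    (fun n ↦ tendsto_const_nhds.congr' <| by
      filter_upwards [Filter.eventually_ge_atTop n] with K hK
      simp [p, boundedPartitionCount_eq_card hK])
    (Filter.Eventually.of_forall fun K n ↦ by
      simp only [norm_mul, norm_pow, Complex.norm_natCast, p]
      gcongr
      exact boundedPartitionCount_le_card K n)
  simp_rw [fun K ↦ (hasSum_boundedPartitionCount_mul_pow K hq).2.tsum_eq] at h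
  rw [tendsto_nhds_unique (tendsto_prod_inv_eulerProd hq) h]
  exact hsc.hasSum

/-- The modular transformation of the partition generating function. -/
lemma inv_eulerProd_exp_neg {z : ℂ} (hz : 0 < z.re) :
    (eulerProd (Complex.exp (-z)))⁻¹ =
      Complex.sqrt z / (√(2 * π) : ℝ) * Complex.exp (π ^ 2 / 6 / z - z / 24) *
        (eulerProd (Complex.exp (-(4 * π ^ 2 / z))))⁻¹ := by
  have hz0 : z ≠ 0 := by rintro rfl; simp at hz
  have hpi : (π : ℂ) ≠ 0 := by exact_mod_cast pi_ne_zero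
  set τ : ℂ := Complex.I * (z * ((2 * π)⁻¹ : ℝ)) with hτ
  have hτ0 : τ ≠ 0 := by simp [hτ, hz0, pi_ne_zero]
  have him : 0 < τ.im := by
    have : τ.im = z.re * (2 * π)⁻¹ := by
      rw [hτ, Complex.I_mul_im, Complex.re_mul_ofReal]
    rw [this]; positivity
  have h := ModularForm.eta_comp_eq_csqrt_I_inv (show τ ∈ UpperHalfPlane.upperHalfPlaneSet from him)
  have e1 : ModularForm.eta τ = Complex.exp (-z / 24) * eulerProd (Complex.exp (-z)) := by
    have h1 : 2 * π * Complex.I * τ = -z := by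
      rw [hτ]; push_cast; field_simp; linear_combination Complex.I_sq
    simp only [ModularForm.eta, eulerProd, ModularForm.eta_q_eq_pow, Function.Periodic.qParam, h1]
    norm_num
  have e2 : ModularForm.eta (-1 / τ) = Complex.exp (-(π ^ 2 / 6 / z)) *
      eulerProd (Complex.exp (-(4 * π ^ 2 / z))) := by
    have h1 : 2 * π * Complex.I * (-1 / τ) = -(4 * π ^ 2 / z) := by
      rw [hτ]; push_cast; field_simp; norm_num
    simp only [ModularForm.eta, eulerProd, ModularForm.eta_q_eq_pow, Function.Periodic.qParam, h1]
    congr 2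
    push_cast
    ring
  have e3 : Complex.sqrt τ = Complex.sqrt Complex.I * (Complex.sqrt z / (√(2 * π) : ℝ)) := by
    have hlog : Complex.log τ = Complex.log Complex.I + (Real.log ((2 * π)⁻¹) + Complex.log z) := by
      rw [hτ, Complex.log_mul Complex.I_ne_zero (by simp [hz0, pi_ne_zero]),
        Complex.log_mul_ofReal _ (by positivity) _ hz0]
      have := abs_lt.1 (Complex.abs_arg_lt_pi_div_two_iff.2 (Or.inl hz))
      rw [Complex.arg_mul_real (by positivity), Complex.arg_I]
      constructor <;> linarith [this.1, this.2]
    have hsq : (√(2 * π) : ℝ) = Real.exp (Real.log (2 * π) * 2⁻¹) := by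
      rw [Real.exp_mul, Real.exp_log (by positivity), Real.sqrt_eq_rpow]; norm_num
    rw [Complex.sqrt, Complex.sqrt, Complex.sqrt, Complex.cpow_def_of_ne_zero hτ0,
      Complex.cpow_def_of_ne_zero Complex.I_ne_zero, Complex.cpow_def_of_ne_zero hz0, hlog, hsq,
      Complex.ofReal_exp, ← Complex.exp_sub, ← Complex.exp_add, Real.log_inv]
    congr 1
    push_cast
    ring
  have hI : Complex.sqrt Complex.I ≠ 0 := by simp [Complex.sqrt]
  have hq : ‖Complex.exp (-z)‖ < 1 := by rw [Complex.norm_exp]; simpa using hz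
  have hq' : ‖Complex.exp (-(4 * π ^ 2 / z))‖ < 1 := by
    rw [Complex.norm_exp, Real.exp_lt_one_iff, Complex.neg_re, neg_lt_zero]
    have : (4 * π ^ 2 / z : ℂ) = ((4 * π ^ 2 : ℝ) : ℂ) * z⁻¹ := by push_cast; rfl
    rw [this, Complex.re_ofReal_mul, Complex.inv_re]
    have := Complex.normSq_pos.2 hz0
    positivity
  have n1 := eulerProd_ne_zero hq
  have n2 := eulerProd_ne_zero hq'
  simp only [Function.comp, Pi.smul_apply, Pi.mul_apply, smul_eq_mul] at h
  rw [e1, e2, e3, inv_mul_eq_div, mul_assoc, mul_div_cancel_left₀ _ hI, Complex.exp_neg] at h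
  rw [sub_eq_add_neg, Complex.exp_add, ← neg_div]
  have x1 := Complex.exp_ne_zero (π ^ 2 / 6 / z)
  have hs : ((√(2 * π) : ℝ) : ℂ) ≠ 0 := by
    exact_mod_cast (Real.sqrt_pos.2 (by positivity)).ne'
  generalize eulerProd (Complex.exp (-(4 * π ^ 2 / z))) = u at *
  generalize eulerProd (Complex.exp (-z)) = v at *
  generalize Complex.exp (π ^ 2 / 6 / z) = w at *
  generalize Complex.exp (-z / 24) = w' at *
  field_simp at h ⊢
  linear_combination h

lemma integral_exp_int_mul (k : ℤ) (r : ℝ) :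
    ∫ θ in (-π)..π, Complex.exp (k * (r + θ * Complex.I)) = if k = 0 then 2 * π else 0 := by
  split_ifs with hk
  · simp [hk]; ring
  · have hk' : (k : ℂ) * Complex.I ≠ 0 := by simp [hk]
    have : ∀ θ : ℝ, Complex.exp (k * (r + θ * Complex.I)) =
        Complex.exp (k * r) * Complex.exp (k * Complex.I * θ) := fun θ ↦ by
      rw [← Complex.exp_add]; ring_nf
    simp_rw [this]
    rw [intervalIntegral.integral_const_mul, integral_exp_mul_complex hk']
    have : Complex.exp (k * Complex.I * π) = Complex.exp (k * Complex.I * (-π : ℝ)) := by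
      rw [Complex.exp_eq_exp_iff_exists_int]
      exact ⟨k, by push_cast; ring⟩
    rw [this]; simp

/-- Cauchy's formula for the partition numbers. -/
lemma p_eq_integral (n : ℕ) {r : ℝ} (hr : 0 < r) :
    (p n : ℂ) = (2 * π)⁻¹ * ∫ θ in (-π)..π, (eulerProd (Complex.exp (-(r + θ * Complex.I))))⁻¹ *
      Complex.exp (n * (r + θ * Complex.I)) := by
  have hterm : ∀ (m : ℕ) (θ : ℝ), (p m : ℂ) * Complex.exp (-(r + θ * Complex.I)) ^ m *
      Complex.exp (n * (r + θ * Complex.I)) =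
      p m * Complex.exp (((n - m : ℤ) : ℂ) * (r + θ * Complex.I)) := by
    intro m θ
    rw [← Complex.exp_nat_mul, mul_assoc, ← Complex.exp_add]
    congr 2
    push_cast
    ring
  have hsum : HasSum (fun m : ℕ ↦ ∫ θ in (-π)..π, (p m : ℂ) *
      Complex.exp (((n - m : ℤ) : ℂ) * (r + θ * Complex.I)))
      (∫ θ in (-π)..π, (eulerProd (Complex.exp (-(r + θ * Complex.I))))⁻¹ *
      Complex.exp (n * (r + θ * Complex.I))) := by
    have hρ : Real.exp (-r) < 1 := by simpa using hr
    have hs := (summable_p_mul_pow (Real.exp_pos (-r)).le hρ).mul_right (Real.exp (n * r))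
    refine intervalIntegral.hasSum_integral_of_dominated_convergence
      (fun m _ ↦ p m * Real.exp (-r) ^ m * Real.exp (n * r)) ?_ ?_ ?_ ?_ ?_
    · exact fun m ↦ Continuous.aestronglyMeasurable (by fun_prop)
    · refine fun m ↦ .of_forall fun θ _ ↦ ?_
      rw [← hterm, norm_mul, norm_mul, norm_pow, Complex.norm_exp, Complex.norm_exp]
      simp [p]
    · exact .of_forall fun θ _ ↦ hs
    · exact intervalIntegrable_const
    · refine .of_forall fun θ _ ↦ ?_
      simp_rw [← hterm]
      refine (hasSum_p_mul_pow ?_).mul_right _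
      rw [Complex.norm_exp]; simpa using hr
  have h2 : (fun m : ℕ ↦ ∫ θ in (-π)..π, (p m : ℂ) *
      Complex.exp (((n - m : ℤ) : ℂ) * (r + θ * Complex.I))) =
      fun m ↦ if m = n then (p n : ℂ) * (2 * π) else 0 := by
    ext m
    rw [intervalIntegral.integral_const_mul, integral_exp_int_mul]
    by_cases h : m = n
    · simp [h]
    · rw [if_neg h, if_neg (by omega), Complex.ofReal_zero, mul_zero]
  rw [h2] at hsum
  rw [← (hasSum_ite_eq n _).unique hsum]
  have : (π : ℂ) ≠ 0 := by exact_mod_cast pi_ne_zero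
  push_cast
  field_simp

lemma p_le_two_pow (n : ℕ) : p n ≤ 2 ^ n := by
  have h1 := Fintype.card_le_of_surjective _ (Nat.Partition.ofComposition_surj (n := n))
  rw [composition_card] at h1
  have h2 : (2 : ℕ) ^ (n - 1) ≤ 2 ^ n := Nat.pow_le_pow_right (by norm_num) (by omega)
  rw [p]
  exact_mod_cast h1.trans h2

lemma p_zero : p 0 = 1 := by simp [p]

lemma norm_inv_eulerProd_sub_one_le {q : ℂ} (hq : ‖q‖ ≤ 1 / 4) :
    ‖(eulerProd q)⁻¹ - 1‖ ≤ 4 * ‖q‖ := by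
  have h := (hasSum_nat_add_iff' 1).2 (hasSum_p_mul_pow (lt_of_le_of_lt hq (by norm_num)))
  simp only [Finset.range_one, Finset.sum_singleton, p_zero, Complex.ofReal_one, pow_zero,
    mul_one] at h
  have hg : HasSum (fun n : ℕ ↦ 2 * ‖q‖ * (1 / 2) ^ n) (2 * ‖q‖ * 2) := hasSum_geometric_two.mul_left _
  refine (HasSum.norm_le_of_bounded h hg fun n ↦ ?_).trans (by linarith)
  rw [norm_mul, norm_pow, Complex.norm_real, Real.norm_of_nonneg (by simp [p])]
  calc p (n + 1) * ‖q‖ ^ (n + 1) ≤ 2 ^ (n + 1) * ‖q‖ ^ (n + 1) := by gcongr; exact p_le_two_pow _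
    _ = 2 * ‖q‖ * (2 * ‖q‖) ^ n := by rw [pow_succ, pow_succ, mul_pow]; ring
    _ ≤ 2 * ‖q‖ * (1 / 2) ^ n := by gcongr; linarith

lemma norm_inv_one_sub_le {w : ℂ} (hw : ‖w‖ < 1) :
    ‖(1 - w)⁻¹‖ ≤ (1 - ‖w‖)⁻¹ * Real.exp (w.re - ‖w‖) := by
  have h1 := (hasSum_nat_add_iff' 1).2 (Complex.hasSum_taylorSeries_neg_log' hw)
  have h2 := (hasSum_nat_add_iff' 1).2
    (Real.hasSum_pow_div_log_of_abs_lt_one (x := ‖w‖) (by simpa using hw))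
  simp only [Finset.range_one, Finset.sum_singleton, zero_add, pow_one, Nat.cast_zero,
    div_one] at h1 h2
  have h3 := HasSum.norm_le_of_bounded h1 h2 fun n ↦ by
    rw [norm_div, norm_pow]
    gcongr
    have : ((n + 1 : ℕ) : ℂ) + 1 = ((n + 2 : ℕ) : ℂ) := by push_cast; ring
    rw [this, Complex.norm_natCast]
    push_cast; linarith
  have h4 := (Complex.re_le_norm _).trans h3
  have hne : 1 - w ≠ 0 := by
    intro h
    rw [← sub_eq_zero.1 h] at hw
    simp at hw
  have hpos : 0 < 1 - ‖w‖ := by linarith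
  rw [Complex.sub_re, Complex.neg_re, Complex.log_re] at h4
  have h5 : 0 < ‖1 - w‖ := norm_pos_iff.2 hne
  rw [norm_inv, ← Real.exp_log h5, ← Real.exp_log hpos, ← Real.exp_neg, ← Real.exp_neg,
    ← Real.exp_add, Real.exp_le_exp]
  linarith

/-- Away from the positive axis the partition generating function is smaller than on it. -/
lemma norm_inv_eulerProd_le {q : ℂ} (hq : ‖q‖ < 1) :
    ‖(eulerProd q)⁻¹‖ ≤ ‖(eulerProd (‖q‖ : ℂ))⁻¹‖ *
      Real.exp (((1 - q)⁻¹).re - (1 - ‖q‖)⁻¹) := by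
  have hq' : ‖((‖q‖ : ℝ) : ℂ)‖ < 1 := by simpa using hq
  have hsq : HasSum (fun i : ℕ ↦ (q ^ (i + 1)).re - ‖q‖ ^ (i + 1))
      (((1 - q)⁻¹).re - (1 - ‖q‖)⁻¹) := by
    have a1 := (hasSum_nat_add_iff' 1).2 (Complex.hasSum_re (hasSum_geometric_of_norm_lt_one hq))
    have a2 := (hasSum_nat_add_iff' 1).2 (hasSum_geometric_of_lt_one (norm_nonneg q) hq)
    simpa using a1.sub a2
  refine le_of_tendsto_of_tendsto (tendsto_prod_inv_eulerProd hq).norm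
    ((tendsto_prod_inv_eulerProd hq').norm.mul
      ((Real.continuous_exp.tendsto _).comp hsq.tendsto_sum_nat)) (.of_forall fun K ↦ ?_)
  simp only [Function.comp, Real.exp_sum, ← Finset.prod_inv_distrib, norm_prod,
    ← Finset.prod_mul_distrib]
  refine Finset.prod_le_prod (fun _ _ ↦ norm_nonneg _) fun i _ ↦ ?_
  have hqi : ‖q ^ (i + 1)‖ < 1 := by
    rw [norm_pow]; exact pow_lt_one₀ (norm_nonneg _) hq (by simp)
  have := norm_inv_one_sub_le hqi
  rw [norm_pow] at this hqi
  rwa [← Complex.ofReal_pow, ← Complex.ofReal_one, ← Complex.ofReal_sub, ← Complex.ofReal_inv,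
    Complex.norm_real, Real.norm_of_nonneg (inv_nonneg.2 (by linarith)), Complex.ofReal_one]

/-- The integrand `√z exp (a / z + N z)` of the Bessel-type integral for the partition numbers. -/
noncomputable def besselIntegrand (a N : ℝ) (z : ℂ) : ℂ :=
  Complex.sqrt z * Complex.exp (a / z + N * z)

lemma differentiableAt_besselIntegrand (a N : ℝ) {z : ℂ} (hz : 0 < z.re) :
    DifferentiableAt ℂ (besselIntegrand a N) z := by
  have hz0 : z ≠ 0 := by rintro rfl; simp at hz
  have := Complex.differentiableAt_sqrt (Complex.mem_slitPlane_iff.2 (Or.inl hz))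
  unfold besselIntegrand
  fun_prop (disch := exact hz0)

lemma norm_csqrt {z : ℂ} (hz : z ≠ 0) : ‖Complex.sqrt z‖ = √‖z‖ := by
  rw [Complex.sqrt, Real.sqrt_eq_rpow, Complex.norm_cpow_of_ne_zero hz]
  simp

lemma csqrt_sq {w : ℂ} (hw : 0 < w.re) : Complex.sqrt (w ^ 2) = w := by
  have h := abs_lt.1 (Complex.abs_arg_lt_pi_div_two_iff.2 (Or.inl hw))
  have := Complex.pow_cpow_nat_inv (x := w) (n := 2) two_ne_zero (by simpa [neg_div] using h.1)
    (by simpa using h.2.le)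
  simpa [Complex.sqrt] using this

lemma mem_ball_of_normSq_lt {R : ℝ} (hR : 0 < R) {z : ℂ} (h : Complex.normSq z < 2 * R * z.re) :
    z ∈ Metric.ball (R : ℂ) R := by
  rw [mem_ball_iff_norm, ← abs_of_pos hR, ← abs_norm, ← sq_lt_sq, ← Complex.normSq_eq_norm_sq,
    abs_of_pos hR]
  rw [Complex.normSq_apply] at h ⊢
  simp
  nlinarith

lemma re_pos_of_mem_ball {R : ℝ} {z : ℂ} (h : z ∈ Metric.ball (R : ℂ) R) : 0 < z.re := by
  rw [mem_ball_iff_norm] at h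
  have := (Complex.abs_re_le_norm _).trans_lt h
  rw [Complex.sub_re, Complex.ofReal_re, abs_lt] at this
  linarith [this.1]

lemma norm_besselIntegrand_ray_le {a r u : ℝ} (ha : 0 < a) (hr : 0 < r) {d : ℂ} (hd : d.re = 1)
    (hd' : Complex.normSq d = 625 / 49) (hu : 7 / 25 * r ≤ u) (hu' : u ≤ r) :
    ‖besselIntegrand a (a / r ^ 2) (u * d)‖ ≤ √(25 / 7 * r) * exp (a / r * (674 / 625)) := by
  have hu0 : 0 < u := lt_of_lt_of_le (by positivity) hu
  have hd0 : d ≠ 0 := by rintro rfl; simp at hd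
  have hnd : ‖d‖ = 25 / 7 := by
    rw [← sq_eq_sq₀ (norm_nonneg _) (by norm_num), ← Complex.normSq_eq_norm_sq, hd']; norm_num
  rw [besselIntegrand, norm_mul, norm_csqrt (by simp [hu0.ne', hd0]), Complex.norm_exp, norm_mul,
    hnd, Complex.norm_real, Real.norm_of_nonneg hu0.le]
  have hre : ((a : ℂ) / (u * d) + ((a / r ^ 2 : ℝ) : ℂ) * (u * d)).re =
      a / u * (49 / 625) + a / r ^ 2 * u := by
    have : (a : ℂ) / (u * d) = ((a / u : ℝ) : ℂ) * d⁻¹ := by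
      push_cast; field_simp
    rw [this, Complex.add_re, Complex.re_ofReal_mul, Complex.re_ofReal_mul, Complex.re_ofReal_mul,
      Complex.inv_re, hd, hd']
    norm_num
  rw [hre]
  gcongr ?_ * exp ?_
  · apply Real.sqrt_le_sqrt; linarith
  · have e : a / r * (674 / 625) - (a / u * (49 / 625) + a / r ^ 2 * u) =
        a / (u * r ^ 2) * ((r - u) * (u - 49 / 625 * r)) := by field_simp; ring
    have : 0 ≤ a / (u * r ^ 2) * ((r - u) * (u - 49 / 625 * r)) := by
      apply mul_nonneg (by positivity)
      apply mul_nonneg <;> linarith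
    linarith

section Arc

/-- Half of the argument along the arc: a point of the unit circle with imaginary part `y / 2`. -/
noncomputable def arcRoot (y : ℝ) : ℂ := √(1 - y ^ 2 / 4) + y / 2 * Complex.I

lemma arcRoot_re (y : ℝ) : (arcRoot y).re = √(1 - y ^ 2 / 4) := by simp [arcRoot]

lemma arcRoot_im (y : ℝ) : (arcRoot y).im = y / 2 := by simp [arcRoot]

variable {y : ℝ}

lemma arcRoot_radicand_pos (hy : y ∈ Set.Icc (-(6 / 5) : ℝ) (6 / 5)) : 0 < 1 - y ^ 2 / 4 := by
  have := abs_le.2 hy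
  have := sq_le_sq' hy.1 hy.2
  linarith

lemma arcRoot_mul_conj (hy : y ∈ Set.Icc (-(6 / 5) : ℝ) (6 / 5)) :
    arcRoot y * (starRingEnd ℂ) (arcRoot y) = 1 := by
  rw [Complex.mul_conj, Complex.normSq_apply, arcRoot_re, arcRoot_im,
    Real.mul_self_sqrt (arcRoot_radicand_pos hy).le]
  norm_cast
  ring

lemma hasDerivAt_arcRoot (hy : y ∈ Set.Icc (-(6 / 5) : ℝ) (6 / 5)) :
    HasDerivAt arcRoot (Complex.I / (2 * √(1 - y ^ 2 / 4)) * arcRoot y) y := by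
  have hpos := arcRoot_radicand_pos hy
  have h1 : HasDerivAt (fun y : ℝ ↦ √(1 - y ^ 2 / 4)) (-(y / (4 * √(1 - y ^ 2 / 4)))) y := by
    have : HasDerivAt (fun y : ℝ ↦ 1 - y ^ 2 / 4) (-(y / 2)) y :=
      (((hasDerivAt_pow 2 y).div_const 4).const_sub 1).congr_deriv (by norm_num; ring)
    refine (this.sqrt hpos.ne').congr_deriv ?_
    field_simp; norm_num
  have h2 : HasDerivAt (fun y : ℝ ↦ (y : ℂ) / 2 * Complex.I) (1 / 2 * Complex.I) y :=
    ((Complex.ofRealCLM.hasDerivAt (x := y)).div_const 2).mul_const _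
  refine HasDerivAt.congr_deriv (f := arcRoot) (h1.ofReal_comp.add h2) ?_
  have hs : ((√(1 - y ^ 2 / 4) : ℝ) : ℂ) ≠ 0 := by
    exact_mod_cast (Real.sqrt_pos.2 hpos).ne'
  simp only [arcRoot]
  push_cast
  generalize ((√(1 - y ^ 2 / 4) : ℝ) : ℂ) = s at hs
  field_simp
  linear_combination (-4 * y : ℂ) * Complex.I_sq

lemma besselIntegrand_arc {a r : ℝ} (hr : 0 < r) (hy : y ∈ Set.Icc (-(6 / 5) : ℝ) (6 / 5)) :
    besselIntegrand a (a / r ^ 2) (r * arcRoot y ^ 2) =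
      √r * arcRoot y * exp (2 * a / r * (1 - y ^ 2 / 2)) := by
  have hpos := arcRoot_radicand_pos hy
  have hc := arcRoot_mul_conj hy
  have h0 : arcRoot y ≠ 0 := left_ne_zero_of_mul_eq_one hc
  have hr0 : (r : ℂ) ≠ 0 := by exact_mod_cast hr.ne'
  have h1 : (r : ℂ) * arcRoot y ^ 2 = (√r * arcRoot y) ^ 2 := by
    rw [mul_pow, ← Complex.ofReal_pow, Real.sq_sqrt hr.le]
  have h2 : Complex.sqrt (r * arcRoot y ^ 2) = √r * arcRoot y := by
    rw [h1, csqrt_sq]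
    rw [Complex.re_ofReal_mul, arcRoot_re]
    have := Real.sqrt_pos.2 hpos
    positivity
  rw [besselIntegrand, h2]
  congr 1
  rw [Complex.ofReal_exp]
  congr 1
  have h3 : (a : ℂ) / (r * arcRoot y ^ 2) = a / r * (starRingEnd ℂ (arcRoot y)) ^ 2 := by
    field_simp
    rw [mul_assoc, ← mul_pow, hc]; norm_num
  have h4 : arcRoot y ^ 2 + (starRingEnd ℂ (arcRoot y)) ^ 2 = 2 * (1 - y ^ 2 / 2) := by
    have h5 := Complex.add_conj (arcRoot y)
    rw [arcRoot_re] at h5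
    have h6 : ((√(1 - y ^ 2 / 4) : ℝ) : ℂ) ^ 2 = 1 - y ^ 2 / 4 := by
      rw [← Complex.ofReal_pow, Real.sq_sqrt hpos.le]; push_cast; ring
    have : arcRoot y ^ 2 + (starRingEnd ℂ (arcRoot y)) ^ 2 =
      (arcRoot y + starRingEnd ℂ (arcRoot y)) ^ 2 - 2 * (arcRoot y * starRingEnd ℂ (arcRoot y)) := by
      ring
    rw [this, hc, h5]
    push_cast
    linear_combination 4 * h6
  rw [h3]
  push_cast
  have : (a : ℂ) / r ^ 2 * (r * arcRoot y ^ 2) = a / r * arcRoot y ^ 2 := by field_simp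
  rw [this]
  linear_combination (a / r : ℂ) * h4

lemma re_arcRoot_cube_div (hy : y ∈ Set.Icc (-(6 / 5) : ℝ) (6 / 5)) :
    (arcRoot y ^ 3 / (√(1 - y ^ 2 / 4) : ℝ)).re = 1 - y ^ 2 := by
  have hpos := arcRoot_radicand_pos hy
  have hs := Real.sq_sqrt hpos.le
  have hs0 := Real.sqrt_pos.2 hpos
  rw [Complex.div_ofReal_re, div_eq_iff hs0.ne', pow_succ, pow_two]
  simp only [Complex.mul_re, Complex.mul_im, arcRoot_re, arcRoot_im]
  linear_combination √(1 - y ^ 2 / 4) * hs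

lemma arcRoot_endpoint : arcRoot (6 / 5) = 4 / 5 + 3 / 5 * Complex.I := by
  have : √(1 - (6 / 5 : ℝ) ^ 2 / 4) = 4 / 5 := by
    rw [Real.sqrt_eq_iff_mul_self_eq_of_pos] <;> norm_num
  rw [arcRoot, this]; push_cast; ring

lemma arcRoot_endpoint_neg : arcRoot (-(6 / 5)) = 4 / 5 - 3 / 5 * Complex.I := by
  have : √(1 - (-(6 / 5) : ℝ) ^ 2 / 4) = 4 / 5 := by
    rw [Real.sqrt_eq_iff_mul_self_eq_of_pos] <;> norm_num
  rw [arcRoot, this]; push_cast; ring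

end Arc

/-- The integral over a vertical segment agrees, up to an exponentially smaller error, with a
truncated Gaussian integral, obtained by moving the contour to an arc of a circle. -/
lemma abs_re_integral_besselIntegrand_sub_le {a r : ℝ} (ha : 0 < a) (hr : 0 < r) :
    |(∫ θ in (-(24 / 7 * r))..(24 / 7 * r), besselIntegrand a (a / r ^ 2) (r + θ * Complex.I)).re -
      r * √r * ∫ y in (-(6 / 5))..(6 / 5), (1 - y ^ 2) * exp (2 * a / r * (1 - y ^ 2 / 2))| ≤
    50 / 7 * r * (√(25 / 7 * r) * exp (a / r * (674 / 625))) := by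
  set f := besselIntegrand a (a / r ^ 2) with hf
  have hfd : ∀ {z : ℂ}, 0 < z.re → DifferentiableAt ℂ f z :=
    fun hz ↦ differentiableAt_besselIntegrand a _ hz
  have hR : 0 < 50 * r := by positivity
  obtain ⟨A, hA⟩ := (show DifferentiableOn ℂ f (Metric.ball ((50 * r : ℝ) : ℂ) (50 * r)) from
    fun z hz ↦ (hfd (re_pos_of_mem_ball hz)).differentiableWithinAt).isExactOn_ball
  have hA : ∀ z : ℂ, Complex.normSq z < 100 * r * z.re → HasDerivAt A (f z) z := fun z hz ↦
    hA z (mem_ball_of_normSq_lt hR (by linarith))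
  -- the vertical segment
  set V := ∫ θ in (-(24 / 7 * r))..(24 / 7 * r), f (r + θ * Complex.I) with hV
  have hVA : V * Complex.I = A (r * (1 + 24 / 7 * Complex.I)) - A (r * (1 - 24 / 7 * Complex.I)) := by
    rw [hV, ← intervalIntegral.integral_mul_const,
      intervalIntegral.integral_eq_sub_of_hasDerivAt (f := fun θ : ℝ ↦ A (r + θ * Complex.I))]
    · congr 2 <;> push_cast <;> ring
    · intro θ hθ
      rw [Set.uIcc_of_le (by linarith)] at hθ
      have hl : HasDerivAt (fun θ : ℝ ↦ (r : ℂ) + θ * Complex.I) Complex.I θ := by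
        simpa using ((Complex.ofRealCLM.hasDerivAt (x := θ)).mul_const Complex.I).const_add (r : ℂ)
      refine (hA _ ?_).comp θ hl
      have := sq_le_sq' hθ.1 hθ.2
      simp [Complex.normSq_apply]
      nlinarith
    · apply Continuous.intervalIntegrable
      refine Continuous.mul ?_ continuous_const
      rw [continuous_iff_continuousAt]
      intro θ
      refine ContinuousAt.comp (f := fun θ : ℝ ↦ (r : ℂ) + θ * Complex.I)
        (hfd (by simpa using hr)).continuousAt ?_
      fun_prop
  -- the arc
  set G : ℝ → ℂ := fun y ↦ (r * √r * exp (2 * a / r * (1 - y ^ 2 / 2)) : ℝ) *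
    (arcRoot y ^ 3 / (√(1 - y ^ 2 / 4) : ℝ)) with hG
  have hcont : ContinuousOn G (Set.Icc (-(6 / 5)) (6 / 5)) := by
    intro y hy
    have h0 : ((√(1 - y ^ 2 / 4) : ℝ) : ℂ) ≠ 0 := by
      exact_mod_cast (Real.sqrt_pos.2 (arcRoot_radicand_pos hy)).ne'
    have h1 := (hasDerivAt_arcRoot hy).continuousAt
    apply ContinuousAt.continuousWithinAt
    refine ContinuousAt.mul (by fun_prop) ((h1.pow 3).div (by fun_prop) h0)
  have hInt : IntervalIntegrable G MeasureTheory.volume (-(6 / 5)) (6 / 5) := by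
    apply ContinuousOn.intervalIntegrable
    rwa [Set.uIcc_of_le (by norm_num)]
  set W := ∫ y in (-(6 / 5) : ℝ)..(6 / 5), G y with hW
  have hWA : W * Complex.I = A (r * arcRoot (6 / 5) ^ 2) - A (r * arcRoot (-(6 / 5)) ^ 2) := by
    rw [hW, ← intervalIntegral.integral_mul_const,
      intervalIntegral.integral_eq_sub_of_hasDerivAt (f := fun y : ℝ ↦ A (r * arcRoot y ^ 2))]
    · intro y hy
      rw [Set.uIcc_of_le (by norm_num)] at hy
      have h0 : ((√(1 - y ^ 2 / 4) : ℝ) : ℂ) ≠ 0 := by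
        exact_mod_cast (Real.sqrt_pos.2 (arcRoot_radicand_pos hy)).ne'
      have hn : Complex.normSq (arcRoot y) = 1 := by
        have := arcRoot_mul_conj hy
        rw [Complex.mul_conj] at this
        exact_mod_cast this
      have hre : (arcRoot y ^ 2).re = 1 - y ^ 2 / 2 := by
        rw [pow_two, Complex.mul_re, arcRoot_re, arcRoot_im,
          Real.mul_self_sqrt (arcRoot_radicand_pos hy).le]
        ring
      have hd : HasDerivAt (fun y : ℝ ↦ (r : ℂ) * arcRoot y ^ 2) _ y :=
        ((hasDerivAt_arcRoot hy).pow 2).const_mul (r : ℂ)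
      refine ((hA (r * arcRoot y ^ 2) ?_).comp y hd).congr_deriv ?_
      rotate_left
      · rw [hf, besselIntegrand_arc hr hy]
        simp only [hG]
        push_cast
        field_simp
      · rw [Complex.normSq_mul, map_pow, hn, Complex.normSq_ofReal, Complex.re_ofReal_mul, hre]
        have := sq_le_sq' hy.1 hy.2
        nlinarith [mul_pos hr hr]
    · exact hInt.mul_const _
  have hWre : W.re = r * √r * ∫ y in (-(6 / 5))..(6 / 5),
      (1 - y ^ 2) * exp (2 * a / r * (1 - y ^ 2 / 2)) := by
    have h1 := Complex.reCLM.intervalIntegral_comp_comm hInt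
    rw [hW, ← Complex.reCLM_apply, ← h1, ← intervalIntegral.integral_const_mul]
    apply intervalIntegral.integral_congr
    intro y hy
    rw [Set.uIcc_of_le (by norm_num)] at hy
    simp only [hG, Complex.reCLM_apply, Complex.re_ofReal_mul, re_arcRoot_cube_div hy]
    ring
  -- the radial segments
  have hray : ∀ d : ℂ, d.re = 1 → Complex.normSq d = 625 / 49 →
      ‖A (r * d) - A (((7 / 25 * r : ℝ) : ℂ) * d)‖ ≤
        25 / 7 * r * (√(25 / 7 * r) * exp (a / r * (674 / 625))) := by
    intro d hd hd'
    have hnd : ‖d‖ = 25 / 7 := by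
      rw [← sq_eq_sq₀ (norm_nonneg _) (by norm_num), ← Complex.normSq_eq_norm_sq, hd']; norm_num
    have h := norm_image_sub_le_of_norm_deriv_le_segment' (f := fun u : ℝ ↦ A (u * d))
      (f' := fun u ↦ f (u * d) * d) (a := 7 / 25 * r) (b := r)
      (C := 25 / 7 * (√(25 / 7 * r) * exp (a / r * (674 / 625)))) ?_ ?_ r ⟨by linarith, le_rfl⟩
    · refine h.trans ?_
      rw [mul_right_comm]
      gcongr
      linarith
    · intro u hu
      have hu0 : 0 < u := lt_of_lt_of_le (by positivity) hu.1
      have hl : HasDerivAt (fun u : ℝ ↦ (u : ℂ) * d) d u := by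
        simpa using (Complex.ofRealCLM.hasDerivAt (x := u)).mul_const d
      refine ((hA _ ?_).comp u hl).hasDerivWithinAt
      rw [Complex.normSq_mul, hd', Complex.normSq_ofReal, Complex.re_ofReal_mul, hd]
      nlinarith [hu.2]
    · intro u hu
      rw [norm_mul, hnd, mul_comm]
      gcongr
      exact norm_besselIntegrand_ray_le ha hr hd hd' hu.1 hu.2.le
  have hb1 := hray (1 + 24 / 7 * Complex.I) (by simp) (by simp [Complex.normSq_apply]; norm_num)
  have hb2 := hray (1 - 24 / 7 * Complex.I) (by simp) (by simp [Complex.normSq_apply]; norm_num)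
  have e1 : (r : ℂ) * arcRoot (6 / 5) ^ 2 =
      ((7 / 25 * r : ℝ) : ℂ) * (1 + 24 / 7 * Complex.I) := by
    rw [arcRoot_endpoint]; push_cast; linear_combination (9 / 25 * r : ℂ) * Complex.I_sq
  have e2 : (r : ℂ) * arcRoot (-(6 / 5)) ^ 2 =
      ((7 / 25 * r : ℝ) : ℂ) * (1 - 24 / 7 * Complex.I) := by
    rw [arcRoot_endpoint_neg]; push_cast; linear_combination (9 / 25 * r : ℂ) * Complex.I_sq
  rw [e1, e2] at hWA
  rw [← hWre, ← Complex.sub_re]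
  refine (Complex.abs_re_le_norm _).trans ?_
  have : ‖V - W‖ = ‖(V - W) * Complex.I‖ := by simp
  rw [this, sub_mul, hVA, hWA, sub_sub_sub_comm]
  refine (norm_sub_le _ _).trans ?_
  linarith

lemma integral_exp_neg_mul_sq_Ioi_le {b c : ℝ} (hb : 0 < b) (hc : 0 < c) :
    ∫ y in Set.Ioi c, exp (-b * y ^ 2) ≤ exp (-b * c ^ 2) / (b * c) := by
  have hbc : -(b * c) < 0 := by nlinarith
  calc ∫ y in Set.Ioi c, exp (-b * y ^ 2) ≤ ∫ y in Set.Ioi c, exp (-(b * c) * y) := by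
        refine MeasureTheory.setIntegral_mono_on (integrable_exp_neg_mul_sq hb).integrableOn
          (integrableOn_exp_mul_Ioi hbc c) measurableSet_Ioi fun y hy ↦ ?_
        have hy : c < y := hy
        apply exp_le_exp.2
        nlinarith [mul_pos hb (hc.trans hy)]
    _ = exp (-b * c ^ 2) / (b * c) := by
        rw [integral_exp_mul_Ioi hbc, neg_div_neg_eq]; ring_nf

/-- A truncated second moment of the Gaussian. -/
lemma abs_integral_one_sub_sq_mul_exp_sub_le {x : ℝ} (hx : 1 ≤ x) :
    |(∫ y in (-(6 / 5))..(6 / 5), (1 - y ^ 2) * exp (x * (1 - y ^ 2 / 2))) -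
      exp x * (√(2 * π / x) * (1 - 1 / x))| ≤ 6 / x * exp (7 / 25 * x) := by
  have hx0 : 0 < x := by linarith
  set g : ℝ → ℝ := fun y ↦ exp (-(x / 2) * y ^ 2) with hg
  have hgc : Continuous g := by fun_prop
  have hgi : MeasureTheory.Integrable g := integrable_exp_neg_mul_sq (by positivity)
  have hderiv : ∫ y in (-(6 / 5) : ℝ)..(6 / 5), (1 - x * y ^ 2) * g y =
      12 / 5 * exp (-(18 / 25) * x) := by
    rw [intervalIntegral.integral_eq_sub_of_hasDerivAt (f := fun y ↦ y * g y)]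
    · simp only [hg]; ring_nf
    · intro y _
      have h1 : HasDerivAt g (exp (-(x / 2) * y ^ 2) * (-(x / 2) * (2 * y))) y :=
        ((hasDerivAt_pow 2 y).const_mul (-(x / 2))).exp.congr_deriv (by norm_num)
      refine ((hasDerivAt_id y).mul h1).congr_deriv ?_
      simp only [hg, id]; ring
    · apply Continuous.intervalIntegrable; fun_prop
  have hhalf : ∫ y in (-(6 / 5) : ℝ)..0, g y = ∫ y in (0 : ℝ)..(6 / 5), g y := by
    rw [← neg_zero, ← intervalIntegral.integral_comp_neg]
    simp [hg]
  have hsum : (∫ y in (0 : ℝ)..(6 / 5), g y) + ∫ y in Set.Ioi (6 / 5), g y = √(2 * π / x) / 2 := by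
    rw [intervalIntegral.integral_interval_add_Ioi hgi.integrableOn hgi.integrableOn]
    have := integral_gaussian_Ioi (x / 2)
    rw [hg, this]
    congr 2; field_simp
  have htail0 : 0 ≤ ∫ y in Set.Ioi (6 / 5 : ℝ), g y :=
    MeasureTheory.setIntegral_nonneg measurableSet_Ioi fun y _ ↦ (exp_pos _).le
  have htail := integral_exp_neg_mul_sq_Ioi_le (b := x / 2) (c := 6 / 5) (by positivity) (by norm_num)
  set T := ∫ y in Set.Ioi (6 / 5 : ℝ), g y with hT
  have hfull : ∫ y in (-(6 / 5) : ℝ)..(6 / 5), g y = √(2 * π / x) - 2 * T := by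
    rw [← intervalIntegral.integral_add_adjacent_intervals (b := 0)
      (hgc.intervalIntegrable _ _) (hgc.intervalIntegrable _ _), hhalf]
    linarith
  have hmain : ∫ y in (-(6 / 5) : ℝ)..(6 / 5), (1 - y ^ 2) * exp (x * (1 - y ^ 2 / 2)) =
      exp x * ((1 - 1 / x) * (√(2 * π / x) - 2 * T) + 1 / x * (12 / 5 * exp (-(18 / 25) * x))) := by
    rw [← hfull, ← hderiv, ← intervalIntegral.integral_const_mul,
      ← intervalIntegral.integral_const_mul, ← intervalIntegral.integral_add,
      ← intervalIntegral.integral_const_mul]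
    · congr 1 with y
      have : exp (x * (1 - y ^ 2 / 2)) = exp x * g y := by
        rw [hg, ← exp_add]; ring_nf
      rw [this]
      field_simp
      ring
    · apply Continuous.intervalIntegrable; fun_prop
    · apply Continuous.intervalIntegrable; fun_prop
  have he : exp (7 / 25 * x) = exp x * exp (-(18 / 25) * x) := by rw [← exp_add]; ring_nf
  have hT' : T ≤ 5 / 3 / x * exp (-(18 / 25) * x) := by
    refine htail.trans (le_of_eq ?_)
    have : -(x / 2) * (6 / 5) ^ 2 = -(18 / 25) * x := by ring
    rw [this]; field_simp; norm_num
  have hinv : 1 / x ≤ 1 := by rw [div_le_one hx0]; exact hx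
  have hinv0 : 0 < 1 / x := by positivity
  rw [hmain, he]
  have e1 : exp x * ((1 - 1 / x) * (√(2 * π / x) - 2 * T) +
      1 / x * (12 / 5 * exp (-(18 / 25) * x))) - exp x * (√(2 * π / x) * (1 - 1 / x)) =
      exp x * (1 / x * (12 / 5 * exp (-(18 / 25) * x)) - 2 * ((1 - 1 / x) * T)) := by ring
  rw [e1, abs_mul, abs_of_pos (exp_pos _), mul_left_comm (6 / x)]
  refine mul_le_mul_of_nonneg_left ?_ (exp_pos _).le
  have hT2 : (1 - 1 / x) * T ≤ T := by nlinarith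
  have hT3 : 0 ≤ (1 - 1 / x) * T := mul_nonneg (by linarith) htail0
  have hpos : 0 < 1 / x * exp (-(18 / 25) * x) := by positivity
  have r1 : 5 / 3 / x * exp (-(18 / 25) * x) = 5 / 3 * (1 / x * exp (-(18 / 25) * x)) := by ring
  have r2 : 6 / x * exp (-(18 / 25) * x) = 6 * (1 / x * exp (-(18 / 25) * x)) := by ring
  rw [abs_le]
  constructor <;> linarith

lemma continuous_inv_eulerProd_exp {r : ℝ} (hr : 0 < r) :
    Continuous fun θ : ℝ ↦ (eulerProd (Complex.exp (-(r + θ * Complex.I))))⁻¹ := by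
  have hρ : exp (-r) < 1 := by simpa using hr
  have hn : ∀ θ : ℝ, ‖Complex.exp (-(r + θ * Complex.I))‖ = exp (-r) := fun θ ↦ by
    rw [Complex.norm_exp]; simp
  have h : (fun θ : ℝ ↦ (eulerProd (Complex.exp (-(r + θ * Complex.I))))⁻¹) =
      fun θ : ℝ ↦ ∑' m : ℕ, (p m : ℂ) * Complex.exp (-(r + θ * Complex.I)) ^ m := by
    ext θ
    exact (hasSum_p_mul_pow (by rw [hn]; exact hρ)).tsum_eq.symm
  rw [h]
  refine continuous_tsum (fun m ↦ by fun_prop) (summable_p_mul_pow (exp_pos _).le hρ) fun m θ ↦ ?_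
  rw [norm_mul, norm_pow, hn]
  simp [p]

lemma exp_neg_le_quarter {t : ℝ} (ht : 3 ≤ t) : exp (-t) ≤ 1 / 4 := by
  rw [exp_neg, one_div]
  exact inv_anti₀ (by norm_num) (by linarith [add_one_le_exp t])

lemma norm_inv_eulerProd_ofReal_exp_neg_le {r : ℝ} (hr : 0 < r) (hr' : r ≤ 1 / 50) :
    ‖(eulerProd (Complex.exp (-(r : ℂ))))⁻¹‖ ≤
      2 * (√r / √(2 * π) * exp (π ^ 2 / 6 / r - r / 24)) := by
  have hq : ‖Complex.exp (-(4 * π ^ 2 / r) : ℂ)‖ ≤ 1 / 4 := by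
    have : (-(4 * π ^ 2 / r) : ℂ) = ((-(4 * π ^ 2 / r) : ℝ) : ℂ) := by push_cast; ring
    rw [Complex.norm_exp, this, Complex.ofReal_re]
    apply exp_neg_le_quarter
    rw [le_div_iff₀ hr]
    nlinarith [pi_gt_three]
  have h1 := norm_inv_eulerProd_sub_one_le hq
  have h2 : ‖(eulerProd (Complex.exp (-(4 * π ^ 2 / r) : ℂ)))⁻¹‖ ≤ 2 := by
    have := norm_le_norm_sub_add (eulerProd (Complex.exp (-(4 * π ^ 2 / r) : ℂ)))⁻¹ 1
    rw [norm_one] at this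
    linarith
  have h3 : ((π : ℂ) ^ 2 / 6 / r - r / 24) = ((π ^ 2 / 6 / r - r / 24 : ℝ) : ℂ) := by
    push_cast; ring
  rw [inv_eulerProd_exp_neg (by simpa using hr), norm_mul, norm_mul, norm_div,
    norm_csqrt (by exact_mod_cast hr.ne'), Complex.norm_real, Complex.norm_real, h3,
    Complex.norm_exp, Complex.ofReal_re, Real.norm_of_nonneg hr.le,
    Real.norm_of_nonneg (sqrt_nonneg _), mul_comm (2 : ℝ) (_ * _)]
  gcongr

lemma re_inv_one_sub_exp_sub_le {r θ : ℝ} (hr : 0 < r) (hr' : r ≤ 1 / 50)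
    (h1 : 24 / 7 * r ≤ |θ|) (h2 : |θ| ≤ π) :
    ((1 - Complex.exp (-(r + θ * Complex.I)))⁻¹).re - (1 - exp (-r))⁻¹ ≤ -(3 / 4 / r) := by
  set ρ := exp (-r) with hρ
  have hρ0 : 0 < ρ := exp_pos _
  have hρ1 : ρ < 1 := by simpa [hρ] using hr
  have hρr : 1 - r ≤ ρ := by linarith [add_one_le_exp (-r)]
  have hq : Complex.exp (-(r + θ * Complex.I)) = ρ * (cos θ : ℝ) - ρ * (sin θ : ℝ) * Complex.I := by
    rw [neg_add, Complex.exp_add, hρ, ← neg_mul, ← Complex.ofReal_neg θ, Complex.exp_mul_I]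
    simp
    ring
  have hcos : cos θ ≤ 1 - 2 / π ^ 2 * θ ^ 2 := cos_le_one_sub_mul_cos_sq h2
  have hθ : (24 / 7 * r) ^ 2 ≤ θ ^ 2 := by
    rw [← sq_abs θ]; gcongr
  have hπ : 1 / 5 ≤ 2 / π ^ 2 := by
    rw [div_le_div_iff₀ (by norm_num) (by positivity)]
    nlinarith [pi_lt_d2, pi_pos]
  set k := ρ * (1 - cos θ) with hk
  have hk1 : 2 * r ^ 2 ≤ k := by
    have : 1 / 5 * (24 / 7 * r) ^ 2 ≤ 1 - cos θ := by nlinarith [sq_nonneg θ]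
    have h3 : (1 - r) * (1 / 5 * (24 / 7 * r) ^ 2) ≤ ρ * (1 - cos θ) := by gcongr
    nlinarith [sq_nonneg r]
  set δ := 1 - ρ with hδ
  have hδ0 : 0 < δ := by linarith
  have hδr : δ ≤ r := by linarith
  have hns : Complex.normSq (1 - Complex.exp (-(r + θ * Complex.I))) = δ ^ 2 + 2 * k := by
    rw [hq, Complex.normSq_apply]
    simp [-Complex.ofReal_cos, -Complex.ofReal_sin]
    linear_combination ρ ^ 2 * sin_sq_add_cos_sq θ
  have hre : (1 - Complex.exp (-(r + θ * Complex.I))).re = δ + k := by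
    rw [hq]; simp [-Complex.ofReal_cos, -Complex.ofReal_sin]; linarith
  rw [Complex.inv_re, hns, hre]
  have hk0 : 0 < k := lt_of_lt_of_le (by positivity) hk1
  have e : (δ + k) / (δ ^ 2 + 2 * k) - δ⁻¹ = -(k * (2 - δ) / (δ * (δ ^ 2 + 2 * k))) := by
    field_simp; ring
  rw [e, neg_le_neg_iff, div_div, div_le_div_iff₀ (by positivity) (by positivity)]
  have hsq : δ ^ 2 ≤ k / 2 := by nlinarith
  have : δ * (δ ^ 2 + 2 * k) ≤ r * (k / 2 + 2 * k) := by gcongr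
  nlinarith [mul_pos hr hk0, mul_le_mul_of_nonneg_left hδr (mul_pos hr hk0).le]

lemma norm_minor_arc_le {n : ℕ} {r θ : ℝ} (hr : 0 < r) (hr' : r ≤ 1 / 50)
    (hn : (n : ℝ) - 1 / 24 = π ^ 2 / 6 / r ^ 2) (h1 : 24 / 7 * r ≤ |θ|) (h2 : |θ| ≤ π) :
    ‖(eulerProd (Complex.exp (-(r + θ * Complex.I))))⁻¹ * Complex.exp (n * (r + θ * Complex.I))‖ ≤
      2 * (√r / √(2 * π)) * exp (π ^ 2 / 3 / r - 3 / 4 / r) := by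
  have hnq : ‖Complex.exp (-(r + θ * Complex.I))‖ = exp (-r) := by
    rw [Complex.norm_exp]; simp
  have hne : ‖Complex.exp (n * (r + θ * Complex.I))‖ = exp (n * r) := by
    rw [Complex.norm_exp]; simp
  have hb := norm_inv_eulerProd_le (q := Complex.exp (-(r + θ * Complex.I)))
    (by rw [hnq]; simpa using hr)
  rw [hnq, Complex.ofReal_exp, Complex.ofReal_neg] at hb
  have hnr : n * r = π ^ 2 / 6 / r + r / 24 := by
    have : (n : ℝ) = π ^ 2 / 6 / r ^ 2 + 1 / 24 := by linarith
    rw [this]; field_simp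
  have hexp := re_inv_one_sub_exp_sub_le hr hr' h1 h2
  calc _ ≤ 2 * (√r / √(2 * π) * exp (π ^ 2 / 6 / r - r / 24)) * exp (-(3 / 4 / r)) *
        exp (n * r) := by
        rw [norm_mul, hne]
        gcongr
        refine hb.trans ?_
        gcongr
        exact norm_inv_eulerProd_ofReal_exp_neg_le hr hr'
    _ = _ := by
        have : π ^ 2 / 3 / r - 3 / 4 / r =
          (π ^ 2 / 6 / r - r / 24) + -(3 / 4 / r) + n * r := by rw [hnr]; ring
        rw [this, exp_add, exp_add]; ring

lemma norm_major_arc_sub_le {n : ℕ} {r θ : ℝ} (hr : 0 < r) (hr' : r ≤ 1 / 50)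
    (hn : (n : ℝ) - 1 / 24 = π ^ 2 / 6 / r ^ 2) (h1 : |θ| ≤ 24 / 7 * r) :
    ‖(eulerProd (Complex.exp (-(r + θ * Complex.I))))⁻¹ * Complex.exp (n * (r + θ * Complex.I)) -
      (√(2 * π) : ℝ)⁻¹ * besselIntegrand (π ^ 2 / 6) (π ^ 2 / 6 / r ^ 2) (r + θ * Complex.I)‖ ≤
      4 * (√(25 / 7 * r) / √(2 * π)) * exp (π ^ 2 / 6 / r) := by
  set z : ℂ := r + θ * Complex.I with hz
  have hzre : z.re = r := by simp [hz]
  have hz0 : z ≠ 0 := by intro h; rw [h] at hzre; simp at hzre; linarith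
  have hns : Complex.normSq z = r ^ 2 + θ ^ 2 := by
    rw [Complex.normSq_apply, hzre]; simp [hz]; ring
  have hθ : θ ^ 2 ≤ (24 / 7 * r) ^ 2 := by rw [← sq_abs θ]; gcongr
  have hnorm : ‖z‖ ≤ 25 / 7 * r := by
    rw [← sq_le_sq₀ (norm_nonneg _) (by positivity), ← Complex.normSq_eq_norm_sq, hns]
    linarith
  set R := (z⁻¹).re with hR
  have hR' : R = r / (r ^ 2 + θ ^ 2) := by rw [hR, Complex.inv_re, hns, hzre]
  have hR1 : 1 ≤ R := by
    rw [hR', le_div_iff₀ (by positivity)]; nlinarith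
  have hq : ‖Complex.exp (-(4 * π ^ 2 / z))‖ = exp (-(4 * π ^ 2 * R)) := by
    have : -(4 * π ^ 2 / z) = ((-(4 * π ^ 2) : ℝ) : ℂ) * z⁻¹ := by push_cast; ring
    rw [Complex.norm_exp, this, Complex.re_ofReal_mul, ← hR]; ring_nf
  have hq' := norm_inv_eulerProd_sub_one_le (q := Complex.exp (-(4 * π ^ 2 / z))) (by
    rw [hq]; apply exp_neg_le_quarter; nlinarith [pi_gt_three])
  rw [hq] at hq'
  have hfac : (eulerProd (Complex.exp (-z)))⁻¹ * Complex.exp (n * z) -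
      (√(2 * π) : ℝ)⁻¹ * besselIntegrand (π ^ 2 / 6) (π ^ 2 / 6 / r ^ 2) z =
      (√(2 * π) : ℝ)⁻¹ * besselIntegrand (π ^ 2 / 6) (π ^ 2 / 6 / r ^ 2) z *
        ((eulerProd (Complex.exp (-(4 * π ^ 2 / z))))⁻¹ - 1) := by
    have he : Complex.exp (π ^ 2 / 6 / z - z / 24) * Complex.exp (n * z) =
        Complex.exp ((π ^ 2 / 6 : ℝ) / z + (π ^ 2 / 6 / r ^ 2 : ℝ) * z) := by
      rw [← Complex.exp_add, ← hn]; congr 1; push_cast; ring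
    rw [inv_eulerProd_exp_neg (by rw [hzre]; exact hr), besselIntegrand, ← he]
    push_cast
    ring
  rw [hfac, norm_mul, norm_mul, besselIntegrand, norm_mul, norm_csqrt hz0, Complex.norm_exp]
  have hre : (((π ^ 2 / 6 : ℝ) : ℂ) / z + ((π ^ 2 / 6 / r ^ 2 : ℝ) : ℂ) * z).re =
      π ^ 2 / 6 * R + π ^ 2 / 6 / r := by
    rw [div_eq_mul_inv, Complex.add_re, Complex.re_ofReal_mul, Complex.re_ofReal_mul, hzre, ← hR]
    field_simp
  rw [hre]
  rw [Complex.norm_real, Real.norm_of_nonneg (inv_nonneg.2 (sqrt_nonneg _))]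
  calc _ ≤ (√(2 * π))⁻¹ * (√(25 / 7 * r) * exp (π ^ 2 / 6 * R + π ^ 2 / 6 / r)) *
        (4 * exp (-(4 * π ^ 2 * R))) := by gcongr
    _ = 4 * (√(25 / 7 * r) / √(2 * π)) *
        exp (π ^ 2 / 6 / r + -((4 - 1 / 6) * π ^ 2 * R)) := by
        have : π ^ 2 / 6 / r + -((4 - 1 / 6) * π ^ 2 * R) =
          (π ^ 2 / 6 * R + π ^ 2 / 6 / r) + -(4 * π ^ 2 * R) := by ring
        rw [this, exp_add (_ + _)]; ring
    _ ≤ _ := by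
        gcongr
        have : 0 < (4 - 1 / 6) * π ^ 2 * R := by
          have := pi_pos
          positivity
        linarith

lemma norm_integral_sub_integral_besselIntegrand_le {n : ℕ} {r : ℝ} (hr : 0 < r)
    (hr' : r ≤ 1 / 50) (hn : (n : ℝ) - 1 / 24 = π ^ 2 / 6 / r ^ 2) :
    ‖(∫ θ in (-π)..π, (eulerProd (Complex.exp (-(r + θ * Complex.I))))⁻¹ *
        Complex.exp (n * (r + θ * Complex.I))) -
      (√(2 * π) : ℝ)⁻¹ * ∫ θ in (-(24 / 7 * r))..(24 / 7 * r),
        besselIntegrand (π ^ 2 / 6) (π ^ 2 / 6 / r ^ 2) (r + θ * Complex.I)‖ ≤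
      2 * π * (2 * (√r / √(2 * π)) * exp (π ^ 2 / 3 / r - 3 / 4 / r)) +
      48 / 7 * r * (4 * (√(25 / 7 * r) / √(2 * π)) * exp (π ^ 2 / 6 / r)) := by
  set F : ℝ → ℂ := fun θ ↦ (eulerProd (Complex.exp (-(r + θ * Complex.I))))⁻¹ *
    Complex.exp (n * (r + θ * Complex.I)) with hF
  set c := 24 / 7 * r with hc
  have hc0 : 0 < c := by positivity
  have hcπ : c ≤ π := by linarith [pi_gt_three]
  have hFc : Continuous F := (continuous_inv_eulerProd_exp hr).mul (by fun_prop)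
  have hBc : Continuous fun θ : ℝ ↦ besselIntegrand (π ^ 2 / 6) (π ^ 2 / 6 / r ^ 2)
      (r + θ * Complex.I) := by
    rw [continuous_iff_continuousAt]
    intro θ
    refine ContinuousAt.comp (f := fun θ : ℝ ↦ (r : ℂ) + θ * Complex.I)
      (differentiableAt_besselIntegrand _ _ (by simpa using hr)).continuousAt ?_
    fun_prop
  have hsplit : ∫ θ in (-π)..π, F θ =
      (∫ θ in (-π)..(-c), F θ) + (∫ θ in (-c)..c, F θ) + ∫ θ in c..π, F θ := by
    rw [intervalIntegral.integral_add_adjacent_intervals (hFc.intervalIntegrable _ _)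
      (hFc.intervalIntegrable _ _), intervalIntegral.integral_add_adjacent_intervals
      (hFc.intervalIntegrable _ _) (hFc.intervalIntegrable _ _)]
  set B := 2 * (√r / √(2 * π)) * exp (π ^ 2 / 3 / r - 3 / 4 / r) with hB
  have hB0 : 0 ≤ B := by positivity
  have hleft : ‖∫ θ in (-π)..(-c), F θ‖ ≤ π * B := by
    refine (intervalIntegral.norm_integral_le_of_norm_le_const (C := B) fun θ hθ ↦ ?_).trans ?_
    · rw [Set.uIoc_of_le (by linarith)] at hθ
      have : |θ| = -θ := abs_of_nonpos (by linarith [hθ.2])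
      exact norm_minor_arc_le hr hr' hn (by rw [this]; linarith [hθ.2])
        (by rw [this]; linarith [hθ.1])
    · rw [abs_of_nonneg (by linarith), mul_comm]
      gcongr
      linarith
  have hright : ‖∫ θ in c..π, F θ‖ ≤ π * B := by
    refine (intervalIntegral.norm_integral_le_of_norm_le_const (C := B) fun θ hθ ↦ ?_).trans ?_
    · rw [Set.uIoc_of_le hcπ] at hθ
      have : |θ| = θ := abs_of_pos (hc0.trans hθ.1)
      exact norm_minor_arc_le hr hr' hn (by rw [this]; exact hθ.1.le) (by rw [this]; exact hθ.2)
    · rw [abs_of_nonneg (by linarith), mul_comm]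
      gcongr
      linarith
  have hmid : ‖(∫ θ in (-c)..c, F θ) - (√(2 * π) : ℝ)⁻¹ * ∫ θ in (-c)..c,
        besselIntegrand (π ^ 2 / 6) (π ^ 2 / 6 / r ^ 2) (r + θ * Complex.I)‖ ≤
      48 / 7 * r * (4 * (√(25 / 7 * r) / √(2 * π)) * exp (π ^ 2 / 6 / r)) := by
    rw [← intervalIntegral.integral_const_mul, ← intervalIntegral.integral_sub
      (hFc.intervalIntegrable _ _) ((hBc.intervalIntegrable _ _).const_mul _)]
    refine (intervalIntegral.norm_integral_le_of_norm_le_const fun θ hθ ↦ ?_).trans_eq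
      (b := 4 * (√(25 / 7 * r) / √(2 * π)) * exp (π ^ 2 / 6 / r) * |c - -c|) ?_
    · rw [Set.uIoc_of_le (by linarith)] at hθ
      exact norm_major_arc_sub_le hr hr' hn (abs_le.2 ⟨hθ.1.le, hθ.2⟩)
    · rw [abs_of_nonneg (by linarith), hc]; ring
  rw [hsplit]
  set L := ∫ θ in (-π)..(-c), F θ
  set Mid := ∫ θ in (-c)..c, F θ
  set Rt := ∫ θ in c..π, F θ
  set K := (((√(2 * π) : ℝ)⁻¹ : ℝ) : ℂ) * ∫ θ in (-c)..c,
        besselIntegrand (π ^ 2 / 6) (π ^ 2 / 6 / r ^ 2) (r + θ * Complex.I)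
  have e : L + Mid + Rt - K = L + Rt + (Mid - K) := by ring
  rw [e]
  refine (norm_add_le _ _).trans ?_
  have := norm_add_le L Rt
  linarith

lemma abs_p_sub_le {n : ℕ} {r : ℝ} (hr : 0 < r) (hr' : r ≤ 1 / 50)
    (hn : (n : ℝ) - 1 / 24 = π ^ 2 / 6 / r ^ 2) :
    |p n - r ^ 2 * √3 / (2 * π ^ 2) * exp (π ^ 2 / 3 / r) * (1 - 3 * r / π ^ 2)| ≤
      √r * exp (π ^ 2 / 3 / r - 3 / 4 / r) := by
  have hπ := pi_pos
  have hπ3 := pi_gt_three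
  have hπ9 : 9 < π ^ 2 := by nlinarith
  set x := π ^ 2 / 3 / r with hx
  have hx1 : 1 ≤ x := by
    rw [hx, le_div_iff₀ hr]; linarith
  have hx0 : 0 < x := by linarith
  set s := √(2 * π) with hs
  have hs0 : 0 < s := sqrt_pos.2 (by positivity)
  have hs1 : 5 / 2 ≤ s := by
    apply Real.le_sqrt_of_sq_le
    linarith [pi_gt_d2]
  have hsinv : s⁻¹ ≤ 2 / 5 := by
    rw [inv_le_comm₀ hs0 (by norm_num)]; linarith
  set I := ∫ θ in (-π)..π, (eulerProd (Complex.exp (-(r + θ * Complex.I))))⁻¹ *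
      Complex.exp (n * (r + θ * Complex.I)) with hI
  set K := ∫ θ in (-(24 / 7 * r))..(24 / 7 * r),
        besselIntegrand (π ^ 2 / 6) (π ^ 2 / 6 / r ^ 2) (r + θ * Complex.I) with hK
  have hp : p n = (2 * π)⁻¹ * I.re := by
    have := congrArg Complex.re (p_eq_integral n hr)
    rwa [Complex.re_ofReal_mul, Complex.ofReal_re] at this
  have h1 : |I.re - s⁻¹ * K.re| ≤
      2 * π * (2 * (√r / s) * exp (x - 3 / 4 / r)) +
      48 / 7 * r * (4 * (√(25 / 7 * r) / s) * exp (π ^ 2 / 6 / r)) := by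
    have := (Complex.abs_re_le_norm _).trans (norm_integral_sub_integral_besselIntegrand_le hr hr' hn)
    rwa [Complex.sub_re, Complex.re_ofReal_mul] at this
  have h2 := abs_re_integral_besselIntegrand_sub_le (a := π ^ 2 / 6) (by positivity) hr
  rw [← hK] at h2
  have hx2 : 2 * (π ^ 2 / 6) / r = x := by rw [hx]; ring
  rw [hx2] at h2
  have h3 := abs_integral_one_sub_sq_mul_exp_sub_le hx1
  set J := ∫ y in (-(6 / 5) : ℝ)..(6 / 5), (1 - y ^ 2) * exp (x * (1 - y ^ 2 / 2)) with hJ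
  set G := exp x * (√(2 * π / x) * (1 - 1 / x)) with hG
  have hmain : r ^ 2 * √3 / (2 * π ^ 2) * exp x * (1 - 3 * r / π ^ 2) =
      (2 * π)⁻¹ * (s⁻¹ * (r * √r * G)) := by
    have e1 : √(2 * π / x) = s * (√3 * √r / π) := by
      rw [hs, ← Real.sqrt_mul (by norm_num), Real.sqrt_eq_iff_mul_self_eq (by positivity)
        (by positivity)]
      rw [mul_mul_mul_comm, Real.mul_self_sqrt (by positivity), div_mul_div_comm,
        Real.mul_self_sqrt (by positivity), hx]
      field_simp
    have e2 : 1 / x = 3 * r / π ^ 2 := by rw [hx]; field_simp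
    rw [hG, e1, e2]
    have e3 : r ^ 2 = r * (√r * √r) := by rw [Real.mul_self_sqrt hr.le]; ring
    rw [e3]
    field_simp
  rw [hmain, hp, ← mul_sub, abs_mul, abs_of_pos (by positivity)]
  set e := exp (x - 3 / 4 / r) with he
  have he1 : exp (π ^ 2 / 6 / r) ≤ e := by
    apply exp_le_exp.2
    rw [← sub_nonneg]
    have : x - 3 / 4 / r - π ^ 2 / 6 / r = (π ^ 2 / 6 - 3 / 4) / r := by rw [hx]; ring
    rw [this]; exact div_nonneg (by linarith) hr.le
  have he2 : exp (π ^ 2 / 6 / r * (674 / 625)) ≤ e := by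
    apply exp_le_exp.2
    rw [← sub_nonneg]
    have : x - 3 / 4 / r - π ^ 2 / 6 / r * (674 / 625) = (π ^ 2 / 6 * (576 / 625) - 3 / 4) / r := by
      rw [hx]; ring
    rw [this]; exact div_nonneg (by linarith) hr.le
  have he3 : exp (7 / 25 * x) ≤ e := by
    apply exp_le_exp.2
    rw [← sub_nonneg]
    have : x - 3 / 4 / r - 7 / 25 * x = (π ^ 2 / 3 * (18 / 25) - 3 / 4) / r := by
      rw [hx]; ring
    rw [this]; exact div_nonneg (by linarith) hr.le
  have hsq : √(25 / 7 * r) ≤ 2 * √r := by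
    rw [Real.sqrt_mul (by norm_num)]
    gcongr
    rw [Real.sqrt_le_left (by norm_num)]; norm_num
  have hr0 := sqrt_pos.2 hr
  have he0 : 0 < e := exp_pos _
  set u := √r * e with hu
  have hu0 : 0 < u := by positivity
  have b1 : 2 * (√r / s) * e ≤ 4 / 5 * u := by
    have : 2 * (√r / s) * e = 2 * u * s⁻¹ := by rw [hu]; ring
    rw [this]; nlinarith
  have b2 : 48 / 7 * r * (4 * (√(25 / 7 * r) / s) * exp (π ^ 2 / 6 / r)) ≤
      48 / 7 * (1 / 50) * (4 * (2 * √r * (2 / 5)) * e) := by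
    rw [div_eq_mul_inv _ s]
    gcongr
  have b3 : 50 / 7 * r * (√(25 / 7 * r) * exp (π ^ 2 / 6 / r * (674 / 625))) ≤
      50 / 7 * (1 / 50) * (2 * √r * e) := by gcongr
  have b4 : r * √r * (6 / x * exp (7 / 25 * x)) ≤ 1 / 50 * √r * (6 / 1 * e) := by gcongr
  have hinv : (2 * π)⁻¹ ≤ 1 / 6 := by
    rw [one_div]; exact inv_anti₀ (by norm_num) (by linarith)
  have hinv0 : 0 < (2 * π)⁻¹ := by positivity
  have h4 : |I.re - s⁻¹ * (r * √r * G)| ≤ 2 * π * (4 / 5 * u) + u := by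
    have e1 : I.re - s⁻¹ * (r * √r * G) = (I.re - s⁻¹ * K.re) +
        s⁻¹ * ((K.re - r * √r * J) + r * √r * (J - G)) := by ring
    rw [e1]
    have t1 : |r * √r * (J - G)| ≤ 1 / 50 * √r * (6 / 1 * e) := by
      rw [abs_mul, abs_of_pos (by positivity)]
      exact (mul_le_mul_of_nonneg_left h3 (by positivity)).trans b4
    have t2 : |(K.re - r * √r * J) + r * √r * (J - G)| ≤ 1 / 2 * u := by
      refine (abs_add_le _ _).trans ?_
      have := h2.trans b3
      linarith
    have t3 : |s⁻¹ * ((K.re - r * √r * J) + r * √r * (J - G))| ≤ 2 / 5 * (1 / 2 * u) := by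
      rw [abs_mul, abs_of_pos (inv_pos.2 hs0)]
      gcongr
    refine (abs_add_le _ _).trans ?_
    have t4 : 2 * π * (2 * (√r / s) * e) ≤ 2 * π * (4 / 5 * u) := by gcongr
    linarith
  calc _ ≤ (2 * π)⁻¹ * (2 * π * (4 / 5 * u) + u) := by gcongr
    _ = 4 / 5 * u + (2 * π)⁻¹ * u := by field_simp
    _ ≤ u := by nlinarith

lemma pow_six_le_exp {y : ℝ} (hy : 50 ≤ y) : 400 * y ^ 6 ≤ exp (3 / 4 * y) := by
  have h := Real.pow_div_factorial_le_exp (3 / 4 * y) (by positivity) 20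
  refine le_trans ?_ h
  have h1 : (50 : ℝ) ^ 14 ≤ y ^ 14 := by gcongr
  have h2 : (3 / 4 * y) ^ 20 / (Nat.factorial 20 : ℝ) =
      (3 / 4) ^ 20 / (Nat.factorial 20 : ℝ) * y ^ 14 * y ^ 6 := by ring
  rw [h2]
  gcongr
  calc (400 : ℝ) ≤ (3 / 4) ^ 20 / (Nat.factorial 20 : ℝ) * 50 ^ 14 := by
        norm_num [Nat.factorial]
    _ ≤ _ := by gcongr

lemma abs_p_sub_le_mul {n : ℕ} {r : ℝ} (hr : 0 < r) (hr' : r ≤ 1 / 50)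
    (hn : (n : ℝ) - 1 / 24 = π ^ 2 / 6 / r ^ 2) :
    |p n - r ^ 2 * √3 / (2 * π ^ 2) * exp (π ^ 2 / 3 / r) * (1 - 3 * r / π ^ 2)| ≤
      r ^ 2 * √3 / (2 * π ^ 2) * exp (π ^ 2 / 3 / r) * (1 - 3 * r / π ^ 2) *
        (36 * r ^ 4 / (10 * π ^ 4)) := by
  refine (abs_p_sub_le hr hr' hn).trans ?_
  have hπ := pi_gt_three
  have hπ2 : π ^ 2 ≤ 10 := by nlinarith [pi_lt_d2]
  have hsr : √r ≤ 1 := Real.sqrt_le_iff.2 ⟨by norm_num, by linarith⟩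
  have hy := pow_six_le_exp (y := 1 / r) (by rw [le_div_iff₀ hr]; linarith)
  have hdecay : exp (-(3 / 4 / r)) ≤ r ^ 6 / 400 := by
    have e1 : 3 / 4 * (1 / r) = 3 / 4 / r := by ring
    rw [e1] at hy
    rw [exp_neg, inv_le_comm₀ (exp_pos _) (by positivity)]
    refine le_trans (le_of_eq ?_) hy
    field_simp
  have h3 : (17 / 10 : ℝ) ≤ √3 := Real.le_sqrt_of_sq_le (by norm_num)
  have h4 : 99 / 100 ≤ 1 - 3 * r / π ^ 2 := by
    have : 3 * r / π ^ 2 ≤ 1 / 100 := by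
      rw [div_le_iff₀ (by positivity)]; nlinarith
    linarith
  rw [sub_eq_add_neg, exp_add]
  calc √r * (exp (π ^ 2 / 3 / r) * exp (-(3 / 4 / r))) ≤ 1 * (exp (π ^ 2 / 3 / r) * (r ^ 6 / 400)) := by
        gcongr
    _ = r ^ 2 * (1 / 400) * exp (π ^ 2 / 3 / r) * r ^ 4 := by ring
    _ ≤ r ^ 2 * ((17 / 10) / (2 * 10) * (99 / 100) * (36 / (10 * 10 ^ 2))) *
        exp (π ^ 2 / 3 / r) * r ^ 4 := by
        gcongr; norm_num
    _ ≤ r ^ 2 * (√3 / (2 * π ^ 2) * (1 - 3 * r / π ^ 2) * (36 / (10 * (π ^ 2) ^ 2))) *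
        exp (π ^ 2 / 3 / r) * r ^ 4 := by
        gcongr
    _ = _ := by ring

lemma abs_log_sub_log_le {P M ε : ℝ} (hM : 0 < M) (hε : ε ≤ 1 / 6) (h : |P - M| ≤ M * ε) :
    0 < P ∧ |log P - log M| ≤ 6 / 5 * ε := by
  have hε0 : 0 ≤ ε := by
    have := (abs_nonneg _).trans h
    exact nonneg_of_mul_nonneg_right this hM
  have h' := abs_le.1 h
  have hP : 0 < P := by nlinarith
  refine ⟨hP, ?_⟩
  rw [← Real.log_div hP.ne' hM.ne']
  have h1 : P / M - 1 ≤ ε := by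
    rw [sub_le_iff_le_add, div_le_iff₀ hM]; linarith
  have h2 : 1 - ε ≤ P / M := by
    rw [le_div_iff₀ hM]; linarith
  have hd : 0 < P / M := by positivity
  rw [abs_le]
  constructor
  · have h3 := Real.one_sub_inv_le_log_of_pos hd
    have h4 : (P / M)⁻¹ ≤ 1 + 6 / 5 * ε := by
      rw [inv_le_iff_one_le_mul₀ hd]
      have : (1 + 6 / 5 * ε) * (1 - ε) ≤ (1 + 6 / 5 * ε) * (P / M) := by gcongr
      nlinarith
    linarith
  · have := Real.log_le_sub_one_of_pos hd
    linarith

/-- The logarithm of the main term of `p n`, up to a constant, as a function of `N = n - 1 / 24`. -/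
noncomputable def logMainTerm (N : ℝ) : ℝ :=
  4 * (π / √24) * √N - log N + log (1 - 1 / (4 * (π / √24) * √N))

lemma sqrt_twentyFour : √24 = 2 * √6 := by
  rw [show (24 : ℝ) = 2 ^ 2 * 6 by norm_num, Real.sqrt_mul (by norm_num), Real.sqrt_sq (by norm_num)]

lemma abs_log_p_sub_le {m : ℕ} (hm : 4998 ≤ m) :
    |log (p m) - (log (√3 / 12) + logMainTerm (m - 1 / 24))| ≤ 1 / (8 * (m - 1 / 24 : ℝ) ^ 2) := by
  have hm' : (4998 : ℝ) ≤ m := by exact_mod_cast hm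
  set N : ℝ := m - 1 / 24 with hN
  have hN1 : 4997 ≤ N := by linarith
  have hN0 : 0 < N := by linarith
  have hπ := pi_pos
  have hπ3 := pi_gt_three
  have hs6 : 0 < √6 := by positivity
  have hs6' : √6 ^ 2 = 6 := Real.sq_sqrt (by norm_num)
  have hsN : 0 < √N := sqrt_pos.2 hN0
  have hsN' : √N ^ 2 = N := Real.sq_sqrt hN0.le
  set r := π / (√6 * √N) with hr
  have hr0 : 0 < r := by positivity
  have hr2 : r ^ 2 = π ^ 2 / (6 * N) := by
    rw [hr, div_pow, mul_pow, hs6', hsN']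
  have hr' : r ≤ 1 / 50 := by
    rw [← sq_le_sq₀ hr0.le (by norm_num), hr2, div_le_iff₀ (by positivity)]
    nlinarith [pi_lt_d2]
  have hn : (m : ℝ) - 1 / 24 = π ^ 2 / 6 / r ^ 2 := by
    rw [hr2, ← hN]; field_simp
  have hx : π ^ 2 / 3 / r = 4 * (π / √24) * √N := by
    rw [hr, sqrt_twentyFour]; field_simp; rw [hs6']; norm_num
  have hs : 3 * r / π ^ 2 = 1 / (4 * (π / √24) * √N) := by
    rw [← hx]; field_simp
  have hcoef : r ^ 2 * √3 / (2 * π ^ 2) = √3 / 12 / N := by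
    rw [hr2]; field_simp; norm_num
  have hε : 36 * r ^ 4 / (10 * π ^ 4) = 1 / (10 * N ^ 2) := by
    rw [show r ^ 4 = (r ^ 2) ^ 2 by ring, hr2]; field_simp; norm_num
  have h := abs_p_sub_le_mul hr0 hr' hn
  have hfac : 0 < 1 - 3 * r / π ^ 2 := by
    rw [sub_pos, div_lt_one (by positivity)]; nlinarith
  rw [hε, hcoef, hs, hx] at h
  rw [hs] at hfac
  have hM : 0 < √3 / 12 / N * exp (4 * (π / √24) * √N) * (1 - 1 / (4 * (π / √24) * √N)) := by
    positivity
  have hε' : 1 / (10 * N ^ 2) ≤ 1 / 6 := by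
    apply one_div_le_one_div_of_le (by norm_num); nlinarith
  have h' := (abs_log_sub_log_le hM hε' h).2
  rw [Real.log_mul (by positivity) hfac.ne', Real.log_mul (by positivity) (by positivity),
    Real.log_div (by positivity) hN0.ne', Real.log_exp] at h'
  have e : log (√3 / 12) - log N + 4 * (π / √24) * √N + log (1 - 1 / (4 * (π / √24) * √N)) =
      log (√3 / 12) + logMainTerm N := by rw [logMainTerm]; ring
  rw [e] at h'
  refine h'.trans ?_
  have hpos : 0 < 1 / N ^ 2 := by positivity
  have e1 : 6 / 5 * (1 / (10 * N ^ 2)) = 12 / 100 * (1 / N ^ 2) := by field_simp; norm_num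
  have e2 : 1 / (8 * N ^ 2) = 1 / 8 * (1 / N ^ 2) := by field_simp
  linarith

lemma taylor_le_sqrt_one_add {h : ℝ} (h1 : |h| ≤ 1 / 2) :
    1 + h / 2 - h ^ 2 / 8 + h ^ 3 / 16 - h ^ 4 / 8 ≤ √(1 + h) := by
  apply Real.le_sqrt_of_sq_le
  obtain ⟨ha, hb⟩ := abs_le.1 h1
  have e : 1 + h - (1 + h / 2 - h ^ 2 / 8 + h ^ 3 / 16 - h ^ 4 / 8) ^ 2 =
      h ^ 4 / 256 * (44 + 36 * h - 9 * h ^ 2 + 4 * h ^ 3 - 4 * h ^ 4) := by ring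
  have : 0 ≤ 44 + 36 * h - 9 * h ^ 2 + 4 * h ^ 3 - 4 * h ^ 4 := by
    have h2 : h ^ 2 ≤ 1 / 4 := by nlinarith
    have h3 : -(1 / 8) ≤ h ^ 3 := by nlinarith [sq_nonneg h]
    have h4 : h ^ 4 ≤ 1 / 16 := by nlinarith [sq_nonneg h]
    linarith
  have : 0 ≤ h ^ 4 / 256 * (44 + 36 * h - 9 * h ^ 2 + 4 * h ^ 3 - 4 * h ^ 4) := by positivity
  linarith

lemma two_sub_le_sqrt_add_sqrt {h : ℝ} (h0 : 0 ≤ h) (h1 : h ≤ 1 / 2) :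
    2 - h ^ 2 / 4 - h ^ 4 / 4 ≤ √(1 + h) + √(1 - h) := by
  have a := taylor_le_sqrt_one_add (h := h) (by rw [abs_of_nonneg h0]; exact h1)
  have b := taylor_le_sqrt_one_add (h := -h) (by rw [abs_neg, abs_of_nonneg h0]; exact h1)
  rw [← sub_eq_add_neg] at b
  linarith

lemma inv_sqrt_add_inv_sqrt_le {h : ℝ} (h0 : 0 ≤ h) (h1 : h ≤ 1 / 100) :
    (√(1 + h))⁻¹ + (√(1 - h))⁻¹ ≤ 2 + h ^ 2 := by
  have key : ∀ t : ℝ, |t| ≤ 1 / 100 → (√(1 + t))⁻¹ ≤ 1 - t / 2 + t ^ 2 / 2 := by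
    intro t ht
    obtain ⟨ha, hb⟩ := abs_le.1 ht
    have hpos : 0 < 1 - t / 2 + t ^ 2 / 2 := by nlinarith [sq_nonneg t]
    rw [inv_le_comm₀ (sqrt_pos.2 (by linarith)) hpos]
    apply Real.le_sqrt_of_sq_le
    rw [inv_pow, inv_le_iff_one_le_mul₀ (by positivity)]
    have e : (1 + t) * (1 - t / 2 + t ^ 2 / 2) ^ 2 - 1 =
        t ^ 2 / 4 * (1 + 3 * t - t ^ 2 + t ^ 3) := by ring
    have : 0 ≤ 1 + 3 * t - t ^ 2 + t ^ 3 := by nlinarith [sq_nonneg t]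
    have : 0 ≤ t ^ 2 / 4 * (1 + 3 * t - t ^ 2 + t ^ 3) := by positivity
    linarith
  have a := key h (by rw [abs_of_nonneg h0]; exact h1)
  have b := key (-h) (by rw [abs_neg, abs_of_nonneg h0]; exact h1)
  rw [← sub_eq_add_neg] at b
  linarith

lemma two_mul_log_one_sub_sub_le {s u v d : ℝ} (hs : 0 ≤ s) (hs' : s ≤ 1 / 100) (hu : 0 < u)
    (hv : 0 < v) (huv : 1 ≤ u * v) (hsum : u + v ≤ 2 + d) (hd0 : 0 ≤ d) (hd : d ≤ 1) :
    2 * log (1 - s) - log (1 - s * u) - log (1 - s * v) ≤ 2 * s * d := by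
  have hsu : 97 / 100 ≤ 1 - s * u := by nlinarith
  have hsv : 97 / 100 ≤ 1 - s * v := by nlinarith
  have hu1 : 0 < 1 - s * u := by linarith
  have hv1 : 0 < 1 - s * v := by linarith
  have hs1 : 0 < 1 - s := by linarith
  have e : 2 * log (1 - s) - log (1 - s * u) - log (1 - s * v) =
      log ((1 - s) ^ 2 / ((1 - s * u) * (1 - s * v))) := by
    rw [Real.log_div (by positivity) (by positivity), Real.log_pow,
      Real.log_mul hu1.ne' hv1.ne']
    push_cast; ring
  rw [e]
  refine (Real.log_le_sub_one_of_pos (by positivity)).trans ?_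
  have hden : 1 / 2 ≤ (1 - s * u) * (1 - s * v) := by nlinarith
  rw [sub_le_iff_le_add, div_le_iff₀ (by positivity)]
  have hnum : (1 - s) ^ 2 ≤ (1 - s * u) * (1 - s * v) + s * d := by
    nlinarith [mul_nonneg (mul_nonneg hs hs) (sub_nonneg.2 huv), mul_le_mul_of_nonneg_left hsum hs]
  have := mul_le_mul_of_nonneg_left hden (mul_nonneg hs hd0)
  linarith

lemma pi_div_sqrt_bounds : 16 / 25 ≤ π / √24 ∧ π / √24 ≤ 13 / 20 := by
  have h0 : 0 < π / √24 := by positivity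
  have h : (π / √24) ^ 2 = π ^ 2 / 24 := by rw [div_pow, Real.sq_sqrt (by norm_num)]
  constructor
  · rw [← sq_le_sq₀ (by norm_num) h0.le, h]; nlinarith [pi_gt_d2]
  · rw [← sq_le_sq₀ h0.le (by norm_num), h]; nlinarith [pi_lt_d2, pi_pos]

lemma neg_second_difference_logMainTerm_le {N : ℝ} (hN : 4900 ≤ N) :
    -(logMainTerm (N + 1) + logMainTerm (N - 1) - 2 * logMainTerm N) ≤
      π / √24 / (N * √N) * (1 + 1 / N ^ 2) - 49 / 50 * (1 / N ^ 2) := by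
  obtain ⟨hc1, hc2⟩ := pi_div_sqrt_bounds
  set c := π / √24 with hc
  have hN0 : 0 < N := by linarith
  have hsN : 70 ≤ √N := Real.le_sqrt_of_sq_le (by linarith)
  have hsN0 : 0 < √N := by linarith
  have hsN' : √N * √N = N := Real.mul_self_sqrt hN0.le
  set h := 1 / N with hh
  have hh0 : 0 < h := by positivity
  have hh1 : h ≤ 1 / 4900 := one_div_le_one_div_of_le (by norm_num) hN
  have e1 : √(N + 1) = √N * √(1 + h) := by
    rw [← Real.sqrt_mul hN0.le]; congr 1; rw [hh]; field_simp
  have e2 : √(N - 1) = √N * √(1 - h) := by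
    rw [← Real.sqrt_mul hN0.le]; congr 1; rw [hh]; field_simp
  have hA : 0 < √(1 + h) := sqrt_pos.2 (by linarith)
  have hB : 0 < √(1 - h) := sqrt_pos.2 (by linarith)
  have hAB : √(1 + h) * √(1 - h) ≤ 1 := by
    rw [← Real.sqrt_mul (by linarith), Real.sqrt_le_iff]
    exact ⟨by norm_num, by nlinarith⟩
  set s := 1 / (4 * c * √N) with hs
  have hs0 : 0 < s := by positivity
  have hs1 : s ≤ 1 / 100 := one_div_le_one_div_of_le (by norm_num) (by nlinarith)
  have f1 : 1 / (4 * c * (√N * √(1 + h))) = s * (√(1 + h))⁻¹ := by rw [hs]; field_simp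
  have f2 : 1 / (4 * c * (√N * √(1 - h))) = s * (√(1 - h))⁻¹ := by rw [hs]; field_simp
  have hlog := two_mul_log_one_sub_sub_le hs0.le hs1 (inv_pos.2 hA) (inv_pos.2 hB)
    (by rw [← mul_inv]; exact (one_le_inv₀ (by positivity)).2 hAB)
    (inv_sqrt_add_inv_sqrt_le hh0.le (by linarith)) (sq_nonneg h) (by nlinarith)
  have hsqrt := two_sub_le_sqrt_add_sqrt hh0.le (by linarith)
  have hlogN : log (N + 1) + log (N - 1) - 2 * log N ≤ -h ^ 2 := by
    have e : log (N + 1) + log (N - 1) - 2 * log N = log (1 - h ^ 2) := by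
      have : 1 - h ^ 2 = (N + 1) * (N - 1) / N ^ 2 := by rw [hh]; field_simp; ring
      rw [this, Real.log_div (by nlinarith) (by positivity), Real.log_mul (by linarith)
        (by linarith), Real.log_pow]
      push_cast; ring
    rw [e]
    have := Real.log_le_sub_one_of_pos (show 0 < 1 - h ^ 2 by nlinarith)
    linarith
  have hroot : 4 * c * √N * (2 - √(1 + h) - √(1 - h)) ≤ c / (N * √N) * (1 + h ^ 2) := by
    have : c / (N * √N) * (1 + h ^ 2) = 4 * c * √N * (h ^ 2 / 4 + h ^ 4 / 4) := by
      have : c / (N * √N) = c * √N * h ^ 2 := by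
        rw [hh]; field_simp; linarith [hsN']
      rw [this]; ring
    rw [this]
    gcongr
    linarith
  have hsh : 2 * s * h ^ 2 ≤ 1 / 50 * h ^ 2 := by gcongr; linarith
  have hh2 : 1 / N ^ 2 = h ^ 2 := by rw [hh]; field_simp
  rw [hh2]
  simp only [logMainTerm, ← hc, e1, e2, f1, f2]
  linarith

lemma inv_mul_sqrt_add_ge {N : ℝ} (hN : 0 < N) :
    1 / (N * √N) * (1 - 25 / 16 / N) ≤ 1 / ((N + 25 / 24) * √(N + 25 / 24)) := by
  set t := 25 / 24 / N with ht
  have ht0 : 0 < t := by positivity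
  have e1 : N + 25 / 24 = N * (1 + t) := by rw [ht]; field_simp
  have e2 : 25 / 16 / N = 3 / 2 * t := by rw [ht]; ring
  have hs : √(1 + t) ≤ 1 + t / 2 := by
    rw [Real.sqrt_le_iff]; exact ⟨by positivity, by nlinarith⟩
  have hs0 : 0 < √(1 + t) := sqrt_pos.2 (by linarith)
  have hsN : 0 < √N := sqrt_pos.2 hN
  rw [e1, e2, Real.sqrt_mul hN.le, mul_mul_mul_comm,
    ← one_div_mul_one_div (N * √N)]
  refine mul_le_mul_of_nonneg_left ?_ (by positivity)
  rw [le_div_iff₀ (by positivity)]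
  rcases le_total (1 - 3 / 2 * t) 0 with h | h
  · have : 0 < (1 + t) * √(1 + t) := by positivity
    nlinarith
  · have : (1 - 3 / 2 * t) * ((1 + t) * √(1 + t)) ≤ (1 - 3 / 2 * t) * ((1 + t) * (1 + t / 2)) := by
      gcongr
    nlinarith [sq_nonneg t, pow_pos ht0 3]

lemma mul_pi_div_rpow_eq {x : ℝ} (hx : 0 < x) :
    24 * π / (24 * x) ^ ((3 : ℝ) / 2) = π / √24 * (1 / (x * √x)) := by
  have : (24 * x) ^ ((3 : ℝ) / 2) = 24 * x * (√24 * √x) := by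
    rw [show (3 : ℝ) / 2 = 1 + 1 / 2 by norm_num, Real.rpow_add (by positivity), Real.rpow_one,
      ← Real.sqrt_eq_rpow, Real.sqrt_mul (by norm_num)]
  rw [this]
  field_simp

theorem upper_bound_neg_second_difference (n : ℕ) (hn : 5000 ≤ n) :
    -(Real.log (p n) + Real.log (p (n - 2)) - 2 * Real.log (p (n - 1))) <
      24 * π / (24 * (n : ℝ)) ^ ((3 : ℝ) / 2) -
        (24 * π / (24 * (n : ℝ)) ^ ((3 : ℝ) / 2)) ^ 2 := by
  have hn' : (5000 : ℝ) ≤ n := by exact_mod_cast hn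
  set N : ℝ := n - 25 / 24 with hN
  have hN1 : 4900 ≤ N := by linarith
  have hN0 : 0 < N := by linarith
  have h0 := abs_log_p_sub_le (m := n) (by omega)
  have h1 := abs_log_p_sub_le (m := n - 1) (by omega)
  have h2 := abs_log_p_sub_le (m := n - 2) (by omega)
  have e0 : (n : ℝ) - 1 / 24 = N + 1 := by rw [hN]; ring
  have e1 : ((n - 1 : ℕ) : ℝ) - 1 / 24 = N := by
    rw [Nat.cast_sub (by omega), hN]; push_cast; ring
  have e2 : ((n - 2 : ℕ) : ℝ) - 1 / 24 = N - 1 := by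
    rw [Nat.cast_sub (by omega), hN]; push_cast; ring
  have hnN : (n : ℝ) = N + 25 / 24 := by rw [hN]; ring
  rw [e0] at h0
  rw [e1] at h1
  rw [e2] at h2
  have hmain := neg_second_difference_logMainTerm_le hN1
  have hinv := inv_mul_sqrt_add_ge hN0
  rw [mul_pi_div_rpow_eq (by linarith), hnN]
  obtain ⟨hc1, hc2⟩ := pi_div_sqrt_bounds
  set c := π / √24 with hc
  have hsN : 70 ≤ √N := Real.le_sqrt_of_sq_le (by linarith)
  have hsN' : √N * √N = N := Real.mul_self_sqrt hN0.le
  set Y := 1 / ((N + 25 / 24) * √(N + 25 / 24)) with hY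
  have hY0 : 0 < Y := by positivity
  have hYle : Y ≤ 1 / (N * √N) := by
    apply one_div_le_one_div_of_le (by positivity)
    gcongr <;> linarith
  set w := 1 / √N with hw
  have hw0 : 0 < w := by positivity
  have hw1 : w ≤ 1 / 70 := one_div_le_one_div_of_le (by norm_num) hsN
  have w2 : 1 / N = w ^ 2 := by rw [hw, div_pow, Real.sq_sqrt hN0.le, one_pow]
  have w3 : 1 / (N * √N) = w ^ 3 := by
    rw [← one_div_mul_one_div, w2, ← hw]; ring
  have w4 : 1 / N ^ 2 = w ^ 4 := by
    rw [show 1 / N ^ 2 = (1 / N) ^ 2 by rw [one_div_pow], w2]; ring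
  have hp : 1 / (8 * (N + 1) ^ 2) ≤ 1 / 8 * w ^ 4 := by
    rw [← w4, one_div_mul_one_div]
    apply one_div_le_one_div_of_le (by positivity)
    nlinarith
  have hm : 1 / (8 * (N - 1) ^ 2) ≤ 1 / 7 * w ^ 4 := by
    rw [← w4, one_div_mul_one_div]
    apply one_div_le_one_div_of_le (by positivity)
    nlinarith
  have hz : 1 / (8 * N ^ 2) = 1 / 8 * w ^ 4 := by rw [← w4, one_div_mul_one_div]
  rw [hz] at h1
  have hcN : c / (N * √N) = c * w ^ 3 := by rw [← w3]; ring
  have hN16 : 25 / 16 / N = 25 / 16 * w ^ 2 := by rw [← w2]; ring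
  rw [hcN, w4] at hmain
  rw [w3, hN16] at hinv
  rw [w3] at hYle
  have hlower : c * (w ^ 3 * (1 - 25 / 16 * w ^ 2)) ≤ c * Y := by gcongr
  have hupper : (c * Y) ^ 2 ≤ (c * w ^ 3) ^ 2 := by gcongr
  have a0 := abs_le.1 h0
  have a1 := abs_le.1 h1
  have a2 := abs_le.1 h2
  have hfinal : 0 < w ^ 4 * (43 / 100 - c * w ^ 3 - 25 / 16 * (c * w) - c ^ 2 * w ^ 2) := by
    have b1 : c * w ≤ 13 / 20 * (1 / 70) := by gcongr
    have b2 : c ^ 2 * w ^ 2 ≤ (13 / 20) ^ 2 * (1 / 70) ^ 2 := by gcongr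
    have b3 : c * w ^ 3 ≤ 13 / 20 * (1 / 70) ^ 3 := by gcongr
    apply mul_pos (by positivity)
    norm_num at b1 b2 b3 ⊢
    linarith
  have hw4 : 0 < w ^ 4 := by positivity
  have r1 : w ^ 4 * (43 / 100 - c * w ^ 3 - 25 / 16 * (c * w) - c ^ 2 * w ^ 2) =
      43 / 100 * w ^ 4 - c * w ^ 3 * w ^ 4 - 25 / 16 * (c * w ^ 5) - (c * w ^ 3) ^ 2 := by ring
  have r2 : c * (w ^ 3 * (1 - 25 / 16 * w ^ 2)) = c * w ^ 3 - 25 / 16 * (c * w ^ 5) := by ring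
  rw [r1] at hfinal
  rw [r2] at hlower
  rw [mul_add, mul_one] at hmain
  linarith
end

section
/- For every integer n ≥ 116, log p(n+2) - 3·log p(n+1) + 3·log p(n) - log p(n-1) > 0; equivalently, Δ³ log p(n-1) > 0, so the sequence {p(n)}_{n≥116} is ratio log-convex. -/
open Real

section
open PowerSeries PowerSeries.WithPiTopology

/-- The generating function of the partition numbers is the inverse of Euler's pentagonal series. -/
theorem mk_card_partition_mul_pentagonalSeries (R : Type*) [CommRing R] :
    (PowerSeries.mk fun n ↦ (Fintype.card (Nat.Partition n) : R)) * pentagonalSeries R = 1 := by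
  nontriviality R
  let _ : TopologicalSpace R := ⊥
  have _ : DiscreteTopology R := ⟨rfl⟩
  have h₁ := Nat.Partition.hasProd_powerSeriesMk_card_restricted R (fun _ ↦ True)
  have h₂ := h₁.mul (hasProd_one_sub_X_pow R)
  have h₃ : ∀ i : ℕ, (if True then ∑' j : ℕ, (X : R⟦X⟧) ^ ((i + 1) * j) else 1) *
      (1 - X ^ (i + 1)) = 1 := fun i ↦ by
    simp only [if_true, pow_mul]
    exact tsum_pow_mul_one_sub_of_constantCoeff_eq_zero (by simp)
  simp only [h₃] at h₂
  rw [← h₂.unique hasProd_one]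
  simp [Nat.Partition.restricted]

/-- Euler's recurrence for the partition numbers. -/
theorem sum_range_pentagonal_card_partition {n K : ℕ} (hn : n ≠ 0)
    (hK : ∀ k ≥ K, n < pentagonal (-k)) :
    ∑ k ∈ Finset.range K, (-1) ^ k *
      ((if pentagonal (-k) ≤ n then (Fintype.card (Nat.Partition (n - pentagonal (-k))) : ℤ)
        else 0) -
       (if pentagonal (k + 1) ≤ n then (Fintype.card (Nat.Partition (n - pentagonal (k + 1))) : ℤ)
        else 0)) = 0 := by
  have h := ((hasSum_pow_pentagonal_sub_pentagonalSeries ℤ).mul_left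
    (PowerSeries.mk fun n ↦ (Fintype.card (Nat.Partition n) : ℤ))).map
      (PowerSeries.coeff n) (continuous_coeff ℤ n)
  rw [mk_card_partition_mul_pentagonalSeries, coeff_one, if_neg hn] at h
  have hterm : ∀ k : ℕ, (coeff n) ((PowerSeries.mk fun n ↦ (Fintype.card (Nat.Partition n) : ℤ)) *
      ((-1) ^ k * (X ^ pentagonal (-k) - X ^ pentagonal (k + 1)))) = (-1) ^ k *
      ((if pentagonal (-k) ≤ n then (Fintype.card (Nat.Partition (n - pentagonal (-k))) : ℤ)
        else 0) -
       (if pentagonal (k + 1) ≤ n then (Fintype.card (Nat.Partition (n - pentagonal (k + 1))) : ℤ)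
        else 0)) := fun k ↦ by
    rw [show ((-1 : ℤ⟦X⟧) ^ k) = C ((-1) ^ k) by simp, mul_left_comm, coeff_C_mul, mul_sub, map_sub,
      coeff_mul_X_pow', coeff_mul_X_pow']
    simp
  simp only [Function.comp_def, hterm] at h
  refine (hasSum_sum_of_ne_finset_zero fun k hk ↦ ?_).unique h
  have hk' : K ≤ k := by simpa using hk
  have h₁ := hK k hk'
  have h₂ := pentagonal_neg_lt_pentagonal_add_one (k := (k : ℤ)) (by positivity)
  rw [if_neg (by lia), if_neg (by lia)]
  simp
end

section
open Filter Topology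

/-- Euler's pentagonal series evaluated at a complex number of the open unit disc. -/
theorem hasSum_pentagonalSeries_of_norm_lt_one {q : ℂ} (hq : ‖q‖ < 1) :
    HasSum (fun n ↦ (PowerSeries.pentagonalSeries ℂ).coeff n * q ^ n)
      (∏' n : ℕ, (1 - q ^ (n + 1))) := by
  have hgeom := summable_geometric_of_lt_one (norm_nonneg q) hq
  have hZ : Summable fun k : ℤ ↦ (Int.negOnePow k : ℂ) * q ^ pentagonal k := by
    refine Summable.of_norm_bounded (hgeom.comp_injective pentagonal_injective) fun k ↦ ?_
    rcases Int.even_or_odd k with h | h <;>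
      simp [Int.negOnePow_even, Int.negOnePow_odd, h]
  have hN : HasSum (fun k : ℕ ↦ (-1) ^ k * (q ^ pentagonal (-k) - q ^ pentagonal (k + 1)))
      (∑' k : ℤ, (Int.negOnePow k : ℂ) * q ^ pentagonal k) := by
    have h := hZ.hasSum
    rw [← neg_injective.hasSum_iff (fun x hx ↦ by absurd hx; use -x; simp)] at h
    convert h.nat_add_neg_add_one using 2 with k
    simp_rw [Function.comp_apply, neg_neg, Int.negOnePow_add]
    simp [Int.negOnePow_neg]
    ring
  set M : ℝ := Real.exp (∑' n : ℕ, ‖q‖ ^ n) with hM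
  have hprod : ∀ k n : ℕ, ‖∏ i ∈ Finset.range n, (1 - q ^ (k + i + 1))‖ ≤ M := fun k n ↦ by
    rw [norm_prod]
    calc ∏ i ∈ Finset.range n, ‖1 - q ^ (k + i + 1)‖
        ≤ ∏ i ∈ Finset.range n, (1 + ‖q‖ ^ i) := by
          refine Finset.prod_le_prod (fun i _ ↦ norm_nonneg _) fun i _ ↦ ?_
          refine (norm_sub_le _ _).trans ?_
          rw [norm_one, norm_pow]
          exact add_le_add le_rfl (pow_le_pow_of_le_one (norm_nonneg _) hq.le (by lia))
      _ ≤ Real.exp (∑ i ∈ Finset.range n, ‖q‖ ^ i) :=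
          Real.prod_one_add_le_exp_sum _ fun i ↦ by positivity
      _ ≤ M := Real.exp_le_exp.mpr (hgeom.sum_le_tsum _ fun i _ ↦ by positivity)
  have hterm : ∀ k n : ℕ,
      ‖q ^ ((k + 1) * n) * ∏ i ∈ Finset.range (n + 1), (1 - q ^ (k + i + 1))‖ ≤ ‖q‖ ^ n * M :=
    fun k n ↦ by
    rw [norm_mul, norm_pow]
    refine mul_le_mul (pow_le_pow_of_le_one (norm_nonneg _) hq.le ?_) (hprod _ _) (norm_nonneg _)
      (by positivity)
    exact Nat.le_mul_of_pos_left _ (by lia)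
  have htprod : ∏' n : ℕ, (1 - q ^ (n + 1)) =
      ∑' (k : ℕ), (-1) ^ k * (q ^ pentagonal (-k) - q ^ pentagonal (k + 1)) := by
    refine Pentagonal.tprod_one_sub_pow (tendsto_pow_atTop_nhds_zero_of_norm_lt_one hq)
      (fun k ↦ Summable.of_norm_bounded (hgeom.mul_right M) (hterm k)) (fun k ↦ ?_) hN.summable ?_
    · have := multipliable_one_add_of_summable (f := fun n ↦ -q ^ (n + k + 1))
        (by simpa [add_assoc] using (summable_nat_add_iff (k + 1)).mpr hgeom)
      simpa [sub_eq_add_neg] using this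
    · have hlim : Tendsto (fun k : ℕ ↦ ‖q‖ ^ k * (∑' n : ℕ, ‖q‖ ^ n * M)) atTop (𝓝 0) := by
        simpa using (tendsto_pow_atTop_nhds_zero_of_lt_one (norm_nonneg q) hq).mul_const
          (∑' n : ℕ, ‖q‖ ^ n * M)
      refine squeeze_zero_norm (fun k ↦ ?_) hlim
      rw [norm_mul, norm_mul, norm_pow, norm_pow, norm_neg, norm_one, one_pow, one_mul]
      refine mul_le_mul (pow_le_pow_of_le_one (norm_nonneg _) hq.le ?_)
        (tsum_of_norm_bounded (hgeom.mul_right M).hasSum (hterm k)) (norm_nonneg _) (by positivity)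
      rw [Nat.le_div_iff_mul_le two_pos]
      nlinarith
  rw [htprod, hN.tsum_eq]
  have h := hZ.hasSum
  rw [← pentagonal_injective.hasSum_iff fun n hn ↦ by
    simp [PowerSeries.coeff_pentagonalSeries_eq_zero ℂ hn]]
  simpa [Function.comp_def] using h
end

section
open Filter Topology

/-- Two power series with the same sum near the origin have the same coefficients. -/
theorem eq_of_eventually_hasSum_pow {a b : ℕ → ℂ} {f : ℂ → ℂ}
    (ha : ∀ᶠ z in 𝓝 0, HasSum (fun n ↦ a n * z ^ n) (f z))
    (hb : ∀ᶠ z in 𝓝 0, HasSum (fun n ↦ b n * z ^ n) (f z)) : a = b := by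
  have key : ∀ c : ℕ → ℂ, (∀ᶠ z in 𝓝 0, HasSum (fun n ↦ c n * z ^ n) (f z)) →
      HasFPowerSeriesAt f (FormalMultilinearSeries.ofScalars ℂ c) 0 := fun c hc ↦ by
    rw [hasFPowerSeriesAt_iff]
    simpa [FormalMultilinearSeries.coeff_ofScalars, mul_comm] using hc
  have h := (key a ha).eq_formalMultilinearSeries (key b hb)
  ext n
  have := congrArg (fun p ↦ p.coeff n) h
  simpa [FormalMultilinearSeries.coeff_ofScalars] using this

theorem tprod_one_sub_pow_ne_zero {q : ℂ} (hq : ‖q‖ < 1) : ∏' n : ℕ, (1 - q ^ (n + 1)) ≠ 0 := by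
  have hs : Summable fun n : ℕ ↦ ‖-q ^ (n + 1)‖ := by
    simpa using (summable_nat_add_iff 1).mpr (summable_geometric_of_lt_one (norm_nonneg q) hq)
  simp_rw [sub_eq_add_neg]
  refine tprod_one_add_ne_zero_of_summable (fun n h ↦ ?_) hs
  have h₁ : q ^ (n + 1) = 1 := by linear_combination -h
  have h₂ : ‖q‖ ^ (n + 1) < 1 := pow_lt_one₀ (norm_nonneg _) hq (by lia)
  rw [← norm_pow, h₁, norm_one] at h₂
  exact lt_irrefl _ h₂

theorem differentiableOn_inv_tprod_one_sub_pow :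
    DifferentiableOn ℂ (fun q : ℂ ↦ (∏' n : ℕ, (1 - q ^ (n + 1)))⁻¹) (Metric.ball 0 1) :=
  ModularForm.differentiableOn_tprod_one_sub_pow.inv fun _ hq ↦
    tprod_one_sub_pow_ne_zero (by simpa using hq)

theorem cauchyPowerSeries_coeff_inv_tprod {R : NNReal} (hR₀ : 0 < R) (hR : R < 1) (n : ℕ) :
    (cauchyPowerSeries (fun q : ℂ ↦ (∏' n : ℕ, (1 - q ^ (n + 1)))⁻¹) 0 R).coeff n =
      Fintype.card (Nat.Partition n) := by
  set g : ℂ → ℂ := fun q ↦ (∏' n : ℕ, (1 - q ^ (n + 1)))⁻¹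
  set a : ℕ → ℂ := fun n ↦ (cauchyPowerSeries g 0 R).coeff n with ha
  set e : ℕ → ℂ := fun n ↦ (PowerSeries.pentagonalSeries ℂ).coeff n with he
  have hg : HasFPowerSeriesOnBall g (cauchyPowerSeries g 0 R) 0 R :=
    (differentiableOn_inv_tprod_one_sub_pow.mono
      (Metric.closedBall_subset_ball (by exact_mod_cast hR))).hasFPowerSeriesOnBall hR₀
  have hsum : ∀ z : ℂ, ‖z‖ < R → HasSum (fun n ↦ a n * z ^ n) (g z) := fun z hz ↦ by
    have := hg.hasSum (y := z) (by simpa [← NNReal.coe_lt_coe, enorm] using hz)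
    simpa [FormalMultilinearSeries.apply_eq_pow_smul_coeff, mul_comm, ha] using this
  have hmul : PowerSeries.mk a * PowerSeries.pentagonalSeries ℂ = 1 := by
    ext m
    refine congrFun (eq_of_eventually_hasSum_pow (f := fun _ ↦ 1) (a := fun m ↦
      (PowerSeries.mk a * PowerSeries.pentagonalSeries ℂ).coeff m)
      (b := fun m ↦ (1 : PowerSeries ℂ).coeff m) ?_ ?_) m
    · filter_upwards [Metric.ball_mem_nhds (0 : ℂ) (NNReal.coe_pos.mpr hR₀)] with z hz
      have hz : ‖z‖ < R := by simpa using hz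
      have hz1 : ‖z‖ < 1 := hz.trans (by exact_mod_cast hR)
      have h₁ := hsum z hz
      have h₂ := hasSum_pentagonalSeries_of_norm_lt_one hz1
      have h₃ := summable_norm_sum_mul_antidiagonal_of_summable_norm h₁.summable.norm h₂.summable.norm
      have h₄ := tsum_mul_tsum_eq_tsum_sum_antidiagonal_of_summable_norm
        h₁.summable.norm h₂.summable.norm
      rw [h₁.tsum_eq, h₂.tsum_eq, inv_mul_cancel₀ (tprod_one_sub_pow_ne_zero hz1)] at h₄
      rw [h₄]
      convert! h₃.of_norm.hasSum using 2 with m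
      rw [PowerSeries.coeff_mul, Finset.sum_mul]
      refine Finset.sum_congr rfl fun kl hkl ↦ ?_
      rw [← Finset.HasAntidiagonal.mem_antidiagonal.mp hkl, pow_add, PowerSeries.coeff_mk]
      ring
    · refine Eventually.of_forall fun z ↦ ?_
      convert! hasSum_ite_eq (0 : ℕ) (1 : ℂ) using 2 with m
      by_cases h : m = 0 <;> simp [PowerSeries.coeff_one, h]
  have h := mk_card_partition_mul_pentagonalSeries ℂ
  have heq : PowerSeries.mk a = PowerSeries.mk fun n ↦ (Fintype.card (Nat.Partition n) : ℂ) := by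
    calc PowerSeries.mk a = PowerSeries.mk a * PowerSeries.pentagonalSeries ℂ *
          PowerSeries.mk fun n ↦ (Fintype.card (Nat.Partition n) : ℂ) := by
          rw [mul_assoc, mul_comm (PowerSeries.pentagonalSeries ℂ), h, mul_one]
      _ = _ := by rw [hmul, one_mul]
  simpa [ha] using congrArg (PowerSeries.coeff n) heq

theorem hasSum_card_partition {q : ℂ} (hq : ‖q‖ < 1) :
    HasSum (fun n ↦ (Fintype.card (Nat.Partition n) : ℂ) * q ^ n)
      (∏' n : ℕ, (1 - q ^ (n + 1)))⁻¹ := by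
  obtain ⟨R, hqR, hR⟩ := exists_between hq
  have hR₀ : 0 < R := (norm_nonneg q).trans_lt hqR
  lift R to NNReal using hR₀.le
  have hg := (differentiableOn_inv_tprod_one_sub_pow.mono
      (Metric.closedBall_subset_ball hR)).hasFPowerSeriesOnBall (by exact_mod_cast hR₀)
  have := hg.hasSum (y := q) (by simpa [← NNReal.coe_lt_coe, enorm] using hqR)
  simpa [FormalMultilinearSeries.apply_eq_pow_smul_coeff, mul_comm,
    cauchyPowerSeries_coeff_inv_tprod (R := R) (by exact_mod_cast hR₀) (by exact_mod_cast hR)]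
    using this

/-- Cauchy's formula for the partition numbers, on the circle of radius `exp (-2πy)`. -/
theorem card_partition_eq_integral {y : ℝ} (hy : 0 < y) (n : ℕ) :
    (Fintype.card (Nat.Partition n) : ℂ) = ∫ x in (-(1 / 2) : ℝ)..1 / 2,
      (∏' k : ℕ, (1 - Complex.exp (-2 * π * (y + x * Complex.I)) ^ (k + 1)))⁻¹ *
        Complex.exp (2 * π * n * (y + x * Complex.I)) := by
  set g : ℂ → ℂ := fun q ↦ (∏' k : ℕ, (1 - q ^ (k + 1)))⁻¹ with hg
  set R : NNReal := ⟨Real.exp (-2 * π * y), (Real.exp_pos _).le⟩ with hR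
  have hRc : (R : ℝ) = Real.exp (-2 * π * y) := rfl
  have hR₀ : 0 < R := NNReal.coe_pos.mp (by rw [hRc]; positivity)
  have hR₁ : R < 1 := by
    rw [← NNReal.coe_lt_coe, hRc, NNReal.coe_one, Real.exp_lt_one_iff]
    nlinarith [mul_pos Real.pi_pos hy]
  set h : ℝ → ℂ := fun θ ↦ (circleMap 0 R θ)⁻¹ ^ n * g (circleMap 0 R θ) with hh
  have hper : Function.Periodic h (2 * π) := fun θ ↦ by
    simp only [hh, periodic_circleMap (0 : ℂ) R θ]
  have hcoeff := cauchyPowerSeries_coeff_inv_tprod hR₀ hR₁ n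
  rw [FormalMultilinearSeries.coeff, Pi.one_def, cauchyPowerSeries_apply, circleIntegral] at hcoeff
  have hint : ∀ θ : ℝ, deriv (circleMap 0 R) θ • (1 / (circleMap 0 R θ - 0)) ^ n •
      (circleMap 0 R θ - 0)⁻¹ • g (circleMap 0 R θ) = Complex.I * h θ := fun θ ↦ by
    have hne : circleMap 0 R θ ≠ 0 := circleMap_ne_center (NNReal.coe_pos.mpr hR₀).ne'
    simp only [deriv_circleMap, sub_zero, smul_eq_mul, hh, one_div]
    field_simp
  change _ • (∫ θ in (0 : ℝ)..2 * π, deriv (circleMap 0 R) θ • (1 / (circleMap 0 R θ - 0)) ^ n •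
    (circleMap 0 R θ - 0)⁻¹ • g (circleMap 0 R θ)) = _ at hcoeff
  simp only [hint] at hcoeff
  have hshift : ∫ θ in (0 : ℝ)..2 * π, h θ = ∫ θ in (-π)..π, h θ := by
    have := hper.intervalIntegral_add_eq 0 (-π)
    rwa [zero_add, show -π + 2 * π = π by ring] at this
  have hscale := intervalIntegral.integral_comp_mul_left (a := -(1 / 2)) (b := 1 / 2) h
    (c := -(2 * π)) (by simp [Real.pi_ne_zero])
  rw [show -(2 * π) * -(1 / 2) = π by ring, show -(2 * π) * (1 / 2) = -π by ring,
    intervalIntegral.integral_symm (-π) π] at hscale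
  rw [← hcoeff, intervalIntegral.integral_const_mul, hshift]
  have hx : ∀ x : ℝ, h (-(2 * π) * x) =
      g (Complex.exp (-2 * π * (y + x * Complex.I))) *
        Complex.exp (2 * π * n * (y + x * Complex.I)) := fun x ↦ by
    have hc : circleMap 0 R (-(2 * π) * x) = Complex.exp (-2 * π * (y + x * Complex.I)) := by
      rw [circleMap, zero_add, hRc, Complex.ofReal_exp, ← Complex.exp_add]
      congr 1
      push_cast
      ring
    simp only [hh]
    rw [hc, mul_comm, ← Complex.exp_neg, ← Complex.exp_nat_mul]
    congr 2
    ring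
  simp only [hx] at hscale
  refine Eq.trans ?_ hscale.symm
  simp only [smul_neg, inv_neg, neg_smul, neg_neg, smul_eq_mul, Complex.real_smul]
  have := Complex.I_ne_zero
  push_cast
  field_simp
end

/-- The `i`-th digit of `T` in base `2 ^ 160`. -/
def digit (T i : ℕ) : ℕ := Nat.mod (Nat.shiftRight T (Nat.mul 160 i)) (2 ^ 160)

/-- The sum of the digits of `T` in base `2 ^ 160` at the given positions. -/
def sumDigits (T : ℕ) : List ℕ → ℕ
  | [] => 0
  | i :: l => Nat.add (digit T i) (sumDigits T l)

/-- The numbers `g - 1` with `g = k * (3 * k ± 1) / 2` for odd `k`. -/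
def oddPentagonal : List ℕ :=
  [0, 1, 11, 14, 34, 39, 69, 76, 116, 125, 175, 186, 246, 259, 329, 344, 424, 441, 531, 550, 650,
    671, 781, 804, 924, 949, 1079, 1106, 1246, 1275, 1425, 1456]

/-- The numbers `g - 1` with `g = k * (3 * k ± 1) / 2` for even `k ≠ 0`. -/
def evenPentagonal : List ℕ :=
  [4, 6, 21, 25, 50, 56, 91, 99, 144, 154, 209, 221, 286, 300, 375, 391, 476, 494, 589, 609, 714,
    736, 851, 875, 1000, 1026, 1161, 1189, 1334, 1364, 1519, 1551]

/-- Evaluates `F` at `x` after forcing `x` to a literal. -/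
def withNat (x : ℕ) (F : ℕ → Bool) : Bool := Nat.rec (F 0) (fun y _ ↦ F (Nat.succ y)) x

theorem withNat_eq (x : ℕ) (F : ℕ → Bool) : withNat x F = F x := by cases x <;> rfl

/-- Starting from the table `T` of the partition numbers below `n = 1601 - f`, appends `f` more
partition numbers by Euler's recurrence, checking the inequality of the theorem along the way. -/
def checkTable (T : ℕ) : ℕ → Bool
  | 0 => true
  | f + 1 =>
    withNat (Nat.sub (sumDigits T oddPentagonal) (sumDigits T evenPentagonal)) fun v ↦
      withNat (Nat.add (Nat.shiftLeft T 160) v) fun T' ↦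
        Nat.ble (v + 1) (2 ^ 160) &&
        (Nat.ble 1483 f || Nat.ble (digit T 0 ^ 3 * digit T 2 + 1) (v * digit T 1 ^ 3)) &&
        checkTable T' f

theorem checkTable_eq_true : checkTable 1 1600 = true := by decide +kernel

theorem digit_shiftLeft_add_zero {T v : ℕ} (hv : v < 2 ^ 160) :
    digit (Nat.add (Nat.shiftLeft T 160) v) 0 = v := by
  change ((T <<< 160 + v) >>> 0) % 2 ^ 160 = v
  rw [Nat.shiftRight_zero, Nat.shiftLeft_eq, Nat.mul_add_mod_of_lt hv]

theorem digit_shiftLeft_add_succ {T v : ℕ} (hv : v < 2 ^ 160) (i : ℕ) :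
    digit (Nat.add (Nat.shiftLeft T 160) v) (i + 1) = digit T i := by
  change ((T <<< 160 + v) >>> (160 * (i + 1))) % 2 ^ 160 = (T >>> (160 * i)) % 2 ^ 160
  rw [mul_add, mul_one, add_comm (160 * i), Nat.shiftRight_add, Nat.shiftLeft_eq,
    Nat.shiftRight_eq_div_pow _ 160, Nat.add_div_of_dvd_right (Dvd.intro_left _ rfl),
    Nat.mul_div_cancel _ (by positivity), Nat.div_eq_of_lt hv, add_zero]

/-- The digits of `T` are `p (n - 1), …, p 1, p 0, 0, 0, …`. -/
def IsTable (T n : ℕ) : Prop :=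
  ∀ i, digit T i = if i + 1 ≤ n then Fintype.card (Nat.Partition (n - (i + 1))) else 0

theorem isTable_one : IsTable 1 1 := by
  rintro (_ | i)
  · simp [digit]
  · have : 1 >>> (160 * (i + 1)) = 0 := by
      rw [Nat.shiftRight_eq_div_pow]
      exact Nat.div_eq_of_lt (Nat.one_lt_two_pow (by lia))
    change 1 >>> (160 * (i + 1)) % 2 ^ 160 = _
    simp [this]

theorem IsTable.succ {T n : ℕ} (h : IsTable T n) (hv : Fintype.card (Nat.Partition n) < 2 ^ 160) :
    IsTable (Nat.add (Nat.shiftLeft T 160) (Fintype.card (Nat.Partition n))) (n + 1) := by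
  rintro (_ | i)
  · rw [digit_shiftLeft_add_zero hv]; simp
  · rw [digit_shiftLeft_add_succ hv, h i]
    simp

theorem add_sum_map_evenPentagonal (a : ℕ → ℤ) (hlast : a 1617 = 0)
    (h : ∑ k ∈ Finset.range 33, (-1) ^ k *
      (a (pentagonal (-k)) - a (pentagonal (k + 1))) = 0) :
    a 0 + (evenPentagonal.map fun i ↦ a (i + 1)).sum =
      (oddPentagonal.map fun i ↦ a (i + 1)).sum := by
  simp only [oddPentagonal, evenPentagonal, List.map_cons, List.map_nil, List.sum_cons,
    List.sum_nil, Nat.reduceAdd]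
  simp [Finset.sum_range_succ, pentagonal_def, hlast] at h
  linarith

theorem IsTable.card_eq {T n : ℕ} (h : IsTable T n) (h0 : n ≠ 0) (hn : n ≤ 1600) :
    Fintype.card (Nat.Partition n) = sumDigits T oddPentagonal - sumDigits T evenPentagonal := by
  have key := sum_range_pentagonal_card_partition (K := 33) h0 fun k hk ↦ by
    have h₁ := two_mul_natCast_pentagonal_neg k
    have h₂ : (33 : ℤ) ≤ k := by exact_mod_cast hk
    zify at hn ⊢
    nlinarith
  obtain ⟨a, ha⟩ : ∃ a : ℕ → ℤ, a = fun g ↦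
    if g ≤ n then (Fintype.card (Nat.Partition (n - g)) : ℤ) else 0 := ⟨_, rfl⟩
  have ha0 : a 0 = Fintype.card (Nat.Partition n) := by simp [ha]
  have hlast : a 1617 = 0 := by rw [ha]; exact if_neg (by lia)
  have hsucc : ∀ i, (digit T i : ℤ) = a (i + 1) := fun i ↦ by
    rw [h i]; simp only [ha]; split_ifs <;> simp
  have hsum : ∀ l, (sumDigits T l : ℤ) = (l.map fun i ↦ a (i + 1)).sum := fun l ↦ by
    induction l with
    | nil => simp [sumDigits]
    | cons i l ih => rw [List.map_cons, List.sum_cons, ← ih, ← hsucc, sumDigits]; simp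
  have key' : ∑ k ∈ Finset.range 33, (-1) ^ k *
      (a (pentagonal (-k)) - a (pentagonal (k + 1))) = 0 := by rw [ha]; exact key
  clear key ha h hsucc
  have := add_sum_map_evenPentagonal a hlast key'
  rw [← hsum, ← hsum, ha0] at this
  exact Nat.eq_sub_of_add_eq (by exact_mod_cast this)

theorem checkTable_succ {T f : ℕ} (h : checkTable T (f + 1) = true) {v : ℕ}
    (hv : v = sumDigits T oddPentagonal - sumDigits T evenPentagonal) :
    v < 2 ^ 160 ∧ (f < 1483 → digit T 0 ^ 3 * digit T 2 < v * digit T 1 ^ 3) ∧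
      checkTable (Nat.add (Nat.shiftLeft T 160) v) f = true := by
  rw [checkTable, withNat_eq, withNat_eq, Bool.and_eq_true, Bool.and_eq_true, Bool.or_eq_true,
    Nat.ble_eq, Nat.ble_eq, Nat.ble_eq, show Nat.sub _ _ = v from hv.symm] at h
  exact ⟨h.1.1, fun hf ↦ h.1.2.resolve_left hf.not_ge, h.2⟩

theorem IsTable.lt_of_checkTable {f T n : ℕ} (hT : IsTable T n) (h0 : n ≠ 0) (hf : f + n = 1601)
    (h : checkTable T f = true) {m : ℕ} (hnm : n ≤ m) (hm : m ≤ 1600) (hm' : 118 ≤ m) :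
    Fintype.card (Nat.Partition (m - 1)) ^ 3 * Fintype.card (Nat.Partition (m - 3)) <
      Fintype.card (Nat.Partition m) * Fintype.card (Nat.Partition (m - 2)) ^ 3 := by
  induction f generalizing T n with
  | zero => lia
  | succ f ih =>
    obtain ⟨hlt, hineq, hrec⟩ := checkTable_succ h (hT.card_eq h0 (by lia))
    rcases hnm.eq_or_lt with rfl | hnm
    · have := hineq (by lia)
      rwa [hT 0, hT 1, hT 2, if_pos (by lia), if_pos (by lia), if_pos (by lia)] at this
    · exact ih (hT.succ hlt) (by lia) (by lia) hrec hnm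

/-- A certified finite range of the third-difference inequality, in multiplicative form. -/
theorem card_partition_pow_three_mul_lt {m : ℕ} (hm : 118 ≤ m) (hm' : m ≤ 1600) :
    Fintype.card (Nat.Partition (m - 1)) ^ 3 * Fintype.card (Nat.Partition (m - 3)) <
      Fintype.card (Nat.Partition m) * Fintype.card (Nat.Partition (m - 2)) ^ 3 :=
  isTable_one.lt_of_checkTable one_ne_zero rfl checkTable_eq_true (by lia) hm' hm

theorem p_pos (n : ℕ) : 0 < p n := by
  unfold p; exact_mod_cast Fintype.card_pos

theorem third_difference_log_p_pos_of_le {n : ℕ} (hn : 116 ≤ n) (hn' : n ≤ 1598) :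
    0 < Real.log (p (n + 2)) - 3 * Real.log (p (n + 1)) + 3 * Real.log (p n)
      - Real.log (p (n - 1)) := by
  have h := card_partition_pow_three_mul_lt (m := n + 2) (by lia) (by lia)
  rw [show n + 2 - 1 = n + 1 by lia, show n + 2 - 3 = n - 1 by lia, show n + 2 - 2 = n by lia] at h
  have h' : p (n + 1) ^ 3 * p (n - 1) < p (n + 2) * p n ^ 3 := by unfold p; exact_mod_cast h
  have := p_pos (n + 1); have := p_pos (n - 1); have := p_pos (n + 2); have := p_pos n
  have := Real.log_lt_log (by positivity) h'
  rw [Real.log_mul (by positivity) (by positivity), Real.log_mul (by positivity) (by positivity),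
    Real.log_pow, Real.log_pow] at this
  push_cast at this
  linarith

/-- The generating function `∏ (1 - q ^ k)⁻¹` of the partition numbers. -/
noncomputable def partitionGen (q : ℂ) : ℂ := (∏' k : ℕ, (1 - q ^ (k + 1)))⁻¹

theorem one_div_re_pos {z : ℂ} (hz : 0 < z.re) : 0 < (1 / z).re := by
  have hz0 : z ≠ 0 := by rintro rfl; simp at hz
  rw [one_div, Complex.inv_re]
  exact div_pos hz (Complex.normSq_pos.mpr hz0)

theorem csqrt_sq_s4 (z : ℂ) : Complex.sqrt z ^ 2 = z := by
  simp [Complex.sqrt]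

theorem norm_csqrt_le_one {z : ℂ} (hz : ‖z‖ ≤ 1) : ‖Complex.sqrt z‖ ≤ 1 := by
  rw [← csqrt_sq_s4 z, norm_pow] at hz
  exact (sq_le_one_iff₀ (norm_nonneg _)).mp hz

theorem hasDerivAt_csqrt {z : ℂ} (hz : 0 < z.re) :
    HasDerivAt Complex.sqrt (1 / (2 * Complex.sqrt z)) z := by
  have hz0 : z ≠ 0 := by rintro rfl; simp at hz
  refine (Complex.hasDerivAt_sqrt (Or.inl hz)).congr_deriv ?_
  rw [Complex.sqrt, neg_div, Complex.cpow_neg, one_div (2 : ℂ)]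
  field_simp

theorem csqrt_I_mul {z : ℂ} (hz : 0 < z.re) :
    Complex.sqrt (Complex.I * z) = Complex.sqrt Complex.I * Complex.sqrt z := by
  have hz0 : z ≠ 0 := by rintro rfl; simp at hz
  have harg := Complex.abs_arg_lt_pi_div_two_iff.mpr (Or.inl hz)
  rw [abs_lt] at harg
  have hlog : Complex.log (Complex.I * z) = Complex.log Complex.I + Complex.log z :=
    Complex.log_mul Complex.I_ne_zero hz0 (by
      rw [Complex.arg_I]; constructor <;> linarith [Real.pi_pos])
  rw [Complex.sqrt, Complex.sqrt, Complex.sqrt,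
    Complex.cpow_def_of_ne_zero (mul_ne_zero Complex.I_ne_zero hz0),
    Complex.cpow_def_of_ne_zero Complex.I_ne_zero, Complex.cpow_def_of_ne_zero hz0,
    ← Complex.exp_add, hlog]
  ring_nf

/-- The transformation law of the Dedekind eta function, for the partition generating function. -/
theorem partitionGen_exp_neg {z : ℂ} (hz : 0 < z.re) :
    partitionGen (Complex.exp (-2 * π * z)) =
      Complex.sqrt z * Complex.exp (π / 12 * (1 / z - z)) *
        partitionGen (Complex.exp (-2 * π * (1 / z))) := by
  have hz0 : z ≠ 0 := by rintro rfl; simp at hz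
  have h := ModularForm.eta_comp_eq_csqrt_I_inv (x := Complex.I * z) (by simpa using hz)
  have hI : Complex.sqrt Complex.I ≠ 0 := by simp [Complex.sqrt]
  have hI2 := Complex.I_ne_zero
  have hs : Complex.sqrt z ≠ 0 := by simp [Complex.sqrt, hz0]
  have heta : ∀ w : ℂ, ModularForm.eta (Complex.I * w) =
      Complex.exp (-(π / 12 * w)) * (partitionGen (Complex.exp (-2 * π * w)))⁻¹ := fun w ↦ by
    rw [ModularForm.eta, partitionGen, inv_inv]
    simp only [ModularForm.eta_q_eq_pow, Function.Periodic.qParam]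
    have h1 : 2 * π * Complex.I * (Complex.I * w) = -2 * π * w := by
      linear_combination (2 * π * w) * Complex.I_sq
    push_cast
    rw [h1]
    congr 2
    ring
  have hinv : -1 / (Complex.I * z) = Complex.I * (1 / z) := by
    field_simp; simp
  simp only [Function.comp_apply, Pi.smul_apply, Pi.mul_apply, smul_eq_mul] at h
  rw [hinv, heta, heta, csqrt_I_mul hz] at h
  have hq : ∀ w : ℂ, 0 < w.re → partitionGen (Complex.exp (-2 * π * w)) ≠ 0 := fun w hw ↦ by
    refine inv_ne_zero (tprod_one_sub_pow_ne_zero ?_)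
    rw [Complex.norm_exp]
    simp
    positivity
  have h1 := hq z hz
  have h2 := hq (1 / z) (one_div_re_pos hz)
  have h3 : Complex.exp (π / 12 * (1 / z - z)) =
    Complex.exp (-(π / 12 * z)) / Complex.exp (-(π / 12 * (1 / z))) := by
    rw [← Complex.exp_sub]; congr 1; ring
  rw [h3]
  have h4 := Complex.exp_ne_zero (-(π / 12 * z))
  have h5 := Complex.exp_ne_zero (-(π / 12 * (1 / z)))
  generalize partitionGen (Complex.exp (-2 * π * z)) = a at *
  generalize partitionGen (Complex.exp (-2 * π * (1 / z))) = b at *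
  generalize Complex.exp (-(π / 12 * z)) = c at *
  generalize Complex.exp (-(π / 12 * (1 / z))) = d at *
  field_simp at h ⊢
  linear_combination h

/-- The sum `∑ p(n) exp (-2πnt)` over `n ≥ 1`. -/
noncomputable def partitionTail (t : ℝ) : ℝ :=
  ∑' n : ℕ, (Fintype.card (Nat.Partition (n + 1)) : ℝ) * rexp (-2 * π * t * (n + 1))

theorem norm_exp_neg_two_pi_lt_one {w : ℂ} (hw : 0 < w.re) : ‖Complex.exp (-2 * π * w)‖ < 1 := by
  rw [Complex.norm_exp]
  simp
  positivity

theorem norm_exp_neg_two_pi_pow (w : ℂ) (n : ℕ) :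
    ‖Complex.exp (-2 * π * w) ^ (n + 1)‖ = rexp (-2 * π * w.re * (n + 1)) := by
  rw [← Complex.exp_nat_mul, Complex.norm_exp]
  congr 1
  push_cast
  simp
  ring

theorem hasSum_partitionGen_sub_one {w : ℂ} (hw : 0 < w.re) :
    HasSum (fun n : ℕ ↦ (Fintype.card (Nat.Partition (n + 1)) : ℂ) *
      Complex.exp (-2 * π * w) ^ (n + 1)) (partitionGen (Complex.exp (-2 * π * w)) - 1) := by
  have h := hasSum_card_partition (norm_exp_neg_two_pi_lt_one hw)
  rw [← hasSum_nat_add_iff' 1] at h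
  simpa [partitionGen] using h

theorem norm_partition_term (w : ℂ) (n : ℕ) : ‖(Fintype.card (Nat.Partition (n + 1)) : ℂ) *
      Complex.exp (-2 * π * w) ^ (n + 1)‖ =
      (Fintype.card (Nat.Partition (n + 1)) : ℝ) * rexp (-2 * π * w.re * (n + 1)) := by
  rw [norm_mul, norm_exp_neg_two_pi_pow, Complex.norm_natCast]

theorem summable_partitionTail {t : ℝ} (ht : 0 < t) : Summable fun n : ℕ ↦
    (Fintype.card (Nat.Partition (n + 1)) : ℝ) * rexp (-2 * π * t * (n + 1)) := by
  have h := (hasSum_partitionGen_sub_one (w := (t : ℂ)) (by simpa)).summable.norm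
  simpa only [norm_partition_term, Complex.ofReal_re] using h

theorem norm_partitionGen_sub_one_le {w : ℂ} (hw : 0 < w.re) :
    ‖partitionGen (Complex.exp (-2 * π * w)) - 1‖ ≤ partitionTail w.re := by
  rw [← (hasSum_partitionGen_sub_one hw).tsum_eq]
  refine (norm_tsum_le_tsum_norm ?_).trans_eq ?_
  · simpa only [norm_partition_term] using summable_partitionTail hw
  · simp only [norm_partition_term, partitionTail]

theorem partitionGen_exp_neg_ofReal {t : ℝ} (ht : 0 < t) :
    partitionGen (Complex.exp (-2 * π * t)) = (1 + partitionTail t : ℝ) := by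
  have h := hasSum_partitionGen_sub_one (w := (t : ℂ)) (by simpa)
  rw [add_comm, Complex.ofReal_add, Complex.ofReal_one, ← sub_eq_iff_eq_add, ← h.tsum_eq,
    partitionTail, Complex.ofReal_tsum]
  congr 1
  ext n
  push_cast
  rw [← Complex.exp_nat_mul]
  push_cast
  congr 2
  ring

theorem partitionTail_nonneg (t : ℝ) : 0 ≤ partitionTail t :=
  tsum_nonneg fun n ↦ by positivity

theorem exp_mul_partitionTail_le {t : ℝ} (ht : 1 ≤ t) :
    rexp (π / 12 * t) * partitionTail t ≤ rexp (π / 12) * partitionTail 1 := by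
  rw [partitionTail, partitionTail, ← tsum_mul_left, ← tsum_mul_left]
  refine Summable.tsum_le_tsum (fun n ↦ ?_) ((summable_partitionTail (by linarith)).mul_left _)
    ((summable_partitionTail one_pos).mul_left _)
  rw [mul_left_comm, mul_left_comm (rexp (π / 12)), ← Real.exp_add, ← Real.exp_add]
  gcongr ?_ * rexp ?_
  have : 0 ≤ π * (t - 1) := mul_nonneg pi_pos.le (by linarith)
  have : (0 : ℝ) ≤ n := n.cast_nonneg
  nlinarith

theorem partitionTail_one_le : partitionTail 1 ≤ 1 := by
  set q : ℂ := Complex.exp (-2 * π * (1 : ℝ)) with hq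
  have hqn : ‖q‖ ≤ 1 / 4 := by
    rw [hq, Complex.norm_exp]
    have : rexp (-(2 * π)) ≤ 1 / 4 := by
      rw [Real.exp_neg, one_div]
      gcongr
      linarith [Real.add_one_le_exp (2 * π), Real.pi_gt_three]
    simpa using this
  have hsum : HasSum (fun n : ℕ ↦ ‖-q ^ (n + 1)‖) (‖q‖ / (1 - ‖q‖)) := by
    have := (hasSum_geometric_of_lt_one (norm_nonneg q) (by linarith)).mul_left ‖q‖
    simpa [pow_succ', div_eq_mul_inv] using this
  have hle : ‖q‖ / (1 - ‖q‖) ≤ 1 / 3 := by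
    rw [div_le_div_iff₀ (by linarith) (by norm_num)]; linarith
  have hexp : rexp (1 / 3) - 1 ≤ 1 / 2 := by
    have := Real.exp_bound_div_one_sub_of_interval (x := 1 / 3) (by norm_num) (by norm_num)
    norm_num at this ⊢
    linarith
  have hprod : ‖∏' n : ℕ, (1 - q ^ (n + 1)) - 1‖ ≤ 1 / 2 := by
    have hm := ModularForm.multipliable_one_sub_pow (q := q) (by linarith)
    have ht := (hm.hasProd.sub_const 1).norm
    refine le_of_tendsto ht (Filter.Eventually.of_forall fun s ↦ ?_)
    simp only [sub_eq_add_neg (1 : ℂ)]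
    refine (s.norm_prod_one_add_sub_one_le _).trans (le_trans ?_ hexp)
    gcongr
    exact (sum_le_hasSum s (fun _ _ ↦ norm_nonneg _) hsum).trans hle
  have h := partitionGen_exp_neg_ofReal one_pos
  have h1 : ‖partitionGen q‖ ≤ 2 := by
    have h2 : 1 - ‖∏' n : ℕ, (1 - q ^ (n + 1))‖ ≤ 1 / 2 := by
      refine le_trans ?_ hprod
      rw [norm_sub_rev]
      simpa using norm_sub_norm_le (1 : ℂ) (∏' n : ℕ, (1 - q ^ (n + 1)))
    rw [partitionGen, norm_inv]
    exact inv_le_of_inv_le₀ (by norm_num) (by linarith)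
  rw [h, Complex.norm_real, Real.norm_of_nonneg (by linarith [partitionTail_nonneg 1])] at h1
  linarith

theorem exp_mul_partitionTail_le_two_mul {t s : ℝ} (ht : 0 < t) (hs : 1 ≤ s) (hts : 1 / t ≤ s) :
    rexp (π / 12 * t) * partitionTail t ≤ 2 * rexp (π / 12 * s) := by
  have hbig : ∀ t : ℝ, 1 ≤ t → rexp (π / 12 * t) * partitionTail t ≤ rexp (π / 12) := fun t ht ↦
    (exp_mul_partitionTail_le ht).trans
      (mul_le_of_le_one_right (by positivity) partitionTail_one_le)
  rcases le_total 1 t with h1 | h1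
  · refine (hbig t h1).trans ?_
    have : rexp (π / 12) ≤ rexp (π / 12 * s) := by
      gcongr; nlinarith [Real.pi_pos]
    linarith [Real.exp_pos (π / 12 * s)]
  · have h2 : 1 ≤ 1 / t := by rwa [le_div_iff₀ ht, one_mul]
    have h3 : partitionTail (1 / t) ≤ 1 := by
      have h4 : rexp (π / 12) ≤ rexp (π / 12 * (1 / t)) := by
        gcongr; nlinarith [Real.pi_pos]
      have h5 := hbig _ h2
      have := Real.exp_pos (π / 12 * (1 / t))
      nlinarith
    have h := congrArg norm (partitionGen_exp_neg (z := (t : ℂ)) (by simpa))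
    rw [partitionGen_exp_neg_ofReal ht, ← Complex.ofReal_one, ← Complex.ofReal_div,
      partitionGen_exp_neg_ofReal (by positivity), norm_mul, norm_mul, Complex.norm_exp,
      Complex.norm_real, Complex.norm_real, Real.norm_of_nonneg (by linarith [partitionTail_nonneg t]),
      Real.norm_of_nonneg (by linarith [partitionTail_nonneg (1 / t)])] at h
    have hsq : ‖Complex.sqrt t‖ ≤ 1 := norm_csqrt_le_one (by
      rwa [Complex.norm_real, Real.norm_of_nonneg ht.le])
    have hre : ((π : ℂ) / 12 * ((1 / t : ℝ) - (t : ℂ))).re = π / 12 * (1 / t - t) := by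
      rw [← Complex.ofReal_sub]
      exact_mod_cast Complex.ofReal_re _
    rw [hre] at h
    have hexp : rexp (π / 12 * t) * rexp (π / 12 * (1 / t - t)) ≤ rexp (π / 12 * s) := by
      rw [← Real.exp_add]
      gcongr
      nlinarith [Real.pi_pos]
    have h6 : partitionTail t ≤ rexp (π / 12 * (1 / t - t)) * 2 := by
      calc partitionTail t ≤ 1 + partitionTail t := by linarith
        _ = _ := h
        _ ≤ 1 * rexp (π / 12 * (1 / t - t)) * 2 := by
          gcongr
          · have := partitionTail_nonneg (1 / t); positivity
          · linarith
        _ = _ := by ring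
    calc _ ≤ rexp (π / 12 * t) * (rexp (π / 12 * (1 / t - t)) * 2) := by gcongr
      _ = rexp (π / 12 * t) * rexp (π / 12 * (1 / t - t)) * 2 := by ring
      _ ≤ _ := by linarith

/-- The main term of the integrand in the circle method. -/
noncomputable def mainIntegrand (A B : ℝ) (z : ℂ) : ℂ :=
  Complex.sqrt z * Complex.exp (A * z + B / z)

theorem continuous_mainIntegrand_line (A B : ℝ) {y : ℝ} (hy : 0 < y) :
    Continuous fun x : ℝ ↦ mainIntegrand A B (y + x * Complex.I) := by
  refine continuous_iff_continuousAt.mpr fun x ↦ ?_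
  have hre : 0 < (y + x * Complex.I : ℂ).re := by simpa
  have hz0 : (y + x * Complex.I : ℂ) ≠ 0 := fun h ↦ by rw [h] at hre; simp at hre
  have hm : ContinuousAt (mainIntegrand A B) (y + x * Complex.I) :=
    (hasDerivAt_csqrt hre).continuousAt.mul (by fun_prop (disch := exact hz0))
  exact ContinuousAt.comp (f := fun x : ℝ ↦ (y + x * Complex.I : ℂ)) hm (by fun_prop)

/-- The partition numbers are approximated by the integral of `mainIntegrand` over a segment. -/
theorem norm_card_partition_sub_integral_le (n : ℕ) {y : ℝ} (hy : 0 < y) (hy' : y ≤ 1 / 4) :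
    ‖(Fintype.card (Nat.Partition n) : ℂ) - ∫ x in (-(1 / 2) : ℝ)..1 / 2,
      mainIntegrand (2 * π * (n - 1 / 24)) (π / 12) (y + x * Complex.I)‖ ≤
      2 * rexp (2 * π * (n - 1 / 24) * y + π / 12 * (1 / (4 * y) + y)) := by
  have hcard := card_partition_eq_integral hy n
  have hre : ∀ x : ℝ, ((y : ℂ) + x * Complex.I).re = y := fun x ↦ by simp
  have hint := intervalIntegral.intervalIntegrable_of_integral_ne_zero (hcard ▸
    Nat.cast_ne_zero.mpr Fintype.card_ne_zero)
  have hint' : IntervalIntegrable (fun x : ℝ ↦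
      mainIntegrand (2 * π * (n - 1 / 24)) (π / 12) (y + x * Complex.I)) MeasureTheory.volume
      (-(1 / 2)) (1 / 2) := (continuous_mainIntegrand_line _ _ hy).intervalIntegrable _ _
  rw [hcard, ← intervalIntegral.integral_sub hint hint']
  refine (intervalIntegral.norm_integral_le_of_norm_le_const (C := 2 * rexp (2 * π * (n - 1 / 24) * y
    + π / 12 * (1 / (4 * y) + y))) fun x hx ↦ ?_).trans_eq (by norm_num)
  rw [Set.uIoc_of_le (by norm_num)] at hx
  have hx2 : x ^ 2 ≤ 1 / 4 := by nlinarith [hx.1, hx.2]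
  have hz := hre x
  set z : ℂ := (y : ℂ) + x * Complex.I with hzdef
  have hzre : 0 < z.re := by rwa [hz]
  have hnsq : Complex.normSq z = y ^ 2 + x ^ 2 := by
    rw [Complex.normSq_apply]; simp [hzdef]; ring
  have hinv : (1 / z).re = y / (y ^ 2 + x ^ 2) := by rw [one_div, Complex.inv_re, hz, hnsq]
  have heq : (∏' k : ℕ, (1 - Complex.exp (-2 * π * z) ^ (k + 1)))⁻¹ * Complex.exp (2 * π * n * z) -
      mainIntegrand (2 * π * (n - 1 / 24)) (π / 12) z = Complex.sqrt z *
      Complex.exp ((2 * π * (n - 1 / 24) : ℝ) * z + (π / 12 : ℝ) * (1 / z)) *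
        (partitionGen (Complex.exp (-2 * π * (1 / z))) - 1) := by
    change partitionGen _ * _ - _ = _
    have : Complex.exp ((2 * π * (n - 1 / 24) : ℝ) * z + (π / 12 : ℝ) / z) =
        Complex.exp (π / 12 * (1 / z - z)) * Complex.exp (2 * π * n * z) := by
      rw [← Complex.exp_add]
      congr 1
      push_cast
      ring
    rw [partitionGen_exp_neg hzre, mainIntegrand, mul_one_div ((π / 12 : ℝ) : ℂ), this]
    ring
  rw [heq, norm_mul, norm_mul, Complex.norm_exp, Complex.add_re, Complex.re_ofReal_mul,
    Complex.re_ofReal_mul, hz, Real.exp_add]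
  have hpos := one_div_re_pos hzre
  have hbound := exp_mul_partitionTail_le_two_mul (s := 1 / (4 * y) + y) hpos
    (by
      have : 1 ≤ 1 / (4 * y) := by rw [le_div_iff₀ (by positivity)]; linarith
      linarith)
    (by
      rw [hinv, one_div_div, div_add' _ _ _ (by positivity), div_le_div_iff₀ hy (by positivity)]
      nlinarith)
  have hnorm : ‖z‖ ≤ 1 := by
    rw [← sq_le_one_iff₀ (norm_nonneg _), ← Complex.normSq_eq_norm_sq, hnsq]
    nlinarith
  have h1 := norm_csqrt_le_one hnorm
  have h2 := norm_partitionGen_sub_one_le hpos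
  calc _ ≤ 1 * (rexp (2 * π * (n - 1 / 24) * y) * rexp (π / 12 * (1 / z).re)) *
        partitionTail (1 / z).re := by gcongr
    _ = rexp (2 * π * (n - 1 / 24) * y) * (rexp (π / 12 * (1 / z).re) *
        partitionTail (1 / z).re) := by ring
    _ ≤ rexp (2 * π * (n - 1 / 24) * y) * (2 * rexp (π / 12 * (1 / (4 * y) + y))) := by gcongr
    _ = _ := by rw [Real.exp_add]; ring

/-- The integral `∫ i exp ((v + it)²) dt` over `t > 0`, a primitive of `-exp (v²)` that decays in
the upper half plane. -/
noncomputable def gaussTail (v : ℂ) : ℂ :=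
  ∫ t in Set.Ioi (0 : ℝ), Complex.I * Complex.exp ((v + Complex.I * t) ^ 2)

theorem norm_exp_add_I_mul_sq (v : ℂ) (t : ℝ) :
    ‖Complex.exp ((v + Complex.I * t) ^ 2)‖ =
      ‖Complex.exp (v ^ 2)‖ * rexp (-2 * v.im * t) * rexp (-t ^ 2) := by
  rw [Complex.norm_exp, Complex.norm_exp, ← Real.exp_add, ← Real.exp_add]
  congr 1
  simp [pow_two]
  ring

theorem hasDerivAt_exp_add_I_mul_sq (v : ℂ) (t : ℝ) :
    HasDerivAt (fun t : ℝ ↦ Complex.exp ((v + Complex.I * t) ^ 2))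
      (Complex.I * (Complex.exp ((v + Complex.I * t) ^ 2) * (2 * (v + Complex.I * t)))) t := by
  have h : HasDerivAt (fun w : ℂ ↦ Complex.exp ((v + Complex.I * w) ^ 2))
      (Complex.exp ((v + Complex.I * t) ^ 2) * (2 * (v + Complex.I * t) ^ 1 * (Complex.I * 1)))
      (t : ℂ) :=
    ((((hasDerivAt_id (t : ℂ)).const_mul Complex.I).const_add v).pow 2).cexp
  convert h.comp_ofReal using 1
  ring

theorem norm_exp_add_I_mul_sq_le {v : ℂ} {c t : ℝ} (hv : ‖v‖ ≤ c) (ht : 0 ≤ t) :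
    ‖Complex.exp ((v + Complex.I * t) ^ 2)‖ * (1 + 2 * ‖v + Complex.I * t‖) ≤
      rexp (c ^ 2 + 2 * c + 2 * (c + 1) ^ 2) * rexp (-(1 / 2) * t ^ 2) := by
  have h1 : ‖v + Complex.I * t‖ ≤ c + t := by
    refine (norm_add_le _ _).trans ?_
    simp [abs_of_nonneg ht, hv]
  have h2 : 1 + 2 * ‖v + Complex.I * t‖ ≤ rexp (2 * (c + t)) := by
    linarith [Real.add_one_le_exp (2 * (c + t))]
  have h3 : ‖Complex.exp (v ^ 2)‖ ≤ rexp (c ^ 2) := by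
    refine (Complex.norm_exp_le_exp_norm _).trans ?_
    rw [norm_pow]
    gcongr
  have h4 : rexp (-2 * v.im * t) ≤ rexp (2 * c * t) := by
    rw [Real.exp_le_exp]
    nlinarith [(abs_le.mp ((Complex.abs_im_le_norm v).trans hv)).1]
  rw [norm_exp_add_I_mul_sq]
  calc _ ≤ rexp (c ^ 2) * rexp (2 * c * t) * rexp (-t ^ 2) * rexp (2 * (c + t)) := by gcongr
    _ ≤ _ := by
      rw [← Real.exp_add, ← Real.exp_add, ← Real.exp_add, ← Real.exp_add]
      rw [Real.exp_le_exp]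
      nlinarith [sq_nonneg (t - 2 * (c + 1))]

theorem integrable_exp_neg_half_mul_sq_Ioi (K : ℝ) : MeasureTheory.IntegrableOn
    (fun t : ℝ ↦ K * rexp (-(1 / 2) * t ^ 2)) (Set.Ioi 0) :=
  ((integrable_exp_neg_mul_sq (by norm_num)).const_mul K).integrableOn

theorem tendsto_exp_add_I_mul_sq (v : ℂ) :
    Filter.Tendsto (fun t : ℝ ↦ Complex.exp ((v + Complex.I * t) ^ 2)) Filter.atTop (nhds 0) := by
  rw [tendsto_zero_iff_norm_tendsto_zero]
  refine squeeze_zero' (Filter.Eventually.of_forall fun _ ↦ norm_nonneg _)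
    (g := fun t ↦ rexp (‖v‖ ^ 2 + 2 * ‖v‖ + 2 * (‖v‖ + 1) ^ 2) * rexp (-(1 / 2) * t ^ 2)) ?_ ?_
  · filter_upwards [Filter.eventually_ge_atTop 0] with t ht
    refine le_trans ?_ (norm_exp_add_I_mul_sq_le le_rfl ht)
    exact le_mul_of_one_le_right (norm_nonneg _) (by linarith [norm_nonneg (v + Complex.I * t)])
  · rw [← mul_zero (rexp (‖v‖ ^ 2 + 2 * ‖v‖ + 2 * (‖v‖ + 1) ^ 2))]
    refine Filter.Tendsto.const_mul _ (Real.tendsto_exp_atBot.comp ?_)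
    exact (Filter.tendsto_pow_atTop two_ne_zero).const_mul_atTop_of_neg (by norm_num)

theorem hasDerivAt_gaussTail (v : ℂ) : HasDerivAt gaussTail (-Complex.exp (v ^ 2)) v := by
  set K := rexp ((‖v‖ + 1) ^ 2 + 2 * (‖v‖ + 1) + 2 * (‖v‖ + 1 + 1) ^ 2)
  have hmem : ∀ {w : ℂ}, w ∈ Metric.ball v 1 → ‖w‖ ≤ ‖v‖ + 1 := fun {w} hw ↦ by
    rw [mem_ball_iff_norm] at hw
    linarith [norm_sub_norm_le w v]
  have hmeas : ∀ w : ℂ, Continuous fun t : ℝ ↦ Complex.I * Complex.exp ((w + Complex.I * t) ^ 2) :=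
    fun w ↦ by fun_prop
  have hmeas' : Continuous fun t : ℝ ↦
    Complex.I * (Complex.exp ((v + Complex.I * t) ^ 2) * (2 * (v + Complex.I * t))) := by fun_prop
  have hbound' : ∀ t ∈ Set.Ioi (0 : ℝ), ∀ w ∈ Metric.ball v 1,
      ‖Complex.I * (Complex.exp ((w + Complex.I * t) ^ 2) * (2 * (w + Complex.I * t)))‖ ≤
        K * rexp (-(1 / 2) * t ^ 2) := fun t ht w hw ↦ by
    refine le_trans ?_ (norm_exp_add_I_mul_sq_le (hmem hw) (le_of_lt ht))
    rw [norm_mul, norm_mul, norm_mul, Complex.norm_I, one_mul, Complex.norm_two]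
    gcongr
    linarith
  have hint' : MeasureTheory.IntegrableOn (fun t : ℝ ↦ Complex.I *
      (Complex.exp ((v + Complex.I * t) ^ 2) * (2 * (v + Complex.I * t)))) (Set.Ioi 0) := by
    refine MeasureTheory.Integrable.mono' (integrable_exp_neg_half_mul_sq_Ioi K)
      hmeas'.aestronglyMeasurable ?_
    filter_upwards [MeasureTheory.ae_restrict_mem measurableSet_Ioi] with t ht
    exact hbound' t ht v (Metric.mem_ball_self one_pos)
  have h := hasDerivAt_integral_of_dominated_loc_of_deriv_le
    (μ := MeasureTheory.volume.restrict (Set.Ioi (0 : ℝ))) (x₀ := v)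
    (F := fun (w : ℂ) (t : ℝ) ↦ Complex.I * Complex.exp ((w + Complex.I * t) ^ 2))
    (F' := fun (w : ℂ) (t : ℝ) ↦
      Complex.I * (Complex.exp ((w + Complex.I * t) ^ 2) * (2 * (w + Complex.I * t))))
    (bound := fun t ↦ K * rexp (-(1 / 2) * t ^ 2)) (Metric.ball_mem_nhds v one_pos)
    (Filter.Eventually.of_forall fun w ↦ (hmeas w).aestronglyMeasurable)
    (by
      refine MeasureTheory.Integrable.mono' (integrable_exp_neg_half_mul_sq_Ioi K)
        (hmeas v).aestronglyMeasurable ?_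
      filter_upwards [MeasureTheory.ae_restrict_mem measurableSet_Ioi] with t ht
      refine le_trans ?_ (norm_exp_add_I_mul_sq_le (by linarith) (le_of_lt ht))
      rw [norm_mul, Complex.norm_I, one_mul]
      exact le_mul_of_one_le_right (norm_nonneg _) (by linarith [norm_nonneg (v + Complex.I * t)]))
    hmeas'.aestronglyMeasurable
    (by
      filter_upwards [MeasureTheory.ae_restrict_mem measurableSet_Ioi] with t ht w hw
      exact hbound' t ht w hw)
    (integrable_exp_neg_half_mul_sq_Ioi K)
    (by
      filter_upwards with t w hw
      have := ((((hasDerivAt_id w).add_const (Complex.I * t)).pow 2).cexp).const_mul Complex.I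
      exact this.congr_deriv (by simp))
  have hFTC := MeasureTheory.integral_Ioi_of_hasDerivAt_of_tendsto' (a := 0)
    (fun t _ ↦ hasDerivAt_exp_add_I_mul_sq v t) hint' (tendsto_exp_add_I_mul_sq v)
  exact h.2.congr_deriv (by rw [hFTC]; simp)

theorem gaussTail_zero : gaussTail 0 = Complex.I * (√π / 2 : ℝ) := by
  have h := integral_gaussian_Ioi 1
  rw [gaussTail, MeasureTheory.integral_const_mul, ← div_one π, ← h, ← integral_complex_ofReal]
  congr 2
  ext t
  rw [zero_add, mul_pow]
  simp

theorem gaussTail_add_gaussTail_neg (v : ℂ) : gaussTail v + gaussTail (-v) = Complex.I * √π := by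
  have hd : ∀ w, HasDerivAt (fun w ↦ gaussTail w + gaussTail (-w)) 0 w := fun w ↦ by
    have := (hasDerivAt_gaussTail w).add ((hasDerivAt_gaussTail (-w)).scomp w (hasDerivAt_neg w))
    exact this.congr_deriv (by simp)
  have := is_const_of_deriv_eq_zero (fun w ↦ (hd w).differentiableAt) (fun w ↦ (hd w).deriv) v 0
  simp only [neg_zero, gaussTail_zero] at this
  rw [this]
  push_cast
  ring

theorem norm_gaussTail_le {v : ℂ} (hv : 0 ≤ v.im) :
    ‖gaussTail v‖ ≤ √π / 2 * ‖Complex.exp (v ^ 2)‖ := by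
  have h := integral_gaussian_Ioi 1
  rw [div_one] at h
  rw [gaussTail, mul_comm, ← h, ← MeasureTheory.integral_const_mul]
  refine MeasureTheory.norm_integral_le_of_norm_le
    ((integrable_exp_neg_mul_sq one_pos).const_mul _).integrableOn ?_
  filter_upwards [MeasureTheory.ae_restrict_mem measurableSet_Ioi] with t ht
  rw [norm_mul, Complex.norm_I, one_mul, norm_exp_add_I_mul_sq, neg_one_mul, mul_assoc]
  refine mul_le_mul_of_nonneg_left (mul_le_of_le_one_left (Real.exp_pos _).le ?_) (norm_nonneg _)
  rw [Real.exp_le_one_iff]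
  nlinarith [Set.mem_Ioi.mp ht]

/-- A primitive of `mainIntegrand (a ^ 2) (b ^ 2)`. -/
noncomputable def mainPrimitive (a b : ℝ) (z : ℂ) : ℂ :=
  Complex.sqrt z * Complex.exp ((a ^ 2 : ℝ) * z + (b ^ 2 : ℝ) / z) / a ^ 2
    - (b / a ^ 2 - 1 / (2 * a ^ 3)) * Complex.exp (2 * a * b) *
      gaussTail (a * Complex.sqrt z - b / Complex.sqrt z)
    + (b / a ^ 2 + 1 / (2 * a ^ 3)) * Complex.exp (-(2 * a * b)) *
      gaussTail (a * Complex.sqrt z + b / Complex.sqrt z)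

theorem exp_sq_sub (a b : ℝ) {z : ℂ} (hz : z ≠ 0) : Complex.exp (2 * a * b) *
    Complex.exp ((a * Complex.sqrt z - b / Complex.sqrt z) ^ 2) =
      Complex.exp ((a ^ 2 : ℝ) * z + (b ^ 2 : ℝ) / z) := by
  rw [← Complex.exp_add]
  congr 1
  have hW : Complex.sqrt z ≠ 0 := by simpa [Complex.sqrt]
  nth_rw 3 4 [← csqrt_sq_s4 z]
  push_cast
  field_simp
  ring

theorem exp_sq_add (a b : ℝ) {z : ℂ} (hz : z ≠ 0) : Complex.exp (-(2 * a * b)) *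
    Complex.exp ((a * Complex.sqrt z + b / Complex.sqrt z) ^ 2) =
      Complex.exp ((a ^ 2 : ℝ) * z + (b ^ 2 : ℝ) / z) := by
  rw [← Complex.exp_add]
  congr 1
  have hW : Complex.sqrt z ≠ 0 := by simpa [Complex.sqrt]
  nth_rw 3 4 [← csqrt_sq_s4 z]
  push_cast
  field_simp
  ring

theorem hasDerivAt_mainPrimitive {a b : ℝ} (ha : a ≠ 0) {z : ℂ} (hz : 0 < z.re) :
    HasDerivAt (mainPrimitive a b) (mainIntegrand (a ^ 2) (b ^ 2) z) z := by
  have hz0 : z ≠ 0 := by rintro rfl; simp at hz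
  have hW : Complex.sqrt z ≠ 0 := by simpa [Complex.sqrt]
  have hs := hasDerivAt_csqrt hz
  have hΦ : HasDerivAt (fun z : ℂ ↦ (a ^ 2 : ℝ) * z + (b ^ 2 : ℝ) / z)
      ((a ^ 2 : ℝ) * 1 + (0 * z - (b ^ 2 : ℝ) * 1) / z ^ 2) z :=
    ((hasDerivAt_id z).const_mul _).add ((hasDerivAt_const z _).div (hasDerivAt_id z) hz0)
  have hinv := (hasDerivAt_const z (b : ℂ)).div hs hW
  have hu := (hasDerivAt_gaussTail _).comp z ((hs.const_mul (a : ℂ)).sub hinv)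
  have hv := (hasDerivAt_gaussTail _).comp z ((hs.const_mul (a : ℂ)).add hinv)
  have h := (((hs.mul hΦ.cexp).div_const ((a : ℂ) ^ 2)).sub
    (hu.const_mul ((b / a ^ 2 - 1 / (2 * a ^ 3)) * Complex.exp (2 * a * b)))).add
    (hv.const_mul ((b / a ^ 2 + 1 / (2 * a ^ 3)) * Complex.exp (-(2 * a * b))))
  refine h.congr_deriv ?_
  have e1 := exp_sq_sub a b hz0
  have e2 := exp_sq_add a b hz0
  simp only [Pi.sub_apply, Pi.add_apply, Pi.div_apply]
  rw [mainIntegrand]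
  have ha' : (a : ℂ) ≠ 0 := by exact_mod_cast ha
  have hm := Complex.exp_ne_zero (2 * a * b)
  rw [Complex.exp_neg] at e2 ⊢
  generalize Complex.exp ((a * Complex.sqrt z - b / Complex.sqrt z) ^ 2) = X at e1 ⊢
  generalize Complex.exp ((a * Complex.sqrt z + b / Complex.sqrt z) ^ 2) = Y at e2 ⊢
  generalize Complex.exp ((a ^ 2 : ℝ) * z + (b ^ 2 : ℝ) / z) = E at e1 e2 ⊢
  generalize Complex.exp (2 * a * b) = m at e1 e2 hm ⊢
  obtain rfl : X = E / m := by rw [← e1]; field_simp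
  obtain rfl : Y = E * m := by rw [← e2]; field_simp
  have hz2 := csqrt_sq_s4 z
  generalize Complex.sqrt z = W at hW hz2 ⊢
  subst hz2
  push_cast
  field_simp
  ring

theorem csqrt_im_nonneg {z : ℂ} (hz : 0 ≤ z.im) : 0 ≤ (Complex.sqrt z).im := by
  rw [Complex.sqrt_eq_real_add_ite, if_pos hz]
  simp
  positivity

theorem csqrt_im_nonpos {z : ℂ} (hz : z.im < 0) : (Complex.sqrt z).im ≤ 0 := by
  rw [Complex.sqrt_eq_real_add_ite, if_neg hz.not_ge]
  simp
  positivity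

theorem im_mul_sub_div (a b : ℝ) (w : ℂ) :
    (a * w - b / w).im = w.im * (a + b / ‖w‖ ^ 2) := by
  rw [← Complex.normSq_eq_norm_sq, Complex.sub_im, div_eq_mul_inv (b : ℂ), Complex.im_ofReal_mul,
    Complex.im_ofReal_mul, Complex.inv_im]
  ring

theorem im_mul_add_div (a b : ℝ) (w : ℂ) :
    (a * w + b / w).im = w.im * (a - b / ‖w‖ ^ 2) := by
  rw [← Complex.normSq_eq_norm_sq, Complex.add_im, div_eq_mul_inv (b : ℂ), Complex.im_ofReal_mul,
    Complex.im_ofReal_mul, Complex.inv_im]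
  ring

theorem norm_csqrt_sq (z : ℂ) : ‖Complex.sqrt z‖ ^ 2 = ‖z‖ := by
  rw [← norm_pow, csqrt_sq_s4]

theorem norm_exp_mul_gaussTail_le {w s E : ℂ} (hs : 0 ≤ s.im)
    (h : w * Complex.exp (s ^ 2) = E) : ‖w * gaussTail s‖ ≤ √π / 2 * ‖E‖ := by
  rw [norm_mul, ← h, norm_mul, mul_left_comm]
  gcongr
  exact norm_gaussTail_le hs

theorem norm_mainPrimitive_sub_le {a b : ℝ} (ha : 0 < a) (hb : 0 < b) {z z' : ℂ} {R : ℝ}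
    (hz : 0 ≤ z.im) (hz' : z'.im < 0) (hab : b ≤ a * ‖z‖) (hab' : b ≤ a * ‖z'‖)
    (h1 : ‖z‖ ≤ 1) (h1' : ‖z'‖ ≤ 1)
    (hR : ((a ^ 2 : ℝ) * z + (b ^ 2 : ℝ) / z).re ≤ R)
    (hR' : ((a ^ 2 : ℝ) * z' + (b ^ 2 : ℝ) / z').re ≤ R) :
    ‖mainPrimitive a b z - mainPrimitive a b z' -
      Complex.I * (√π * (b / a ^ 2 - 1 / (2 * a ^ 3)) * rexp (2 * a * b) : ℝ)‖ ≤
      (2 + 2 * √π * (b + 1 / (2 * a))) / a ^ 2 * rexp R +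
      √π * (b / a ^ 2 + 1 / (2 * a ^ 3)) * rexp (-(2 * a * b)) := by
  set β : ℝ := b / a ^ 2 - 1 / (2 * a ^ 3) with hβ
  set γ : ℝ := b / a ^ 2 + 1 / (2 * a ^ 3) with hγ
  have hγ0 : 0 < γ := by positivity
  have hβγ : |β| ≤ γ := by
    have h1 : 0 < b / a ^ 2 := by positivity
    have h2 : 0 < 1 / (2 * a ^ 3) := by positivity
    rw [abs_le]; constructor <;> linarith
  have hpos : 0 < ‖z‖ := pos_of_mul_pos_right (hb.trans_le hab) ha.le
  have hpos' : 0 < ‖z'‖ := pos_of_mul_pos_right (hb.trans_le hab') ha.le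
  have hz0 : z ≠ 0 := norm_pos_iff.mp hpos
  have hz0' : z' ≠ 0 := norm_pos_iff.mp hpos'
  have hfac : 0 ≤ a - b / ‖Complex.sqrt z‖ ^ 2 := by
    rw [norm_csqrt_sq, sub_nonneg, div_le_iff₀ hpos]; exact hab
  have hfac' : 0 ≤ a - b / ‖Complex.sqrt z'‖ ^ 2 := by
    rw [norm_csqrt_sq, sub_nonneg, div_le_iff₀ hpos']; exact hab'
  have hW := csqrt_im_nonneg hz
  have hW' := csqrt_im_nonpos hz'
  have hu := norm_exp_mul_gaussTail_le (by rw [im_mul_sub_div]; positivity) (exp_sq_sub a b hz0)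
  have hv := norm_exp_mul_gaussTail_le (by rw [im_mul_add_div]; positivity) (exp_sq_add a b hz0)
  have hu' := norm_exp_mul_gaussTail_le (w := Complex.exp (2 * a * b))
    (s := -(a * Complex.sqrt z' - b / Complex.sqrt z'))
    (E := Complex.exp ((a ^ 2 : ℝ) * z' + (b ^ 2 : ℝ) / z'))
    (by
      rw [Complex.neg_im, im_mul_sub_div, ← neg_mul]
      exact mul_nonneg (by linarith) (by positivity))
    (by rw [neg_sq]; exact exp_sq_sub a b hz0')
  have hv' := norm_exp_mul_gaussTail_le (w := Complex.exp (-(2 * a * b)))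
    (s := -(a * Complex.sqrt z' + b / Complex.sqrt z'))
    (E := Complex.exp ((a ^ 2 : ℝ) * z' + (b ^ 2 : ℝ) / z'))
    (by
      rw [Complex.neg_im, im_mul_add_div, ← neg_mul]
      exact mul_nonneg (by linarith) hfac')
    (by rw [neg_sq]; exact exp_sq_add a b hz0')
  have hE : ‖Complex.exp ((a ^ 2 : ℝ) * z + (b ^ 2 : ℝ) / z)‖ ≤ rexp R := by
    rw [Complex.norm_exp]; gcongr
  have hE' : ‖Complex.exp ((a ^ 2 : ℝ) * z' + (b ^ 2 : ℝ) / z')‖ ≤ rexp R := by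
    rw [Complex.norm_exp]; gcongr
  have hru := gaussTail_add_gaussTail_neg (a * Complex.sqrt z' - b / Complex.sqrt z')
  have hrv := gaussTail_add_gaussTail_neg (a * Complex.sqrt z' + b / Complex.sqrt z')
  have hn := norm_csqrt_le_one h1
  have hn' := norm_csqrt_le_one h1'
  have hβc : (b / a ^ 2 - 1 / (2 * a ^ 3) : ℂ) = β := by rw [hβ]; push_cast; rfl
  have hγc : (b / a ^ 2 + 1 / (2 * a ^ 3) : ℂ) = γ := by rw [hγ]; push_cast; rfl
  unfold mainPrimitive
  rw [hβc, hγc]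
  set E := Complex.exp ((a ^ 2 : ℝ) * z + (b ^ 2 : ℝ) / z)
  set E' := Complex.exp ((a ^ 2 : ℝ) * z' + (b ^ 2 : ℝ) / z')
  set m := Complex.exp (2 * a * b) with hm
  set k := Complex.exp (-(2 * a * b)) with hk
  have hmr : (rexp (2 * a * b) : ℂ) = m := by rw [hm]; push_cast; rfl
  have hkr : (rexp (-(2 * a * b)) : ℂ) = k := by rw [hk]; push_cast; rfl
  set Hu := gaussTail (a * Complex.sqrt z - b / Complex.sqrt z)
  set Hv := gaussTail (a * Complex.sqrt z + b / Complex.sqrt z)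
  set Hu' := gaussTail (-(a * Complex.sqrt z' - b / Complex.sqrt z'))
  set Hv' := gaussTail (-(a * Complex.sqrt z' + b / Complex.sqrt z'))
  rw [eq_sub_of_add_eq hru, eq_sub_of_add_eq hrv]
  have hsplit : Complex.sqrt z * E / a ^ 2 - β * m * Hu + γ * k * Hv -
      (Complex.sqrt z' * E' / a ^ 2 - β * m * (Complex.I * √π - Hu') +
        γ * k * (Complex.I * √π - Hv')) - Complex.I * (√π * β * rexp (2 * a * b) : ℝ) =
      (Complex.sqrt z * E - Complex.sqrt z' * E') / (a ^ 2 : ℝ) - (β : ℝ) * (m * Hu + m * Hu')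
      + (γ : ℝ) * (k * Hv + k * Hv') - Complex.I * (√π * γ * rexp (-(2 * a * b)) : ℝ) := by
    push_cast
    rw [← hmr, ← hkr]
    push_cast
    ring
  rw [hsplit]
  have b1 : ‖(Complex.sqrt z * E - Complex.sqrt z' * E') / (a ^ 2 : ℝ)‖ ≤ 2 * rexp R / a ^ 2 := by
    rw [norm_div, Complex.norm_real, Real.norm_of_nonneg (by positivity)]
    gcongr
    refine (norm_sub_le _ _).trans ?_
    rw [norm_mul, norm_mul]
    nlinarith [norm_nonneg E, norm_nonneg E', norm_nonneg (Complex.sqrt z),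
      norm_nonneg (Complex.sqrt z')]
  have hsπ : 0 ≤ √π := Real.sqrt_nonneg _
  have b2 : ‖(β : ℂ) * (m * Hu + m * Hu')‖ ≤ γ * (√π * rexp R) := by
    rw [norm_mul, Complex.norm_real, Real.norm_eq_abs]
    gcongr
    refine (norm_add_le _ _).trans ?_
    nlinarith [mul_le_mul_of_nonneg_left hE hsπ, mul_le_mul_of_nonneg_left hE' hsπ]
  have b3 : ‖(γ : ℂ) * (k * Hv + k * Hv')‖ ≤ γ * (√π * rexp R) := by
    rw [norm_mul, Complex.norm_real, Real.norm_of_nonneg hγ0.le]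
    gcongr
    refine (norm_add_le _ _).trans ?_
    nlinarith [mul_le_mul_of_nonneg_left hE hsπ, mul_le_mul_of_nonneg_left hE' hsπ]
  have b4 : ‖Complex.I * (√π * γ * rexp (-(2 * a * b)) : ℝ)‖ = √π * γ * rexp (-(2 * a * b)) := by
    rw [norm_mul, Complex.norm_I, one_mul, Complex.norm_real, Real.norm_of_nonneg (by positivity)]
  have hcoef : (2 + 2 * √π * (b + 1 / (2 * a))) / a ^ 2 * rexp R =
      2 * rexp R / a ^ 2 + γ * (√π * rexp R) + γ * (√π * rexp R) := by
    rw [hγ]; field_simp; ring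
  rw [hcoef]
  refine (norm_sub_le _ _).trans (add_le_add ?_ b4.le)
  refine (norm_add_le _ _).trans (add_le_add ?_ b3)
  exact (norm_sub_le _ _).trans (add_le_add b1 b2)

theorem integral_mainIntegrand_line {a : ℝ} (b : ℝ) (ha : a ≠ 0) {y : ℝ} (hy : 0 < y) (s t : ℝ) :
    Complex.I * ∫ x in s..t, mainIntegrand (a ^ 2) (b ^ 2) (y + x * Complex.I) =
      mainPrimitive a b (y + t * Complex.I) - mainPrimitive a b (y + s * Complex.I) := by
  rw [← intervalIntegral.integral_const_mul]
  refine intervalIntegral.integral_eq_sub_of_hasDerivAt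
    (f := fun x : ℝ ↦ mainPrimitive a b (y + x * Complex.I)) (fun x _ ↦ ?_)
    ((continuous_mainIntegrand_line _ _ hy).const_mul _ |>.intervalIntegrable _ _)
  have hre : 0 < (y + x * Complex.I : ℂ).re := by simpa
  have h := (hasDerivAt_mainPrimitive (b := b) ha hre).comp (x : ℂ)
    (((hasDerivAt_id (x : ℂ)).mul_const Complex.I).const_add (y : ℂ))
  exact h.comp_ofReal.congr_deriv (by ring)

theorem re_mul_add_div_le (A : ℝ) {B y x : ℝ} (hB : 0 ≤ B) (hy : 0 ≤ y) (hx : x ^ 2 = 1 / 4) :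
    ((A : ℂ) * (y + x * Complex.I) + B / (y + x * Complex.I)).re ≤ A * y + 4 * B * y := by
  have h : ((A : ℂ) * (y + x * Complex.I) + B / (y + x * Complex.I)).re =
      A * y + B * (y / (y ^ 2 + x ^ 2)) := by
    rw [Complex.add_re, Complex.re_ofReal_mul, div_eq_mul_inv, Complex.re_ofReal_mul,
      Complex.inv_re]
    simp [Complex.normSq_apply, pow_two]
  rw [h, hx, mul_comm 4 B, mul_assoc]
  gcongr
  rw [div_le_iff₀ (by positivity)]
  nlinarith [pow_nonneg hy 3]

/-- The integral of `mainIntegrand` through the saddle point, evaluated up to the endpoint terms. -/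
theorem norm_integral_mainIntegrand_sub_le {a b : ℝ} (ha : 0 < a) (hb : 0 < b) (hab : 4 * b ≤ a) :
    ‖(∫ x in (-(1 / 2) : ℝ)..1 / 2, mainIntegrand (a ^ 2) (b ^ 2) ((b / a : ℝ) + x * Complex.I)) -
      (√π * (b / a ^ 2 - 1 / (2 * a ^ 3)) * rexp (2 * a * b) : ℝ)‖ ≤
      (2 + 2 * √π * (b + 1 / (2 * a))) / a ^ 2 * rexp (a ^ 2 * (b / a) + 4 * b ^ 2 * (b / a)) +
      √π * (b / a ^ 2 + 1 / (2 * a ^ 3)) * rexp (-(2 * a * b)) := by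
  have hy : 0 < b / a := by positivity
  have hy' : b / a ≤ 1 / 4 := by rw [div_le_iff₀ ha]; linarith
  generalize hyy : b / a = y at hy hy' ⊢
  have hb' : b = a * y := by rw [← hyy]; field_simp
  have hnorm : ∀ x : ℝ, x ^ 2 = 1 / 4 →
      b ≤ a * ‖(y + x * Complex.I : ℂ)‖ ∧ ‖(y + x * Complex.I : ℂ)‖ ≤ 1 := fun x hx ↦ by
    constructor
    · rw [hb']
      gcongr
      simpa using Complex.re_le_norm (y + x * Complex.I)
    · rw [← abs_norm, ← sq_le_one_iff_abs_le_one, ← Complex.normSq_eq_norm_sq,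
        Complex.normSq_add_mul_I]
      nlinarith
  have hp := hnorm (1 / 2) (by norm_num)
  have hm := hnorm (-(1 / 2)) (by norm_num)
  have h := norm_mainPrimitive_sub_le ha hb (z := y + (1 / 2 : ℝ) * Complex.I)
    (z' := y + (-(1 / 2) : ℝ) * Complex.I) (by simp) (by simp) hp.1 hm.1 hp.2 hm.2
    (re_mul_add_div_le _ (sq_nonneg b) hy.le (by norm_num))
    (re_mul_add_div_le _ (sq_nonneg b) hy.le (by norm_num))
  rw [← integral_mainIntegrand_line b ha.ne' hy, ← mul_sub, norm_mul, Complex.norm_I, one_mul] at h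
  exact h

/-- The exponent `(π / 6) √(24 x - 1)` in the asymptotics of the partition function. -/
noncomputable def growthExponent (x : ℝ) : ℝ := π / 6 * √(24 * x - 1)

/-- The first term `(√12 / (24 x - 1)) (1 - 1 / μ) exp μ` of the asymptotic expansion of the
partition function, written in terms of `μ = growthExponent x`. -/
noncomputable def mainTerm (m : ℝ) : ℝ :=
  4 * √π * √(π / 12) ^ 3 * ((m - 1) / m ^ 3 * rexp m)

/-- The first term of the asymptotic expansion of `p n`, with an explicit error. -/
theorem abs_p_sub_mainTerm_le {n : ℕ} (hn : 5 ≤ n) :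
    |p n - mainTerm (growthExponent n)| ≤ 5 * rexp (5 / 8 * growthExponent n) := by
  have hn' : (5 : ℝ) ≤ n := by exact_mod_cast hn
  have hs2 : √(24 * n - 1) ^ 2 = 24 * n - 1 := Real.sq_sqrt (by linarith)
  have hs : 10 ≤ √(24 * n - 1) := Real.le_sqrt_of_sq_le (by linarith)
  unfold mainTerm growthExponent
  have hb2 : √(π / 12) ^ 2 = π / 12 := Real.sq_sqrt (by positivity)
  have hbl : 1 / 2 ≤ √(π / 12) := Real.le_sqrt_of_sq_le (by linarith [pi_gt_three])
  have hbu : √(π / 12) ≤ 3 / 5 := Real.sqrt_le_iff.mpr ⟨by norm_num, by linarith [pi_lt_d2]⟩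
  have hπu : √π ≤ 9 / 5 := Real.sqrt_le_iff.mpr ⟨by norm_num, by linarith [pi_lt_d2]⟩
  have hπ0 : 0 < √π := by positivity
  generalize √(24 * (n : ℝ) - 1) = s at *
  generalize √(π / 12) = b at *
  have hb0 : 0 < b := by linarith
  have hs0 : 0 < s := by linarith
  have hA : 2 * π * ((n : ℝ) - 1 / 24) = (b * s) ^ 2 := by rw [mul_pow, hb2, hs2]; ring
  have hπb : π = 12 * b ^ 2 := by linarith
  have hy : b / (b * s) = 1 / s := by field_simp
  have hyle : 1 / s ≤ 1 / 10 := by gcongr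
  have hJ := norm_card_partition_sub_integral_le n (y := b / (b * s)) (by positivity)
    (by rw [hy]; linarith)
  have hM := norm_integral_mainIntegrand_sub_le (a := b * s) (by positivity) hb0 (by nlinarith)
  rw [hA, ← hb2] at hJ
  have h := norm_sub_le_norm_sub_add_norm_sub (p n : ℂ)
    (∫ x in (-(1 / 2) : ℝ)..1 / 2,
      mainIntegrand ((b * s) ^ 2) (b ^ 2) ((b / (b * s) : ℝ) + x * Complex.I))
    ((√π * (b / (b * s) ^ 2 - 1 / (2 * (b * s) ^ 3)) * rexp (2 * (b * s) * b) : ℝ) : ℂ)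
  have hp : (p n : ℂ) = (Fintype.card (Nat.Partition n) : ℂ) := by rw [p]; push_cast; rfl
  rw [← Complex.ofReal_sub, Complex.norm_real, Real.norm_eq_abs] at h
  have hmu : π / 6 * s = 2 * (b * s) * b := by rw [hπb]; ring
  have hmain : 4 * √π * b ^ 3 * ((π / 6 * s - 1) / (π / 6 * s) ^ 3 * rexp (π / 6 * s)) =
      √π * (b / (b * s) ^ 2 - 1 / (2 * (b * s) ^ 3)) * rexp (2 * (b * s) * b) := by
    rw [hmu]
    field_simp
    ring
  rw [hmain, hmu]
  rw [hp] at h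
  refine (h.trans (add_le_add hJ hM)).trans ?_
  have e1 : rexp ((b * s) ^ 2 * (b / (b * s)) + b ^ 2 * (1 / (4 * (b / (b * s))) + b / (b * s))) ≤
      2 * rexp (5 / 8 * (2 * (b * s) * b)) := by
    have : (b * s) ^ 2 * (b / (b * s)) + b ^ 2 * (1 / (4 * (b / (b * s))) + b / (b * s)) =
        b ^ 2 * (1 / s) + 5 / 8 * (2 * (b * s) * b) := by
      field_simp
      ring
    rw [this, Real.exp_add]
    gcongr
    have hle : b ^ 2 * (1 / s) ≤ 1 / 2 := by nlinarith
    refine (Real.exp_le_exp.mpr hle).trans ?_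
    have h1 := Real.exp_one_lt_d9
    have h2 : rexp 1 = rexp (1 / 2) ^ 2 := by rw [← Real.exp_nat_mul]; norm_num
    nlinarith [Real.exp_pos (1 / 2)]
  have e2 : rexp ((b * s) ^ 2 * (b / (b * s)) + 4 * b ^ 2 * (b / (b * s))) ≤
      rexp (5 / 8 * (2 * (b * s) * b)) := by
    rw [Real.exp_le_exp, hy]
    have : (b * s) ^ 2 * (1 / s) = b ^ 2 * s := by field_simp
    rw [this]
    nlinarith [mul_le_mul_of_nonneg_left hyle (sq_nonneg b),
      mul_le_mul_of_nonneg_left hs (sq_nonneg b)]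
  have e3 : rexp (-(2 * (b * s) * b)) ≤ rexp (5 / 8 * (2 * (b * s) * b)) := by
    rw [Real.exp_le_exp]
    have : 0 < 2 * (b * s) * b := by positivity
    linarith
  have hbs : 5 ≤ b * s := by nlinarith
  have c1 : (2 + 2 * √π * (b + 1 / (2 * (b * s)))) / (b * s) ^ 2 ≤ 1 / 2 := by
    calc _ ≤ (2 + 2 * (9 / 5) * (3 / 5 + 1 / (2 * 5))) / (5 : ℝ) ^ 2 := by gcongr
      _ ≤ 1 / 2 := by norm_num
  have c2 : √π * (b / (b * s) ^ 2 + 1 / (2 * (b * s) ^ 3)) ≤ 1 / 2 := by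
    calc _ ≤ 9 / 5 * ((3 / 5) / (5 : ℝ) ^ 2 + 1 / (2 * 5 ^ 3)) := by gcongr
      _ ≤ 1 / 2 := by norm_num
  have t2 := mul_le_mul c1 e2 (Real.exp_pos _).le (by norm_num)
  have t3 := mul_le_mul c2 e3 (Real.exp_pos _).le (by norm_num)
  linarith

/-- A lower bound for the third derivative bounds the third difference. -/
theorem le_third_difference {f f₁ f₂ f₃ : ℝ → ℝ} {x m : ℝ}
    (h₁ : ∀ t ∈ Set.Icc x (x + 3), HasDerivAt f (f₁ t) t)
    (h₂ : ∀ t ∈ Set.Icc x (x + 3), HasDerivAt f₁ (f₂ t) t)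
    (h₃ : ∀ t ∈ Set.Icc x (x + 3), HasDerivAt f₂ (f₃ t) t)
    (hm : ∀ t ∈ Set.Icc x (x + 3), m ≤ f₃ t) :
    m ≤ f (x + 3) - 3 * f (x + 2) + 3 * f (x + 1) - f x := by
  have key : ∀ {g g' : ℝ → ℝ} {t : ℝ}, (∀ u ∈ Set.Icc t (t + 1), HasDerivAt g (g' u) u) →
      (∀ u ∈ Set.Icc t (t + 1), m ≤ g' u) → m ≤ g (t + 1) - g t := fun {g g' t} hg hg' ↦ by
    obtain ⟨u, hu, h⟩ := exists_hasDerivAt_eq_slope g g' (lt_add_one t)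
      (fun u hu ↦ (hg u hu).continuousAt.continuousWithinAt)
      (fun u hu ↦ hg u (Set.Ioo_subset_Icc_self hu))
    rw [add_sub_cancel_left, div_one] at h
    exact h ▸ hg' u (Set.Ioo_subset_Icc_self hu)
  have d2 : ∀ t ∈ Set.Icc x (x + 2), m ≤ f₂ (t + 1) - f₂ t := fun t ht ↦
    key (fun u hu ↦ h₃ u ⟨by linarith [ht.1, hu.1], by linarith [ht.2, hu.2]⟩)
      (fun u hu ↦ hm u ⟨by linarith [ht.1, hu.1], by linarith [ht.2, hu.2]⟩)
  have d1 : ∀ t ∈ Set.Icc x (x + 1), m ≤ (f₁ (t + 1 + 1) - f₁ (t + 1)) - (f₁ (t + 1) - f₁ t) :=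
    fun t ht ↦ key (g := fun t ↦ f₁ (t + 1) - f₁ t) (g' := fun t ↦ f₂ (t + 1) - f₂ t)
      (fun u hu ↦ ((h₂ (u + 1) ⟨by linarith [ht.1, hu.1], by linarith [ht.2, hu.2]⟩).comp_add_const
        u 1).sub (h₂ u ⟨by linarith [ht.1, hu.1], by linarith [ht.2, hu.2]⟩))
      (fun u hu ↦ d2 u ⟨by linarith [ht.1, hu.1], by linarith [ht.2, hu.2]⟩)
  have d0 := key (t := x) (g := fun t ↦ (f (t + 1 + 1) - f (t + 1)) - (f (t + 1) - f t))
      (fun u hu ↦ (((h₁ (u + 1 + 1) ⟨by linarith [hu.1], by linarith [hu.2]⟩).comp_add_const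
        (u + 1) 1).comp_add_const u 1 |>.sub
        ((h₁ (u + 1) ⟨by linarith [hu.1], by linarith [hu.2]⟩).comp_add_const u 1)).sub
        (((h₁ (u + 1) ⟨by linarith [hu.1], by linarith [hu.2]⟩).comp_add_const u 1).sub
          (h₁ u ⟨by linarith [hu.1], by linarith [hu.2]⟩)))
      d1
  have e2 : x + 1 + 1 = x + 2 := by ring
  have e3 : x + 2 + 1 = x + 3 := by ring
  rw [e2, e3] at d0
  linarith

theorem hasDerivAt_growthExponent {x : ℝ} (hx : 1 ≤ x) :
    HasDerivAt growthExponent (π ^ 2 / 3 / growthExponent x) x := by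
  have h0 : 0 < 24 * x - 1 := by linarith
  have h := ((((hasDerivAt_id x).const_mul 24).sub_const 1).sqrt (by simpa using h0.ne')).const_mul
    (π / 6)
  refine h.congr_deriv ?_
  have : 0 < √(24 * x - 1) := by positivity
  simp only [growthExponent, id]
  field_simp
  norm_num

theorem growthExponent_sq {x : ℝ} (hx : 1 ≤ x) :
    growthExponent x ^ 2 = π ^ 2 / 36 * (24 * x - 1) := by
  rw [growthExponent, mul_pow, Real.sq_sqrt (by linarith)]
  ring

theorem growthExponent_mono {x y : ℝ} (h : x ≤ y) : growthExponent x ≤ growthExponent y := by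
  unfold growthExponent
  gcongr

theorem one_hundred_le_growthExponent {x : ℝ} (hx : 1598 ≤ x) : 100 ≤ growthExponent x := by
  refine le_of_sq_le_sq ?_ (by unfold growthExponent; positivity)
  rw [growthExponent_sq (by linarith)]
  nlinarith [pi_gt_d2, pi_pos]

theorem growthExponent_add_three_le {x : ℝ} (hx : 1598 ≤ x) :
    growthExponent (x + 3) ≤ growthExponent x + 1 := by
  have h := one_hundred_le_growthExponent hx
  refine le_of_sq_le_sq ?_ (by linarith)
  have h1 := growthExponent_sq (x := x) (by linarith)
  rw [growthExponent_sq (by linarith)]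
  nlinarith [pi_lt_d2, pi_pos]

/-- The logarithm of `mainTerm m`, up to an additive constant. -/
noncomputable def logMain (m : ℝ) : ℝ := m - 3 * log m + log (m - 1)

theorem le_third_difference_logMain {x : ℝ} (hx : 1598 ≤ x) :
    27 / 10 * (π ^ 2 / 3) ^ 3 / growthExponent (x + 3) ^ 5 ≤
      logMain (growthExponent (x + 3)) - 3 * logMain (growthExponent (x + 2)) +
        3 * logMain (growthExponent (x + 1)) - logMain (growthExponent x) := by
  have key : ∀ {g : ℝ → ℝ} {g' t : ℝ}, 1598 ≤ t → HasDerivAt g g' (growthExponent t) →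
      HasDerivAt (fun t ↦ g (growthExponent t)) (g' * (π ^ 2 / 3 / growthExponent t)) t :=
    fun ht hg ↦ hg.comp _ (hasDerivAt_growthExponent (by linarith))
  set c := π ^ 2 / 3
  have hc : 0 < c := by positivity
  refine le_third_difference (f := fun t ↦ logMain (growthExponent t))
    (f₁ := fun t ↦ c * (fun m ↦ 1 / m - 3 / m ^ 2 + 1 / (m * (m - 1))) (growthExponent t))
    (f₂ := fun t ↦ c ^ 2 * (fun m ↦ -1 / m ^ 3 + 6 / m ^ 4 - (2 * m - 1) / (m ^ 3 * (m - 1) ^ 2))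
      (growthExponent t))
    (f₃ := fun t ↦ c ^ 3 / growthExponent t ^ 5 * (3 - 24 / growthExponent t +
      (8 * growthExponent t ^ 2 - 9 * growthExponent t + 3) / (growthExponent t - 1) ^ 3))
    (fun t ht ↦ ?_) (fun t ht ↦ ?_) (fun t ht ↦ ?_) (fun t ht ↦ ?_)
  all_goals
    have h100 := one_hundred_le_growthExponent (hx.trans ht.1)
    have hm := growthExponent_mono ht.2
    have h0 : growthExponent t ≠ 0 := by linarith
    have h1 : growthExponent t - 1 ≠ 0 := by linarith
  · have hg := ((hasDerivAt_id (growthExponent t)).sub ((Real.hasDerivAt_log h0).const_mul 3)).add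
      (((hasDerivAt_id (growthExponent t)).sub_const 1).log h1)
    refine (key (g := logMain) (hx.trans ht.1) hg).congr_deriv ?_
    simp only [id]
    field_simp
  · have hi := hasDerivAt_id (growthExponent t)
    have hg := (((hasDerivAt_const _ (1 : ℝ)).div hi h0).sub
      ((hasDerivAt_const _ (3 : ℝ)).div (hi.pow 2) (pow_ne_zero 2 h0))).add
      ((hasDerivAt_const _ (1 : ℝ)).div (hi.mul (hi.sub_const 1)) (mul_ne_zero h0 h1))
    refine ((key (hx.trans ht.1) hg).const_mul c).congr_deriv ?_
    simp only [id, Pi.pow_apply, Pi.mul_apply]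
    field_simp
    ring
  · have hi := hasDerivAt_id (growthExponent t)
    have hg := (((hasDerivAt_const _ (-1 : ℝ)).div (hi.pow 3) (pow_ne_zero 3 h0)).add
      ((hasDerivAt_const _ (6 : ℝ)).div (hi.pow 4) (pow_ne_zero 4 h0))).sub
      (((hi.const_mul 2).sub_const 1).div ((hi.pow 3).mul ((hi.sub_const 1).pow 2))
        (mul_ne_zero (pow_ne_zero 3 h0) (pow_ne_zero 2 h1)))
    refine ((key (hx.trans ht.1) hg).const_mul (c ^ 2)).congr_deriv ?_
    simp only [id, Pi.pow_apply, Pi.mul_apply]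
    field_simp
    ring
  · generalize growthExponent t = m at *
    have hr : 0 ≤ (8 * m ^ 2 - 9 * m + 3) / (m - 1) ^ 3 :=
      div_nonneg (by nlinarith) (pow_nonneg (by linarith) 3)
    have h24 : 24 / m ≤ 24 / 100 := by gcongr
    calc 27 / 10 * c ^ 3 / growthExponent (x + 3) ^ 5 ≤ 27 / 10 * c ^ 3 / m ^ 5 := by gcongr
      _ = c ^ 3 / m ^ 5 * (27 / 10) := by ring
      _ ≤ _ := by
        gcongr
        linarith

theorem log_mainTerm {m : ℝ} (hm : 1 < m) :
    log (mainTerm m) = log (4 * √π * √(π / 12) ^ 3) + logMain m := by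
  have h0 : m ≠ 0 := by linarith
  have h1 : m - 1 ≠ 0 := by linarith
  rw [mainTerm, Real.log_mul (by positivity) (by positivity),
    Real.log_mul (x := (m - 1) / m ^ 3) (by positivity) (by positivity),
    Real.log_div h1 (by positivity), Real.log_pow, Real.log_exp, logMain]
  push_cast
  ring

/-- A relative error of size `ε` changes the logarithm by at most `2 * ε`. -/
theorem abs_log_sub_log_le_s4 {u v ε : ℝ} (hu : 0 < u) (hε : 2 * ε ≤ 1) (h : |v - u| ≤ ε * u) :
    |log v - log u| ≤ 2 * ε := by
  have ⟨h1, h2⟩ := abs_le.mp h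
  have hv : 0 < v := by nlinarith
  have hε0 : 0 ≤ ε := nonneg_of_mul_nonneg_left ((abs_nonneg _).trans h) hu
  rw [abs_le]
  constructor
  · have := Real.log_le_sub_one_of_pos (div_pos hu hv)
    rw [Real.log_div hu.ne' hv.ne'] at this
    have h3 : u / v ≤ 1 + 2 * ε := by
      rw [div_le_iff₀ hv]
      nlinarith
    linarith
  · have := Real.log_le_sub_one_of_pos (div_pos hv hu)
    rw [Real.log_div hv.ne' hu.ne'] at this
    have h3 : v / u ≤ 1 + ε := by
      rw [div_le_iff₀ hu]
      nlinarith
    linarith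

theorem pow_seven_lt_exp {m : ℝ} (hm : 100 ≤ m) : 2 * (m + 1) ^ 7 < rexp (3 / 8 * m) := by
  have h1 : m + 1 ≤ 101 * rexp ((m - 100) / 101) := by
    linarith [Real.add_one_le_exp ((m - 100) / 101)]
  have h2 : (2.7 : ℝ) ^ 37 ≤ rexp 37 := by
    have := pow_le_pow_left₀ (by norm_num) (Real.exp_one_gt_d9.le.trans' (by norm_num :
      (2.7 : ℝ) ≤ 2.7182818283)) 37
    rwa [← Real.exp_nat_mul, mul_one] at this
  calc 2 * (m + 1) ^ 7 ≤ 2 * (101 * rexp ((m - 100) / 101)) ^ 7 := by gcongr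
    _ = 2 * 101 ^ 7 * rexp (7 * ((m - 100) / 101)) := by
      rw [mul_pow, ← Real.exp_nat_mul]; push_cast; ring
    _ < 2.7 ^ 37 * rexp (7 * ((m - 100) / 101)) := by gcongr; norm_num
    _ ≤ rexp 37 * rexp (3 / 8 * m - 37) := by gcongr; linarith
    _ = _ := by rw [← Real.exp_add]; ring_nf

theorem abs_log_p_sub_le_s4 {n : ℕ} (hn : 1598 ≤ n) :
    |log (p n) - (log (4 * √π * √(π / 12) ^ 3) + logMain (growthExponent n))| ≤
      12 * growthExponent n ^ 2 / rexp (3 / 8 * growthExponent n) := by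
  have hm := one_hundred_le_growthExponent (x := n) (by exact_mod_cast hn)
  have h := abs_p_sub_mainTerm_le (n := n) (by linarith)
  generalize growthExponent n = m at *
  rw [← log_mainTerm (by linarith)]
  have hb : 51 / 100 ≤ √(π / 12) := Real.le_sqrt_of_sq_le (by linarith [pi_gt_d2])
  have hπ : 177 / 100 ≤ √π := Real.le_sqrt_of_sq_le (by linarith [pi_gt_d2])
  have hm1 : 0 < m - 1 := by linarith
  have hK : 9 / 10 ≤ 4 * √π * √(π / 12) ^ 3 := by
    calc _ ≤ 4 * (177 / 100) * (51 / 100 : ℝ) ^ 3 := by norm_num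
      _ ≤ _ := by gcongr
  have hM : 0 < mainTerm m := by unfold mainTerm; positivity
  have hexp : rexp m = rexp (5 / 8 * m) * rexp (3 / 8 * m) := by rw [← Real.exp_add]; ring_nf
  have e : 12 * m ^ 2 / rexp (3 / 8 * m) = 2 * (6 * m ^ 2 / rexp (3 / 8 * m)) := by ring
  rw [e]
  refine abs_log_sub_log_le_s4 hM ?_ (h.trans ?_)
  · rw [← e, div_le_one (Real.exp_pos _)]
    have := pow_seven_lt_exp hm
    have : m ^ 2 * 100 ^ 5 ≤ (m + 1) ^ 2 * (m + 1) ^ 5 := by gcongr <;> linarith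
    nlinarith [sq_nonneg m]
  · calc 5 * rexp (5 / 8 * m) ≤ 6 * (9 / 10) * (99 / 100) * rexp (5 / 8 * m) := by
          gcongr; norm_num
      _ ≤ 6 * (4 * √π * √(π / 12) ^ 3) * ((m - 1) / m) * rexp (5 / 8 * m) := by
          have : 99 / 100 ≤ (m - 1) / m := by
            rw [le_div_iff₀ (by linarith)]
            linarith
          gcongr
      _ = _ := by
          rw [mainTerm, hexp]
          field_simp

theorem third_difference_log_p_pos_of_ge {n : ℕ} (hn : 1599 ≤ n) : 0 <
    Real.log (p (n + 2)) - 3 * Real.log (p (n + 1)) + 3 * Real.log (p n) -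
      Real.log (p (n - 1)) := by
  obtain ⟨k, rfl⟩ : ∃ k, n = k + 1 := ⟨n - 1, by omega⟩
  have hk : 1598 ≤ k := by omega
  have hk' : (1598 : ℝ) ≤ k := by exact_mod_cast hk
  rw [Nat.add_sub_cancel]
  have hm := one_hundred_le_growthExponent hk'
  have hup := growthExponent_add_three_le hk'
  have hD := le_third_difference_logMain hk'
  set m := growthExponent k
  set ε := 12 * (m + 1) ^ 2 / rexp (3 / 8 * m) with hε
  have herr : ∀ j : ℕ, j ≤ 3 → |log (p (k + j)) - (log (4 * √π * √(π / 12) ^ 3) +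
      logMain (growthExponent (k + j)))| ≤ ε := fun j hj ↦ by
    have h := abs_log_p_sub_le_s4 (n := k + j) (by omega)
    push_cast at h
    refine h.trans ?_
    have hj' : (j : ℝ) ≤ 3 := by exact_mod_cast hj
    have h1 : m ≤ growthExponent (k + j) := growthExponent_mono (by simp)
    have h2 : growthExponent (k + j) ≤ m + 1 :=
      (growthExponent_mono (by linarith)).trans hup
    have h0 : 0 ≤ growthExponent (k + j) := by linarith
    rw [hε]
    gcongr
  have e0 := abs_le.mp (herr 0 (by omega))
  have e1 := abs_le.mp (herr 1 (by omega))
  have e2 := abs_le.mp (herr 2 (by omega))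
  have e3 := abs_le.mp (herr 3 le_rfl)
  simp only [Nat.cast_zero, add_zero, Nat.cast_one, Nat.cast_ofNat] at e0 e1 e2 e3
  have hc : 30 ≤ (π ^ 2 / 3) ^ 3 := by
    calc (30 : ℝ) ≤ (3.14 ^ 2 / 3) ^ 3 := by norm_num
      _ ≤ _ := by gcongr; exact pi_gt_d2.le
  have h3 : 100 ≤ growthExponent (k + 3) := one_hundred_le_growthExponent (by linarith)
  have hmain : 81 / (m + 1) ^ 5 ≤ 27 / 10 * (π ^ 2 / 3) ^ 3 / growthExponent (k + 3) ^ 5 := by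
    gcongr
    linarith
  have hlt : 8 * ε < 81 / (m + 1) ^ 5 := by
    have hpos : 0 < (m + 1) ^ 7 := by positivity
    rw [hε, ← mul_div_assoc, div_lt_div_iff₀ (Real.exp_pos _) (by positivity)]
    calc _ = 96 * (m + 1) ^ 7 := by ring
      _ ≤ 81 * (2 * (m + 1) ^ 7) := by linarith
      _ < _ := by exact mul_lt_mul_of_pos_left (pow_seven_lt_exp hm) (by norm_num)
  have f2 : k + 1 + 2 = k + 3 := rfl
  have f1 : k + 1 + 1 = k + 2 := rfl
  rw [f2, f1]
  linarith [e0.1, e0.2, e1.1, e1.2, e2.1, e2.2, e3.1, e3.2]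

theorem third_difference_log_p_pos (n : ℕ) (hn : 116 ≤ n) :
    Real.log (p (n + 2)) - 3 * Real.log (p (n + 1)) + 3 * Real.log (p n) -
      Real.log (p (n - 1)) > 0 := by
  rcases le_or_gt n 1598 with h | h
  · exact third_difference_log_p_pos_of_le hn h
  · exact third_difference_log_p_pos_of_ge h
end
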